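/- arXiv:math/0402165 — 2 statements merged into one kernel-verified Lean document; each statement's English description precedes it below -/
import Mathlib

section
/- Let n ≥ 3, G = SL(n,ℝ), Γ a discrete subgroup of G, and H < G the subgroup of diagonal matrices with positive diagonal entries (and determinant 1), acting on Γ\G by right translation. Let μ be an H-invariant and H-ergodic Borel probability measure on Γ\G such that for every nontrivial one-parameter subgroup {a(t)} of H, the entropy h_μ(a(1)) of the time-one map is positive. Then Γ is a lattice and μ is the G-invariant (Haar) probability measure on Γ\G. -/
open MeasureTheory ENNReal

section Entropy

variable {α : Type*} [MeasurableSpace α]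

/-- `P : Fin m → Set α` is a finite measurable partition of `α` modulo `μ`-null sets. -/
def IsFinMeasPartition (μ : Measure α) {m : ℕ} (P : Fin m → Set α) : Prop :=
  (∀ i, MeasurableSet (P i)) ∧ Pairwise (Function.onFun Disjoint P) ∧ μ (⋃ i, P i)ᶜ = 0

/-- Shannon entropy (information) of a finite family of sets with respect to `μ`. -/
noncomputable def finPartitionEntropy (μ : Measure α) {ι : Type*} [Fintype ι]
    (P : ι → Set α) : ℝ≥0∞ :=
  ENNReal.ofReal (∑ i, Real.negMulLog ((μ (P i)).toReal))

/-- The common refinement `P ∨ T⁻¹ P ∨ ⋯ ∨ T^{-(n-1)} P`, indexed by `Fin n → Fin m`. -/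
def refinedPartition (T : α → α) {m : ℕ} (P : Fin m → Set α) (n : ℕ) :
    (Fin n → Fin m) → Set α :=
  fun f => ⋂ i : Fin n, T^[(i : ℕ)] ⁻¹' P (f i)

/-- The measure-theoretic (Kolmogorov–Sinai) entropy `h_μ(T)` of a transformation `T`
preserving `μ`, defined as the supremum over all finite measurable partitions `P` of
`inf_n H_μ(P ∨ T⁻¹P ∨ ⋯ ∨ T^{-n}P)/(n+1)` (by subadditivity this infimum equals the
usual limit). -/
noncomputable def ksEntropy (T : α → α) (μ : Measure α) : ℝ≥0∞ :=
  ⨆ (m : ℕ) (P : Fin m → Set α) (_ : IsFinMeasPartition μ P),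
    ⨅ n : ℕ, finPartitionEntropy μ (refinedPartition T P (n + 1)) / (n + 1 : ℝ≥0∞)

end Entropy

open MeasureTheory

/-- `SL(n,ℝ)`. -/
abbrev SLR (n : ℕ) := Matrix.SpecialLinearGroup (Fin n) ℝ

noncomputable instance (n : ℕ) : TopologicalSpace (SLR n) :=
  TopologicalSpace.induced (fun g : SLR n => (g : Matrix (Fin n) (Fin n) ℝ)) inferInstance

/-- The homogeneous space `Γ \ SL(n,ℝ)` of right cosets. -/
abbrev XQuot {n : ℕ} (Γ : Subgroup (SLR n)) := Quotient (QuotientGroup.rightRel Γ)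

noncomputable instance {n : ℕ} (Γ : Subgroup (SLR n)) : MeasurableSpace (XQuot Γ) :=
  borel (XQuot Γ)

/-- Right translation by `g ∈ SL(n,ℝ)` on `Γ\SL(n,ℝ)`. -/
def rtQ {n : ℕ} (Γ : Subgroup (SLR n)) (g : SLR n) (x : XQuot Γ) : XQuot Γ :=
  Quotient.map' (fun h => h * g)
    (fun a b hab => by
      rw [QuotientGroup.rightRel_apply] at *
      simpa [mul_assoc] using hab) x

/-- Membership in `H`, the subgroup of diagonal matrices of `SL(n,ℝ)` with positive
diagonal entries. -/
def IsPosDiag {n : ℕ} (g : SLR n) : Prop :=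
  (∀ i j, i ≠ j → (g : Matrix (Fin n) (Fin n) ℝ) i j = 0) ∧
    ∀ i, 0 < (g : Matrix (Fin n) (Fin n) ℝ) i i

/-!
Write `u_ij(s) = 1 + s E_ij` for the root subgroups, and say that `u_ij` recurs if, for every set
`Z` of measure close to `1`, some `u_ij(s)` with `s ≠ 0` moves a point of `Z` into `Z`
(`HasReturns`).

*Invariance from recurrence.* Suppose that `v = u_ij` and `u = u_jk` recur, `i ≠ k`, and let
`w = u_ik`, so that `v(t) u(s) = w(st) u(s) v(t)`. Let `b ∈ H` commute with `w`, contract `v` in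
the future and `u` in the past. Along a subsequence the forward and backward ergodic averages of `b`
agree at almost every point. If this happens at the corners `x`, `u(s) x`, `v(t) x`, `u(s) v(t) x`
of a parallelogram, then going around it shows that `u(s) v(t) x` and its translate by `w(st)` have
the same averages. The times `r` for which `w(r)` preserves the averages of a point form a closed
subgroup of `ℝ`, and `H` rescales these subgroups; so by ergodicity of `H` they are almost surely
all trivial or almost surely all equal to `ℝ`, and a nondegenerate parallelogram leaves only the
second case, in which `w` preserves `μ`. To find the parallelogram, move every point by `u(σ(x))`
into a large set, where the time `σ(x)` depends only on the averages of `x` along some `c ∈ H` that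
commutes with `u` and contracts `v`; then `σ(v(t) x) = σ(x)`, and recurrence of `v` provides `t`.

*Recurrence from entropy.* If no `u_ij` with `i ∈ I`, `j ∉ I` recurs, then two nearby points of a
set of almost full measure can differ only a little in the `I × Iᶜ` block, which is the one expanded
by the element of `H` proportional to `exp (log 2 · 1_I)`. Hence names of most points are determined
by their plaque up to subexponentially many choices, and the entropy of this element vanishes.
Positivity of entropy therefore makes some recurrent `u_ij` cross every cut `I`.

Since invariance implies recurrence, recurrence of the `u_ij` is a transitive relation, so it holds
for all `i ≠ j`; as `n ≥ 3`, every `u_ik` then preserves `μ`, and the `u_ik` generate `SL(n,ℝ)`.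
-/

open Filter Topology Set

open scoped CompactlySupported Pointwise

section ErgodicAverages

-- `U` and `V = U⁻¹` have the same fixed vectors, hence the same mean ergodic limit.
theorem exists_tendsto_birkhoffAverage_of_inverse {𝕜 E : Type*} [RCLike 𝕜] [NormedAddCommGroup E]
    [InnerProductSpace 𝕜 E] [CompleteSpace E] {U V : E →L[𝕜] E} (hU : ‖U‖ ≤ 1) (hV : ‖V‖ ≤ 1)
    (hUV : ∀ v, U (V v) = v) (hVU : ∀ v, V (U v) = v) (v : E) :
    ∃ w, Tendsto (birkhoffAverage 𝕜 U id · v) atTop (𝓝 w) ∧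
      Tendsto (birkhoffAverage 𝕜 V id · v) atTop (𝓝 w) := by
  have hfix : U.eqLocus (1 : E →L[𝕜] E) = V.eqLocus (1 : E →L[𝕜] E) := by
    ext w
    exact ⟨fun h : U w = w => (congrArg V h).symm.trans (hVU w),
      fun h : V w = w => (congrArg U h).symm.trans (hUV w)⟩
  refine ⟨_, U.tendsto_birkhoffAverage_orthogonalProjection hU v, ?_⟩
  convert V.tendsto_birkhoffAverage_orthogonalProjection hV v

variable {X : Type*} [MeasurableSpace X] {μ : Measure X}

theorem exists_subseq_forall_ae_tendsto {ι E : Type*} [Countable ι] [PseudoEMetricSpace E]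
    {f : ι → ℕ → X → E} {g : ι → X → E} (h : ∀ i, TendstoInMeasure μ (f i) atTop (g i)) :
    ∃ N : ℕ → ℕ, Tendsto N atTop atTop ∧
      ∀ i, ∀ᵐ x ∂μ, Tendsto (fun k => f i (N k) x) atTop (𝓝 (g i x)) := by
  obtain ⟨rank, hrank⟩ := exists_injective_nat ι
  have hpos (k : ℕ) : (0 : ℝ≥0∞) < 2⁻¹ ^ k := ENNReal.pow_pos (by simp) k
  have hex (k : ℕ) : ∃ n ≥ k, ∀ i, rank i ≤ k →
      μ {x | 2⁻¹ ^ k ≤ edist (f i n x) (g i x)} ≤ 2⁻¹ ^ k := by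
    have hfin : {i | rank i ≤ k}.Finite := (finite_Iic k).preimage hrank.injOn
    have hev := (eventually_all_finite hfin).2 fun i _ =>
      (h i _ (hpos k)).eventually (ge_mem_nhds (hpos k))
    obtain ⟨n, hn, hk⟩ := (hev.and (eventually_ge_atTop k)).exists
    exact ⟨n, hk, hn⟩
  choose N hkN hN using hex
  refine ⟨N, tendsto_atTop_mono hkN tendsto_id, fun i => ?_⟩
  have hsum : ∑' k, μ {x | 2⁻¹ ^ (k + rank i) ≤ edist (f i (N (k + rank i)) x) (g i x)} ≠ ∞ := by
    refine ne_top_of_le_ne_top ?_ (ENNReal.tsum_le_tsum fun k =>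
      (hN (k + rank i) i (by lia)).trans (pow_le_pow_right_of_le_one' (by simp) le_self_add))
    simp [ENNReal.tsum_geometric]
  filter_upwards [ae_eventually_notMem hsum] with x hx
  rw [← tendsto_add_atTop_iff_nat (rank i), tendsto_iff_edist_tendsto_0]
  refine tendsto_of_tendsto_of_tendsto_of_le_of_le' tendsto_const_nhds
    ((tendsto_add_atTop_iff_nat (rank i)).2
      (ENNReal.tendsto_pow_atTop_nhds_zero_of_lt_one (by simp)))
    (.of_forall fun _ => zero_le) (hx.mono fun k hk => (not_le.1 hk).le)

theorem ae_eq_birkhoffSum_koopman {T : X → X} (hT : MeasurePreserving T μ μ) {f : X → ℝ}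
    (hf : MemLp f 2 μ) (n : ℕ) :
    (birkhoffSum (Lp.compMeasurePreserving T hT) id n (hf.toLp f) : Lp ℝ 2 μ) =ᵐ[μ]
      birkhoffSum T f n := by
  induction n with
  | zero => simpa using Lp.coeFn_zero ℝ 2 μ
  | succ n ih =>
    have hiter : (Lp.compMeasurePreserving T hT)^[n] (hf.toLp f) =ᵐ[μ] f ∘ T^[n] := by
      rw [Lp.compMeasurePreserving_iterate, Lp.toLp_compMeasurePreserving]
      exact MemLp.coeFn_toLp _
    rw [birkhoffSum_succ]
    filter_upwards [Lp.coeFn_add (birkhoffSum (Lp.compMeasurePreserving T hT) id n (hf.toLp f))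
      (id ((Lp.compMeasurePreserving T hT)^[n] (hf.toLp f))), ih, hiter] with x hadd hsum hlast
    simp_all [birkhoffSum_succ]

theorem ae_eq_birkhoffAverage_koopman {T : X → X} (hT : MeasurePreserving T μ μ) {f : X → ℝ}
    (hf : MemLp f 2 μ) (n : ℕ) :
    (birkhoffAverage ℝ (Lp.compMeasurePreserving T hT) id n (hf.toLp f) : Lp ℝ 2 μ) =ᵐ[μ]
      birkhoffAverage ℝ T f n := by
  filter_upwards [Lp.coeFn_smul (n : ℝ)⁻¹
    (birkhoffSum (Lp.compMeasurePreserving T hT) id n (hf.toLp f)),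
    ae_eq_birkhoffSum_koopman hT hf n] with x hsmul hsum
  simp_all [birkhoffAverage]

theorem exists_tendstoInMeasure_birkhoffAverage {e : X ≃ᵐ X} (he : MeasurePreserving e μ μ)
    {f : X → ℝ} (hf : MemLp f 2 μ) :
    ∃ F : X → ℝ, TendstoInMeasure μ (birkhoffAverage ℝ e f) atTop F ∧
      TendstoInMeasure μ (birkhoffAverage ℝ e.symm f) atTop F := by
  let U := Lp.compMeasurePreservingₗᵢ ℝ e he (E := ℝ) (p := 2)
  let V := Lp.compMeasurePreservingₗᵢ ℝ e.symm he.symm (E := ℝ) (p := 2)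
  have hUV (F : Lp ℝ 2 μ) : U (V F) = F := by
    refine (Lp.compMeasurePreserving_comp_apply F he.symm he).symm.trans ?_
    simp [Lp.compMeasurePreserving_id]
  have hVU (F : Lp ℝ 2 μ) : V (U F) = F := by
    refine (Lp.compMeasurePreserving_comp_apply F he he.symm).symm.trans ?_
    simp [Lp.compMeasurePreserving_id]
  obtain ⟨F, hU, hV⟩ := exists_tendsto_birkhoffAverage_of_inverse
    (U.norm_toContinuousLinearMap_le) (V.norm_toContinuousLinearMap_le) hUV hVU (hf.toLp f)
  exact ⟨F, (tendstoInMeasure_of_tendsto_Lp hU).congr_left fun n =>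
      ae_eq_birkhoffAverage_koopman he hf n,
    (tendstoInMeasure_of_tendsto_Lp hV).congr_left fun n =>
      ae_eq_birkhoffAverage_koopman he.symm hf n⟩

theorem measurable_birkhoffAverage {T : X → X} (hT : Measurable T) {f : X → ℝ} (hf : Measurable f)
    (n : ℕ) : Measurable (birkhoffAverage ℝ T f n) :=
  (Finset.measurable_fun_sum _ fun k _ => hf.comp (hT.iterate k)).const_smul (n : ℝ)⁻¹

end ErgodicAverages

section CompactlySupportedFunctions

variable {X : Type*} [TopologicalSpace X]

theorem exists_abs_le_of_compactlySupported (f : C_c(X, ℝ)) : ∃ C, ∀ x, |f x| ≤ C :=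
  f.continuous.bounded_above_of_compact_support f.hasCompactSupport

theorem exists_countable_uniformly_dense [LocallyCompactSpace X] [SecondCountableTopology X]
    [T2Space X] (S : Set C_c(X, ℝ)) :
    ∃ D ⊆ S, D.Countable ∧ ∀ f ∈ S, ∀ ε > 0, ∃ g ∈ D, ∀ x, |f x - g x| < ε := by
  let E := CompactExhaustion.choice X
  let : TopologicalSpace C_c(X, ℝ) := .induced (fun f => f.toContinuousMap) inferInstance
  have : SecondCountableTopology C_c(X, ℝ) := (IsInducing.induced _).secondCountableTopology
  have hdense (n : ℕ) : ∃ D ⊆ {f ∈ S | tsupport f ⊆ E n}, D.Countable ∧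
      {f ∈ S | tsupport f ⊆ E n} ⊆ closure D := by
    obtain ⟨D, hDc, hD⟩ := TopologicalSpace.exists_countable_dense {f ∈ S | tsupport f ⊆ E n}
    exact ⟨(↑) '' D, Subtype.coe_image_subset _ D, hDc.image _, Subtype.dense_iff.1 hD⟩
  choose D hDS hDc hD using hdense
  refine ⟨⋃ n, D n, iUnion_subset fun n f hf => (hDS n hf).1, countable_iUnion hDc,
    fun f hf ε hε => ?_⟩
  obtain ⟨n, hn⟩ := E.exists_superset_of_isCompact f.hasCompactSupport
  have hopen : IsOpen {g : C_c(X, ℝ) | ∀ x ∈ E n, |f x - g x| < ε} := by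
    have hdiff : Continuous fun g : C_c(X, ℝ) => f.toContinuousMap - g.toContinuousMap :=
      continuous_const.sub continuous_induced_dom
    convert (ContinuousMap.isOpen_setOfPred_mapsTo (E.isCompact n)
      (Metric.isOpen_ball (x := (0 : ℝ)) (ε := ε))).preimage hdiff using 1
    ext g
    simp [MapsTo]
  obtain ⟨g, hg, hgD⟩ := mem_closure_iff.1 (hD n ⟨hf, hn⟩) _ hopen fun x _ => by simpa using hε
  refine ⟨g, mem_iUnion_of_mem n hgD, fun x => ?_⟩
  by_cases hx : x ∈ E n
  · exact hg x hx
  · rw [image_eq_zero_of_notMem_tsupport fun h => hx (hn h),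
      image_eq_zero_of_notMem_tsupport fun h => hx ((hDS n hgD).2 h)]
    simpa using hε

variable {G : Type*} [Group G] [MulAction G X]

/-- The function `x ↦ f (g • x)`, which is again compactly supported. -/
def compSMul [ContinuousConstSMul G X] (g : G) (f : C_c(X, ℝ)) : C_c(X, ℝ) :=
  f.comp (Homeomorph.smul g).toCocompactMap

@[simp]
theorem compSMul_apply [ContinuousConstSMul G X] (g : G) (f : C_c(X, ℝ)) (x : X) :
    compSMul g f x = f (g • x) :=
  rfl

variable [TopologicalSpace G] [ContinuousSMul G X]

theorem eventually_forall_mem_abs_smul_sub_lt {K : Set X} (hK : IsCompact K) (f : C_c(X, ℝ))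
    {ε : ℝ} (hε : 0 < ε) : ∀ᶠ g in 𝓝 (1 : G), ∀ x ∈ K, |f (g • x) - f x| < ε := by
  have hopen : IsOpen {p : G × X | |f (p.1 • p.2) - f p.2| < ε} := by
    refine isOpen_lt (Continuous.abs (.sub ?_ ?_)) continuous_const <;> fun_prop
  refine hK.eventually_forall_of_forall_eventually fun x _ => ?_
  exact hopen.mem_nhds (by simpa using hε)

theorem eventually_forall_abs_smul_sub_lt [ContinuousInv G] (f : C_c(X, ℝ))
    {ε : ℝ} (hε : 0 < ε) : ∀ᶠ g in 𝓝 (1 : G), ∀ x, |f (g • x) - f x| < ε := by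
  have hsupp : ∀ᶠ g in 𝓝 (1 : G), ∀ x ∈ tsupport f, |f (g • x) - f x| < ε :=
    eventually_forall_mem_abs_smul_sub_lt f.hasCompactSupport f hε
  have hinv : ∀ᶠ g in 𝓝 (1 : G), ∀ x ∈ tsupport f, |f (g⁻¹ • x) - f x| < ε := by
    have h1 : Tendsto (fun g : G => g⁻¹) (𝓝 1) (𝓝 1) := by simpa using (tendsto_inv (1 : G))
    exact h1.eventually hsupp
  filter_upwards [hsupp, hinv] with g hg hg' x
  by_cases hx : x ∈ tsupport f
  · exact hg x hx
  by_cases hy : g • x ∈ tsupport f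
  · simpa [abs_sub_comm] using hg' _ hy
  · simpa [image_eq_zero_of_notMem_tsupport hx, image_eq_zero_of_notMem_tsupport hy] using hε

end CompactlySupportedFunctions

section OrbitAverages

variable {G X : Type*} [Group G] [MulAction G X]

/-- The average of `f` over the first `n` points of the forward `b`-orbit of `x`. -/
noncomputable abbrev orbitAverage (b : G) (f : X → ℝ) (n : ℕ) (x : X) : ℝ :=
  birkhoffAverage ℝ (b • ·) f n x

theorem orbitAverage_eq (b : G) (f : X → ℝ) (n : ℕ) (x : X) :
    orbitAverage b f n x = (n : ℝ)⁻¹ * ∑ k ∈ Finset.range n, f (b ^ k • x) := by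
  simp [orbitAverage, birkhoffAverage, birkhoffSum, smul_iterate]

theorem orbitAverage_smul_of_commute {b h : G} (hbh : Commute b h) (f : X → ℝ) (n : ℕ) (x : X) :
    orbitAverage b f n (h • x) = orbitAverage b (fun y => f (h • y)) n x := by
  simp only [orbitAverage_eq, smul_smul, (hbh.pow_left _).eq]

theorem orbitAverage_mono {b : G} {f g : X → ℝ} (hfg : f ≤ g) (n : ℕ) (x : X) :
    orbitAverage b f n x ≤ orbitAverage b g n x := by
  simp only [orbitAverage_eq]
  gcongr
  exact hfg _

theorem abs_orbitAverage_sub_orbitAverage_le {b : G} {f g : X → ℝ} {x y : X} {ε : ℝ}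
    (h : ∀ k : ℕ, |f (b ^ k • x) - g (b ^ k • y)| ≤ ε) (n : ℕ) :
    |orbitAverage b f n x - orbitAverage b g n y| ≤ ε := by
  have hε : 0 ≤ ε := (abs_nonneg _).trans (h 0)
  rw [orbitAverage_eq, orbitAverage_eq, ← mul_sub, ← Finset.sum_sub_distrib, abs_mul, abs_inv,
    Nat.abs_cast]
  calc (n : ℝ)⁻¹ * |∑ k ∈ Finset.range n, (f (b ^ k • x) - g (b ^ k • y))|
      ≤ (n : ℝ)⁻¹ * ∑ _k ∈ Finset.range n, ε := by
        gcongr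
        exact (Finset.abs_sum_le_sum_abs _ _).trans (Finset.sum_le_sum fun k _ => h k)
    _ ≤ ε := by
        rcases n.eq_zero_or_pos with rfl | hn
        · simpa using hε
        · simp [inv_mul_cancel_left₀ (Nat.cast_ne_zero.2 hn.ne' : (n : ℝ) ≠ 0)]

theorem abs_orbitAverage_le {b : G} {f : X → ℝ} {C : ℝ} (hf : ∀ x, |f x| ≤ C) (n : ℕ) (x : X) :
    |orbitAverage b f n x| ≤ C := by
  simpa [orbitAverage_eq] using
    abs_orbitAverage_sub_orbitAverage_le (b := b) (g := 0) (y := x) (fun k => by simpa using hf _) n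

section Integral

variable [MeasurableSpace X] {μ : Measure X} {b : G}

theorem integrable_smul_pow (hb : MeasurePreserving (b • · : X → X) μ μ)
    {f : X → ℝ} (hf : Integrable f μ) (k : ℕ) : Integrable (fun x => f (b ^ k • x)) μ := by
  have hbk : MeasurePreserving (b ^ k • · : X → X) μ μ := by
    simpa only [smul_iterate] using hb.iterate k
  exact hbk.integrable_comp_of_integrable hf

variable [MeasurableConstSMul G X]

theorem integral_orbitAverage (hb : MeasurePreserving (b • · : X → X) μ μ)
    {f : X → ℝ} (hf : Integrable f μ) {n : ℕ} (hn : n ≠ 0) :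
    ∫ x, orbitAverage b f n x ∂μ = ∫ x, f x ∂μ := by
  have hint (k : ℕ) : ∫ x, f (b ^ k • x) ∂μ = ∫ x, f x ∂μ := by
    have hbk : MeasurePreserving (b ^ k • · : X → X) μ μ := by
      simpa only [smul_iterate] using hb.iterate k
    exact hbk.integral_comp (measurableEmbedding_const_smul _) f
  simp only [orbitAverage_eq]
  rw [integral_const_mul, integral_finsetSum _ fun k _ => integrable_smul_pow hb hf k,
    Finset.sum_congr rfl fun k _ => hint k]
  simp [hn]

theorem lintegral_orbitAverage (hb : MeasurePreserving (b • · : X → X) μ μ) {f : X → ℝ}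
    (hf : Integrable f μ) (hf0 : 0 ≤ f) {n : ℕ} (hn : n ≠ 0) :
    ∫⁻ x, ENNReal.ofReal (orbitAverage b f n x) ∂μ = ENNReal.ofReal (∫ x, f x ∂μ) := by
  rw [← integral_orbitAverage hb hf hn, ofReal_integral_eq_lintegral_ofReal]
  · rw [funext (orbitAverage_eq b f n)]
    exact (integrable_finsetSum _ fun k _ => integrable_smul_pow hb hf k).const_mul _
  · refine .of_forall fun x => ?_
    rw [orbitAverage_eq]
    exact mul_nonneg (by positivity) (Finset.sum_nonneg fun k _ => hf0 _)

end Integral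

variable [TopologicalSpace X]

/-- The orbit averages of `x` under `b` and of `y` under `c` become indistinguishable, along the
times `N k`, when tested against compactly supported continuous functions. -/
def SameAverages (N : ℕ → ℕ) (b c : G) (x y : X) : Prop :=
  ∀ f : C_c(X, ℝ),
    Tendsto (fun k => orbitAverage b f (N k) x - orbitAverage c f (N k) y) atTop (𝓝 0)

namespace SameAverages

variable {N : ℕ → ℕ} {a b c : G} {x y z : X}

theorem refl (N : ℕ → ℕ) (b : G) (x : X) : SameAverages N b b x x := fun f => by simp

theorem symm (h : SameAverages N b c x y) : SameAverages N c b y x := fun f => by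
  simpa using (h f).neg

theorem trans (h : SameAverages N a b x y) (h' : SameAverages N b c y z) :
    SameAverages N a c x z := fun f => by
  simpa using (h f).add (h' f)

theorem smul [ContinuousConstSMul G X] {g : G} (hb : Commute b g) (hc : Commute c g)
    (h : SameAverages N b c x y) : SameAverages N b c (g • x) (g • y) := by
  intro f
  simp only [orbitAverage_smul_of_commute hb, orbitAverage_smul_of_commute hc]
  exact h (compSMul g f)

theorem of_dense {D : Set C_c(X, ℝ)} (hD : ∀ f : C_c(X, ℝ), ∀ ε > 0, ∃ g ∈ D, ∀ x, |f x - g x| < ε)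
    (h : ∀ f ∈ D, Tendsto (fun k => orbitAverage b f (N k) x - orbitAverage c f (N k) y)
      atTop (𝓝 0)) : SameAverages N b c x y := by
  intro f
  refine Metric.tendsto_atTop'.2 fun ε hε => ?_
  obtain ⟨g, hgD, hfg⟩ := hD f (ε / 3) (by positivity)
  obtain ⟨m, hm⟩ := Metric.tendsto_atTop'.1 (h g hgD) (ε / 3) (by positivity)
  refine ⟨m, fun k hk => ?_⟩
  have hb := abs_orbitAverage_sub_orbitAverage_le (b := b) (y := x) (fun k => (hfg (b ^ k • x)).le)
    (N k)
  have hc := abs_orbitAverage_sub_orbitAverage_le (b := c) (y := y) (fun k => (hfg (c ^ k • y)).le)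
    (N k)
  have hg := hm k hk
  simp only [Real.dist_eq, sub_zero, abs_lt, abs_le] at *
  constructor <;> linarith

theorem smul_self (hN : Tendsto N atTop atTop) (b : G) (x : X) : SameAverages N b b (b • x) x :=
  fun f => (tendsto_birkhoffAverage_apply_sub_birkhoffAverage' ℝ
    (f.hasCompactSupport.isCompact_range f.continuous).isBounded (b • ·) x).comp hN

theorem of_contracted [TopologicalSpace G] [ContinuousInv G] [ContinuousSMul G X]
    (hN : Tendsto N atTop atTop) {u : G}
    (hu : Tendsto (fun n : ℕ => b ^ n * u * (b ^ n)⁻¹) atTop (𝓝 1)) (x : X) :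
    SameAverages N b b (u • x) x := by
  intro f
  have hterm : Tendsto (fun n => f (b ^ n • u • x) - f (b ^ n • x)) atTop (𝓝 0) := by
    refine Metric.tendsto_nhds.2 fun ε hε => ?_
    filter_upwards [hu.eventually (eventually_forall_abs_smul_sub_lt f hε)] with n hn
    simpa [smul_smul, mul_assoc] using hn (b ^ n • x)
  refine (hterm.cesaro.comp hN).congr fun k => ?_
  simp [orbitAverage_eq, mul_sub]

end SameAverages

theorem continuous_orbitAverage [ContinuousConstSMul G X] (b : G) (f : C_c(X, ℝ)) (n : ℕ) :
    Continuous (orbitAverage b f n : X → ℝ) := by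
  simp only [funext (orbitAverage_eq b f n)]
  fun_prop

theorem cauchySeq_orbitAverage_of_dense {N : ℕ → ℕ} {b : G} {x : X} {D : Set C_c(X, ℝ)}
    (hD : ∀ f : C_c(X, ℝ), ∀ ε > 0, ∃ g ∈ D, ∀ x, |f x - g x| < ε)
    (h : ∀ f ∈ D, CauchySeq fun k => orbitAverage b f (N k) x) (f : C_c(X, ℝ)) :
    CauchySeq fun k => orbitAverage b f (N k) x := by
  refine Metric.cauchySeq_iff'.2 fun ε hε => ?_
  obtain ⟨g, hgD, hfg⟩ := hD f (ε / 3) (by positivity)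
  obtain ⟨m, hm⟩ := Metric.cauchySeq_iff'.1 (h g hgD) (ε / 3) (by positivity)
  refine ⟨m, fun k hk => ?_⟩
  have hclose := abs_orbitAverage_sub_orbitAverage_le (b := b) (y := x)
    fun k => (hfg (b ^ k • x)).le
  have hgk := hm k hk
  have hfk := hclose (N k)
  have hfm := hclose (N m)
  simp only [Real.dist_eq, abs_lt, abs_le] at *
  constructor <;> linarith

section Measure

variable [MeasurableSpace X] [BorelSpace X] [ContinuousConstSMul G X]

variable [LocallyCompactSpace X] [SecondCountableTopology X] [T2Space X]

theorem measurableSet_sameAverages_pair (N : ℕ → ℕ) (b c : G) :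
    MeasurableSet {x : X | SameAverages N b c x x} := by
  obtain ⟨D, -, hDc, hD⟩ := exists_countable_uniformly_dense (univ : Set C_c(X, ℝ))
  have heq : {x : X | SameAverages N b c x x} = ⋂ f ∈ D, {x | Tendsto
      (fun k => orbitAverage b f (N k) x - orbitAverage c f (N k) x) atTop (𝓝 0)} := by
    ext x
    simpa using ⟨fun h f _ => h f, SameAverages.of_dense fun f => hD f (mem_univ f)⟩
  rw [heq]
  exact .biInter hDc fun f _ => measurableSet_tendsto _ fun k =>
    ((continuous_orbitAverage b f (N k)).sub (continuous_orbitAverage c f (N k))).measurable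

/-- Mathlib has the mean ergodic theorem but not the pointwise one, whence the subsequence `N`. -/
theorem exists_ae_tendsto_orbitAverage (μ : Measure X) [IsFiniteMeasure μ] {b : G}
    (hb : MeasurePreserving (b • · : X → X) μ μ) :
    ∃ N : ℕ → ℕ, Tendsto N atTop atTop ∧ (∀ᵐ x ∂μ, SameAverages N b b⁻¹ x x) ∧
      ∀ᵐ x ∂μ, ∀ f : C_c(X, ℝ), ∃ l, Tendsto (fun k => orbitAverage b f (N k) x) atTop (𝓝 l) := by
  obtain ⟨D, -, hDc, hD⟩ := exists_countable_uniformly_dense (univ : Set C_c(X, ℝ))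
  replace hD := fun f => hD f (mem_univ f)
  have := hDc.to_subtype
  have hlim (f : C_c(X, ℝ)) : ∃ F : X → ℝ, TendstoInMeasure μ (orbitAverage b f) atTop F ∧
      TendstoInMeasure μ (orbitAverage b⁻¹ f) atTop F := by
    obtain ⟨C, hC⟩ := exists_abs_le_of_compactlySupported f
    exact exists_tendstoInMeasure_birkhoffAverage (e := MeasurableEquiv.smul b) hb
      (.of_bound f.continuous.aestronglyMeasurable C (.of_forall hC))
  choose F hF hF' using hlim
  obtain ⟨N, hN, hae⟩ := exists_subseq_forall_ae_tendsto (ι := D ⊕ D)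
    (f := Sum.elim (fun f => orbitAverage b f.1) fun f => orbitAverage b⁻¹ f.1)
    (g := Sum.elim (fun f => F f.1) fun f => F f.1)
    (Sum.forall.2 ⟨fun f => hF f.1, fun f => hF' f.1⟩)
  have hae' := ae_all_iff.2 hae
  simp only [Sum.forall, Sum.elim_inl, Sum.elim_inr, Subtype.forall] at hae'
  refine ⟨N, hN, ?_, ?_⟩ <;> filter_upwards [hae'] with x hx
  · exact .of_dense hD fun f hf => by simpa using (hx.1 f hf).sub (hx.2 f hf)
  · exact fun f => cauchySeq_tendsto_of_complete
      (cauchySeq_orbitAverage_of_dense hD (fun g hg => (hx.1 g hg).cauchySeq) f)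

end Measure

end OrbitAverages

theorem measurableSet_exists_mem_isCompact {ι X S : Type*} [Countable ι] [MeasurableSpace X]
    [PseudoMetricSpace S] {C : Set S} (hC : IsCompact C) {F : ι → ℕ → X → S → ℝ}
    (hF : ∀ i k s, Measurable fun x => F i k x s)
    (hequi : ∀ i s, ∀ ε > 0, ∀ᶠ t in 𝓝 s, ∀ k x, |F i k x t - F i k x s| < ε) :
    MeasurableSet {x | ∃ s ∈ C, ∀ i, ∀ ε > 0, ∀ᶠ k in atTop, -ε ≤ F i k x s} := by
  have := Encodable.ofCountable ι
  obtain ⟨Q, hQC, hQ, hCQ⟩ := hC.isSeparable.exists_countable_dense_subset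
  have hfin (n : ℕ) : {i : ι | Encodable.encode i ≤ n}.Finite :=
    (finite_Iic n).preimage Encodable.encode_injective.injOn
  let δ : ℕ → ℝ := fun n => 1 / ((n : ℝ) + 1)
  have hδ : Tendsto δ atTop (𝓝 0) := tendsto_one_div_add_atTop_nhds_zero_nat
  have hδpos (n : ℕ) : 0 < δ n := Nat.one_div_pos_of_nat
  have heq : {x | ∃ s ∈ C, ∀ i, ∀ ε > 0, ∀ᶠ k in atTop, -ε ≤ F i k x s} =
      ⋂ n : ℕ, ⋃ t ∈ Q, ⋂ i ∈ {i : ι | Encodable.encode i ≤ n},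
        {x | ∀ᶠ k in atTop, -δ n ≤ F i k x t} := by
    ext x
    simp only [mem_ofPred_eq, mem_iInter, mem_iUnion, exists_prop]
    constructor
    · rintro ⟨s, hs, hsF⟩ n
      have hnear := (hfin n).eventually_all.2 fun i _ => hequi i s (δ n / 2) (half_pos (hδpos n))
      obtain ⟨t, ht, htQ⟩ := mem_closure_iff_nhds.1 (hCQ hs) _ hnear
      refine ⟨t, htQ, fun i hi => ?_⟩
      filter_upwards [hsF i (δ n / 2) (half_pos (hδpos n))] with k hk
      linarith [(abs_lt.1 (ht i hi k x)).1]
    · intro h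
      choose t htQ ht using h
      obtain ⟨s, hs, φ, hφ, hφs⟩ := hC.tendsto_subseq fun n => hQC (htQ n)
      refine ⟨s, hs, fun i ε hε => ?_⟩
      obtain ⟨n, hn, hin, hnear⟩ := (((hδ.comp hφ.tendsto_atTop).eventually_lt_const
        (half_pos hε)).and ((hφ.tendsto_atTop.eventually_ge_atTop (Encodable.encode i)).and
          (hφs.eventually (hequi i s _ (half_pos hε))))).exists
      filter_upwards [ht (φ n) i hin] with k hk
      have hδn : δ (φ n) < ε / 2 := hn
      have hclose : F i k x (t (φ n)) - F i k x s < ε / 2 := (abs_lt.1 (hnear k x)).2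
      linarith
  rw [heq]
  refine .iInter fun n => .biUnion hQ fun t _ => .biInter (hfin n).countable fun i _ => ?_
  simp only [eventually_atTop, ofPred_exists, ofPred_forall]
  exact .iUnion fun m => .iInter fun k => .iInter fun _ =>
    measurableSet_le measurable_const (hF i k t)

section AverageStabilizer

variable {G X : Type*} [Group G] [MulAction G X] [TopologicalSpace X]

/-- The elements of the centralizer of `b` which do not change the asymptotic averages of `x`. -/
def averageStabilizer [ContinuousConstSMul G X] (N : ℕ → ℕ) (b : G) (x : X) : Subgroup G where
  carrier := {g | Commute b g ∧ SameAverages N b b (g • x) x}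
  one_mem' := ⟨.one_right b, by simpa using SameAverages.refl N b x⟩
  mul_mem' := by
    rintro g h ⟨hbg, hg⟩ ⟨hbh, hh⟩
    exact ⟨hbg.mul_right hbh, by simpa [mul_smul] using (hh.smul hbg hbg).trans hg⟩
  inv_mem' := by
    rintro g ⟨hbg, hg⟩
    exact ⟨hbg.inv_right, by simpa using (hg.smul hbg.inv_right hbg.inv_right).symm⟩

theorem conj_mem_averageStabilizer [ContinuousConstSMul G X] {N : ℕ → ℕ} {b g h : G} {x : X}
    (hbh : Commute b h) (hg : g ∈ averageStabilizer N b x) :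
    h * g * h⁻¹ ∈ averageStabilizer N b (h • x) :=
  ⟨(hbh.mul_right hg.1).mul_right hbh.inv_right, by
    simpa [smul_smul] using hg.2.smul hbh hbh⟩

theorem abs_mem_preimage_averageStabilizer [ContinuousConstSMul G X] {N : ℕ → ℕ} {b : G}
    {w : AddChar ℝ G} {x : X} {s : ℝ} (hs : w s ∈ averageStabilizer N b x) :
    w |s| ∈ averageStabilizer N b x := by
  rcases abs_choice s with h | h
  · rwa [h]
  · rw [h, w.map_neg_eq_inv]
    exact inv_mem hs

theorem measurePreserving_smul_of_mem_averageStabilizer [MeasurableSpace X] [BorelSpace X]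
    [LocallyCompactSpace X] [SecondCountableTopology X] [T2Space X] [ContinuousConstSMul G X]
    {μ : Measure X} [IsProbabilityMeasure μ] {N : ℕ → ℕ}
    (hN : Tendsto N atTop atTop) {b g : G} (hb : MeasurePreserving (b • · : X → X) μ μ)
    (hg : ∀ᵐ x ∂μ, g ∈ averageStabilizer N b x) : MeasurePreserving (g • · : X → X) μ μ := by
  refine ⟨measurable_const_smul g, ?_⟩
  have := Measure.isProbabilityMeasure_map (μ := μ) (measurable_const_smul g).aemeasurable
  refine Measure.ext_of_integral_eq_on_compactlySupported fun f => ?_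
  rw [(measurableEmbedding_const_smul g).integral_map]
  let φ : C_c(X, ℝ) := compSMul g f - f
  obtain ⟨C, hC⟩ := exists_abs_le_of_compactlySupported φ
  have hconst : Tendsto (fun k => ∫ x, orbitAverage b φ (N k) x ∂μ) atTop (𝓝 (∫ x, φ x ∂μ)) :=
    tendsto_const_nhds.congr' <| by
      filter_upwards [hN.eventually_ne_atTop 0] with k hk using
        (integral_orbitAverage hb (φ.continuous.integrable_of_hasCompactSupport φ.hasCompactSupport)
          hk).symm
  have hzero : Tendsto (fun k => ∫ x, orbitAverage b φ (N k) x ∂μ) atTop (𝓝 (∫ _, 0 ∂μ)) := by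
    refine tendsto_integral_of_dominated_convergence (fun _ => C)
      (fun k => (continuous_orbitAverage b φ (N k)).aestronglyMeasurable) (integrable_const C)
      (fun k => .of_forall fun x => abs_orbitAverage_le hC _ x) ?_
    filter_upwards [hg] with x hx
    refine (hx.2 f).congr fun k => ?_
    simp [φ, orbitAverage_smul_of_commute hx.1, orbitAverage_eq, mul_sub]
  have hφ : ∫ x, φ x ∂μ = 0 := by simpa using tendsto_nhds_unique hconst hzero
  have hint (f : C_c(X, ℝ)) : Integrable f μ :=
    f.continuous.integrable_of_hasCompactSupport f.hasCompactSupport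
  refine sub_eq_zero.1 ?_
  rw [← hφ]
  exact (integral_sub (hint (compSMul g f)) (hint f)).symm

variable [TopologicalSpace G] [IsTopologicalGroup G] [ContinuousSMul G X]

theorem eventually_forall_abs_orbitAverage_addChar_sub_lt {b : G} {w : AddChar ℝ G}
    (hw : Continuous w) (hbw : ∀ s, Commute b (w s)) (f : C_c(X, ℝ)) (s : ℝ) {ε : ℝ} (hε : 0 < ε) :
    ∀ᶠ t in 𝓝 s, ∀ n x, |orbitAverage b f n (w t • x) - orbitAverage b f n (w s • x)| < ε := by
  have hlim : Tendsto (fun t => w (t - s)) (𝓝 s) (𝓝 1) := by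
    have hcont : Continuous fun t => w (t - s) := by fun_prop
    simpa using hcont.tendsto s
  filter_upwards [hlim.eventually (eventually_forall_abs_smul_sub_lt f (half_pos hε))] with t ht n x
  have hts : w t • x = w (t - s) • w s • x := by
    rw [smul_smul, ← w.map_add_eq_mul, sub_add_cancel]
  rw [hts, orbitAverage_smul_of_commute (hbw _)]
  refine (abs_orbitAverage_sub_orbitAverage_le (fun k => (ht _).le) n).trans_lt (half_lt_self hε)

variable {N : ℕ → ℕ} {b : G} {w : AddChar ℝ G} {x : X}

theorem isClosed_preimage_averageStabilizer (hw : Continuous w) (hbw : ∀ s, Commute b (w s)) :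
    IsClosed {s | w s ∈ averageStabilizer N b x} := by
  refine isClosed_of_closure_subset fun s hs => ⟨hbw s, fun f => ?_⟩
  refine Metric.tendsto_nhds.2 fun ε hε => ?_
  obtain ⟨t, hts, ht⟩ := mem_closure_iff_nhds.1 hs _
    (eventually_forall_abs_orbitAverage_addChar_sub_lt hw hbw f s (half_pos hε))
  filter_upwards [Metric.tendsto_nhds.1 (ht.2 f) _ (half_pos hε)] with k hk
  have hclose := hts (N k) x
  simp only [Real.dist_eq, sub_zero, abs_lt] at *
  constructor <;> linarith

theorem mem_averageStabilizer_of_forall_exists_small (hw : Continuous w)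
    (hbw : ∀ s, Commute b (w s)) (h : ∀ ε > 0, ∃ s ∈ Ioo 0 ε, w s ∈ averageStabilizer N b x)
    (s : ℝ) : w s ∈ averageStabilizer N b x := by
  let S := averageStabilizer N b x
  let T : AddSubgroup ℝ := (Subgroup.toAddSubgroup S).comap w.toAddMonoidHom
  have hdense : Dense (T : Set ℝ) := T.dense_of_not_isolated_zero fun ε hε =>
    let ⟨s, hs, hsT⟩ := h ε hε
    ⟨s, hsT, hs⟩
  have hclosed : IsClosed {s | w s ∈ S} := isClosed_preimage_averageStabilizer hw hbw
  exact hclosed.closure_subset_iff.2 subset_rfl (hdense s)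

/-- If `u` and `v` commute up to an element `w` of the centralizer of `b`, where `b` contracts `v`
and `b⁻¹` contracts `u`, then `w` preserves the averages of the vertex `u • v • x` of the
parallelogram at `x`: these are the averages of `w • u • v • x = v • u • x`, as one sees by moving
through `u • x`, `x` and `v • x`. -/
theorem mem_averageStabilizer_of_parallelogram (hN : Tendsto N atTop atTop) {u v w : G}
    (hu : Tendsto (fun n : ℕ => b⁻¹ ^ n * u * (b⁻¹ ^ n)⁻¹) atTop (𝓝 1))
    (hv : Tendsto (fun n : ℕ => b ^ n * v * (b ^ n)⁻¹) atTop (𝓝 1)) (hbw : Commute b w)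
    (hvu : v * u = w * u * v) (hx : SameAverages N b b⁻¹ x x)
    (hux : SameAverages N b b⁻¹ (u • x) (u • x)) (hvx : SameAverages N b b⁻¹ (v • x) (v • x))
    (huvx : SameAverages N b b⁻¹ (u • v • x) (u • v • x)) :
    w ∈ averageStabilizer N b (u • v • x) := by
  have hvux : SameAverages N b b (v • u • x) x :=
    (SameAverages.of_contracted hN hv _).trans
      (hux.trans ((SameAverages.of_contracted hN hu x).trans hx.symm))
  have huv : SameAverages N b b (u • v • x) x :=
    huvx.trans ((SameAverages.of_contracted hN hu _).trans
      (hvx.symm.trans (SameAverages.of_contracted hN hv x)))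
  refine ⟨hbw, ?_⟩
  rw [smul_smul u v, smul_smul, ← mul_assoc, ← hvu, mul_smul, mul_smul]
  exact hvux.trans huv.symm

end AverageStabilizer

section Dichotomy

variable {G X : Type*} [Group G]

/-- The subgroup `H` normalizes the one-parameter subgroup `w`, acting on its parameter by
positive homotheties, and every positive ratio occurs. -/
structure Rescales (H : Subgroup G) (w : AddChar ℝ G) : Prop where
  exists_ratio : ∀ h ∈ H, ∃ l > 0, ∀ s, h * w s * h⁻¹ = w (l * s)
  exists_mem : ∀ l > 0, ∃ h ∈ H, ∀ s, h * w s * h⁻¹ = w (l * s)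

variable [MulAction G X]

theorem preimage_smul_eq_of_forall_mem {H : Subgroup G} {A : Set X}
    (hA : ∀ h ∈ H, ∀ x ∈ A, h • x ∈ A) {h : G} (hh : h ∈ H) : (h • ·) ⁻¹' A = A :=
  Subset.antisymm (fun x hx => by simpa using hA h⁻¹ (inv_mem hh) _ hx) (hA h hh)

/-- The points whose averages are preserved by `w s` for some `s ≠ 0`. -/
def periodicSet [TopologicalSpace X] [TopologicalSpace G] [ContinuousConstSMul G X] (N : ℕ → ℕ)
    (b : G) (w : AddChar ℝ G) : Set X :=
  {x | ∃ s ≠ 0, w s ∈ averageStabilizer N b x}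

theorem smul_mem_periodicSet [TopologicalSpace X] [TopologicalSpace G] [ContinuousConstSMul G X]
    {H : Subgroup G} {w : AddChar ℝ G} (hHw : Rescales H w) {N : ℕ → ℕ} {b h : G} (hh : h ∈ H)
    (hbh : Commute b h) {x : X} (hx : x ∈ periodicSet N b w) : h • x ∈ periodicSet N b w := by
  obtain ⟨s, hs, hsx⟩ := hx
  obtain ⟨l, hl, hlw⟩ := hHw.exists_ratio h hh
  exact ⟨l * s, mul_ne_zero hl.ne' hs, hlw s ▸ conj_mem_averageStabilizer hbh hsx⟩

variable [MeasurableSpace X]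

/-- The subgroup `H` preserves `μ`, and every measurable set which is strictly invariant under `H`
is null or conull. Mathlib's `ErgodicSMul` asks this for the sets invariant up to null sets. -/
structure IsErgodicAction (H : Subgroup G) (μ : Measure X) : Prop where
  measurePreserving : ∀ h ∈ H, MeasurePreserving (h • · : X → X) μ μ
  measure_eq_zero_or_one : ∀ A : Set X, MeasurableSet A → (∀ h ∈ H, (h • ·) ⁻¹' A = A) →
    μ A = 0 ∨ μ A = 1

variable [TopologicalSpace X] [TopologicalSpace G] [IsTopologicalGroup G] [ContinuousSMul G X]

/-- The points whose averages are preserved by `w s` for some `0 < s ≤ M`. -/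
def shortPeriodSet (N : ℕ → ℕ) (b : G) (w : AddChar ℝ G) (M : ℝ) : Set X :=
  {x | ∃ s ∈ Ioc 0 M, w s ∈ averageStabilizer N b x}

variable [BorelSpace X] {μ : Measure X} {N : ℕ → ℕ} {b : G} {w : AddChar ℝ G}
  [LocallyCompactSpace X] [SecondCountableTopology X] [T2Space X]

theorem measurableSet_shortPeriodSet (hw : Continuous w) (hbw : ∀ s, Commute b (w s)) (M : ℝ) :
    MeasurableSet (shortPeriodSet N b w M : Set X) := by
  obtain ⟨D, -, hDc, hD⟩ := exists_countable_uniformly_dense (univ : Set C_c(X, ℝ))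
  have := hDc.to_subtype
  have hiff (s : ℝ) (x : X) : w s ∈ averageStabilizer N b x ↔ ∀ f : D, ∀ ε > 0, ∀ᶠ k in atTop,
      -ε ≤ -|orbitAverage b f.1 (N k) (w s • x) - orbitAverage b f.1 (N k) x| := by
    simp only [neg_le_neg_iff]
    refine ⟨fun h f ε hε => ?_, fun h => ⟨hbw s, .of_dense (fun f => hD f (mem_univ f))
      fun f hf => (Metric.nhds_basis_closedBall.tendsto_right_iff).2 fun ε hε => ?_⟩⟩
    · simpa using Metric.nhds_basis_closedBall.tendsto_right_iff.1 (h.2 f.1) ε hε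
    · simpa using h ⟨f, hf⟩ ε hε
  have heq : (shortPeriodSet N b w M : Set X) =
      ⋃ r : ℕ, {x | ∃ s ∈ Icc (1 / ((r : ℝ) + 1)) M, w s ∈ averageStabilizer N b x} := by
    ext x
    simp only [shortPeriodSet, mem_ofPred_eq, mem_iUnion]
    constructor
    · rintro ⟨s, hs, hsx⟩
      obtain ⟨r, hr⟩ := exists_nat_one_div_lt hs.1
      exact ⟨r, s, ⟨hr.le, hs.2⟩, hsx⟩
    · rintro ⟨r, s, hs, hsx⟩
      exact ⟨s, ⟨Nat.one_div_pos_of_nat.trans_le hs.1, hs.2⟩, hsx⟩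
  rw [heq]
  refine .iUnion fun r => ?_
  simp only [hiff]
  refine measurableSet_exists_mem_isCompact isCompact_Icc (fun f k s => ?_) fun f s ε hε => ?_
  · have hcont := continuous_orbitAverage b f.1 (N k) (X := X)
    exact ((hcont.comp (continuous_const_smul _)).sub hcont).abs.neg.measurable
  · filter_upwards [eventually_forall_abs_orbitAverage_addChar_sub_lt hw hbw f.1 s hε]
      with t ht k x
    rw [neg_sub_neg, abs_sub_comm]
    refine (abs_abs_sub_abs_le _ _).trans_lt ?_
    simpa using ht (N k) x

theorem shortPeriodSet_ae_eq [IsFiniteMeasure μ] {H : Subgroup G} (hw : Continuous w)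
    (hbw : ∀ s, Commute b (w s)) (hHw : Rescales H w) (hbH : ∀ h ∈ H, Commute b h)
    (hμ : ∀ h ∈ H, MeasurePreserving (h • · : X → X) μ μ) {M M' : ℝ} (hM : 0 < M) (hM' : M ≤ M') :
    (shortPeriodSet N b w M : Set X) =ᵐ[μ] shortPeriodSet N b w M' := by
  obtain ⟨h, hh, hhw⟩ := hHw.exists_mem (M / M') (div_pos hM (hM.trans_le hM'))
  have hmaps : shortPeriodSet N b w M' ⊆ (h • · : X → X) ⁻¹' shortPeriodSet N b w M := by
    rintro x ⟨s, hs, hsx⟩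
    refine ⟨M / M' * s, ⟨mul_pos (div_pos hM (hM.trans_le hM')) hs.1, ?_⟩, ?_⟩
    · exact (mul_le_mul_of_nonneg_left hs.2 (div_pos hM (hM.trans_le hM')).le).trans_eq
        (div_mul_cancel₀ M (hM.trans_le hM').ne')
    · exact hhw s ▸ conj_mem_averageStabilizer (hbH h hh) hsx
  refine ae_eq_of_subset_of_measure_ge
    (fun x ⟨s, hs, hsx⟩ => ⟨s, ⟨hs.1, hs.2.trans hM'⟩, hsx⟩) ?_
    (measurableSet_shortPeriodSet hw hbw M).nullMeasurableSet (measure_ne_top _ _)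
  calc μ (shortPeriodSet N b w M') ≤ μ ((h • ·) ⁻¹' shortPeriodSet N b w M) := measure_mono hmaps
    _ = μ (shortPeriodSet N b w M) :=
      (hμ h hh).measure_preimage (measurableSet_shortPeriodSet hw hbw M).nullMeasurableSet

/-- Rescaling by `H` turns one period into arbitrarily short ones, without changing the measure of
the set of points that have them. -/
theorem ae_forall_mem_averageStabilizer [IsFiniteMeasure μ] {H : Subgroup G} (hw : Continuous w)
    (hbw : ∀ s, Commute b (w s)) (hHw : Rescales H w) (hbH : ∀ h ∈ H, Commute b h)
    (hμ : ∀ h ∈ H, MeasurePreserving (h • · : X → X) μ μ) :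
    ∀ᵐ x ∂μ, (∃ s ≠ 0, w s ∈ averageStabilizer N b x) → ∀ s, w s ∈ averageStabilizer N b x := by
  have hle (k m : ℕ) : 1 / ((k : ℝ) + 1) ≤ m + 1 := calc
    1 / ((k : ℝ) + 1) ≤ 1 := div_le_one_of_le₀ (by simp) (by positivity)
    _ ≤ m + 1 := by simp
  have hshrink := ae_all_iff.2 fun k : ℕ => ae_all_iff.2 fun m : ℕ =>
    (shortPeriodSet_ae_eq (N := N) hw hbw hHw hbH hμ (M := 1 / ((k : ℝ) + 1)) (M' := m + 1)
      Nat.one_div_pos_of_nat (hle k m)).mem_iff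
  filter_upwards [hshrink] with x hx
  rintro ⟨s, hs, hsx⟩
  refine mem_averageStabilizer_of_forall_exists_small hw hbw fun ε hε => ?_
  obtain ⟨m, hm⟩ := exists_nat_gt |s|
  obtain ⟨k, hk⟩ := exists_nat_one_div_lt hε
  obtain ⟨t, ht, htx⟩ := (hx k m).2
    ⟨|s|, ⟨abs_pos.2 hs, by linarith⟩, abs_mem_preimage_averageStabilizer hsx⟩
  exact ⟨t, ⟨ht.1, ht.2.trans_lt hk⟩, htx⟩

theorem measurableSet_periodicSet (hw : Continuous w) (hbw : ∀ s, Commute b (w s)) :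
    MeasurableSet (periodicSet N b w : Set X) := by
  have heq : (periodicSet N b w : Set X) = ⋃ k : ℕ, shortPeriodSet N b w k := by
    ext x
    simp only [periodicSet, mem_iUnion]
    constructor
    · rintro ⟨s, hs, hsx⟩
      obtain ⟨m, hm⟩ := exists_nat_gt |s|
      exact ⟨m, |s|, ⟨abs_pos.2 hs, hm.le⟩, abs_mem_preimage_averageStabilizer hsx⟩
    · rintro ⟨m, s, hs, hsx⟩
      exact ⟨s, hs.1.ne', hsx⟩
  exact heq ▸ .iUnion fun k => measurableSet_shortPeriodSet hw hbw k

theorem IsErgodicAction.ae_mem_averageStabilizer_or_ae_notMem_periodicSet [IsProbabilityMeasure μ]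
    {H : Subgroup G} (hμ : IsErgodicAction H μ) (hw : Continuous w)
    (hbw : ∀ s, Commute b (w s)) (hHw : Rescales H w) (hbH : ∀ h ∈ H, Commute b h) :
    (∀ᵐ x ∂μ, ∀ s, w s ∈ averageStabilizer N b x) ∨ ∀ᵐ x ∂μ, x ∉ periodicSet N b w := by
  have hm : MeasurableSet (periodicSet N b w : Set X) := measurableSet_periodicSet hw hbw
  refine (hμ.measure_eq_zero_or_one _ hm fun h => preimage_smul_eq_of_forall_mem fun g hg _ =>
    smul_mem_periodicSet hHw hg (hbH g hg)).symm.imp (fun h => ?_)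
      measure_eq_zero_iff_ae_notMem.1
  filter_upwards [(mem_ae_iff_prob_eq_one hm).2 h,
    ae_forall_mem_averageStabilizer hw hbw hHw hbH hμ.measurePreserving] with x hx hall
  exact hall hx

end Dichotomy

section Accumulation

variable {G X : Type*} [Group G] [MulAction G X]

theorem one_sub_orbitAverage_indicator_compl_le {c : G} {K : Set X} {f : X → ℝ} (hf : 0 ≤ f)
    (hfK : ∀ y ∈ K, 1 ≤ f y) {n : ℕ} (hn : n ≠ 0) (x : X) :
    1 - orbitAverage c (Kᶜ.indicator 1) n x ≤ orbitAverage c f n x := by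
  have hsum : orbitAverage c (Kᶜ.indicator 1) n x + orbitAverage c (K.indicator 1) n x = 1 := by
    rw [orbitAverage_eq, orbitAverage_eq, ← mul_add, ← Finset.sum_add_distrib]
    simp only [indicator_compl_add_self_apply, Pi.one_apply]
    simp [hn]
  have hmono : orbitAverage c (K.indicator 1) n x ≤ orbitAverage c f n x :=
    orbitAverage_mono (indicator_le' hfK fun y _ => hf y) n x
  linarith

theorem measure_le_liminf_orbitAverage_indicator_le [MeasurableSpace X] [MeasurableConstSMul G X]
    {μ : Measure X} [IsFiniteMeasure μ] {N : ℕ → ℕ} {c : G} {ε : ℝ}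
    (hc : MeasurePreserving (c • · : X → X) μ μ) (hN : Tendsto N atTop atTop) (hε : 0 < ε)
    {A : Set X} (hA : MeasurableSet A) :
    μ {x | ENNReal.ofReal ε ≤
      liminf (fun k => ENNReal.ofReal (orbitAverage c (A.indicator 1) (N k) x)) atTop} ≤
      μ A / ENNReal.ofReal ε := by
  let F (k : ℕ) (x : X) : ℝ≥0∞ := ENNReal.ofReal (orbitAverage c (A.indicator 1) (N k) x)
  have hF (k : ℕ) : Measurable (F k) :=
    (measurable_birkhoffAverage hc.measurable (measurable_one.indicator hA) (N k)).ennreal_ofReal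
  have hint : (fun k => ∫⁻ x, F k x ∂μ) =ᶠ[atTop] fun _ => μ A := by
    filter_upwards [hN.eventually_ne_atTop 0] with k hk
    calc ∫⁻ x, F k x ∂μ = ENNReal.ofReal (∫ x, A.indicator 1 x ∂μ) :=
          lintegral_orbitAverage hc ((integrable_const (1 : ℝ)).indicator hA)
            (indicator_nonneg fun _ _ => zero_le_one) hk
      _ = μ A := by rw [integral_indicator_one hA, ofReal_measureReal]
  have hFatou : ∫⁻ x, liminf (F · x) atTop ∂μ ≤ μ A := by
    simpa only [liminf_congr hint, liminf_const] using lintegral_liminf_le (μ := μ) (u := atTop) hF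
  exact (meas_ge_le_lintegral_div (Measurable.liminf hF).aemeasurable (by simpa) (by simp)).trans
    (ENNReal.div_le_div_right hFatou _)

variable [TopologicalSpace X]

/-- Every weak-* limit of the empirical measures of the `c`-orbit of `x` along the times `N k`
gives mass at least `1 - ε` to the compact set `K`. -/
def AccumulatesOn (N : ℕ → ℕ) (c : G) (ε : ℝ) (K : Set X) (x : X) : Prop :=
  ∀ f : C_c(X, ℝ), 0 ≤ (f : X → ℝ) → (∀ y ∈ K, 1 ≤ f y) →
    ∀ η > 0, ∀ᶠ k in atTop, -η ≤ orbitAverage c f (N k) x - (1 - ε)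

namespace AccumulatesOn

variable {N : ℕ → ℕ} {c : G} {ε : ℝ} {K K' : Set X} {x y : X}

theorem mono (h : AccumulatesOn N c ε K x) (hK : K ⊆ K') : AccumulatesOn N c ε K' x :=
  fun f hf hfK => h f hf fun y hy => hfK y (hK hy)

theorem congr (h : AccumulatesOn N c ε K x) (hxy : SameAverages N c c x y) :
    AccumulatesOn N c ε K y := by
  intro f hf hfK η hη
  filter_upwards [h f hf hfK (η / 2) (half_pos hη),
    Metric.tendsto_nhds.1 (hxy f) (η / 2) (half_pos hη)] with k hk hxyk
  rw [Real.dist_eq, sub_zero, abs_lt] at hxyk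
  linarith

theorem smul [ContinuousConstSMul G X] {g : G} (hcg : Commute c g) (h : AccumulatesOn N c ε K x)
    (hK : ∀ y ∈ K, g • y ∈ K') : AccumulatesOn N c ε K' (g • x) := by
  intro f hf hfK
  simp only [orbitAverage_smul_of_commute hcg]
  exact h (compSMul g f) (fun y => hf (g • y)) fun y hy => hfK _ (hK y hy)

end AccumulatesOn

variable [MeasurableSpace X] {N : ℕ → ℕ} {c : G} {ε : ℝ} [BorelSpace X] [ContinuousConstSMul G X]

theorem ae_exists_accumulatesOn {μ : Measure X} [IsFiniteMeasure μ]
    (hc : MeasurePreserving (c • · : X → X) μ μ) (hN : Tendsto N atTop atTop)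
    (hlim : ∀ᵐ x ∂μ, ∀ f : C_c(X, ℝ), ∃ l, Tendsto (fun k => orbitAverage c f (N k) x) atTop (𝓝 l))
    (hε : 0 < ε) {K : ℕ → Set X} (hKm : ∀ m, MeasurableSet (K m))
    (hK : Tendsto (fun m => μ (K m)ᶜ) atTop (𝓝 0)) :
    ∀ᵐ x ∂μ, ∃ m, AccumulatesOn N c ε (K m) x := by
  let escape (m k : ℕ) (x : X) : ℝ := orbitAverage c ((K m)ᶜ.indicator 1) (N k) x
  have hnull : μ {x | ∀ m, ENNReal.ofReal ε ≤
      liminf (fun k => ENNReal.ofReal (escape m k x)) atTop} = 0 := by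
    have hdiv := ENNReal.Tendsto.div_const hK (.inr (by simpa : ENNReal.ofReal ε ≠ 0))
    rw [ENNReal.zero_div] at hdiv
    rw [ofPred_forall]
    exact le_antisymm (ge_of_tendsto' hdiv fun m => (measure_mono (iInter_subset _ m)).trans
      (measure_le_liminf_orbitAverage_indicator_le hc hN hε (hKm m).compl)) zero_le
  filter_upwards [measure_eq_zero_iff_ae_notMem.1 hnull, hlim] with x hx hxlim
  obtain ⟨m, hm⟩ : ∃ m, liminf (fun k => ENNReal.ofReal (escape m k x)) atTop <
      ENNReal.ofReal ε := by simpa using hx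
  refine ⟨m, fun f hf hfK η hη => ?_⟩
  obtain ⟨l, hl⟩ := hxlim f
  have hlε : 1 - ε ≤ l := by
    by_contra! hlt
    obtain ⟨k, hkε, hkl, hk0⟩ := ((frequently_lt_of_liminf_lt (by isBoundedDefault)
      hm).and_eventually ((hl.eventually_lt_const hlt).and (hN.eventually_ne_atTop 0))).exists
    have hkε' : escape m k x < ε := (ENNReal.ofReal_lt_ofReal_iff hε).1 hkε
    have := one_sub_orbitAverage_indicator_compl_le (c := c) hf hfK hk0 x
    linarith
  filter_upwards [hl.eventually_const_lt (sub_lt_self l hη)] with k hk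
  linarith

variable [T2Space X] [LocallyCompactSpace X] [SecondCountableTopology X]

theorem mul_measure_univ_le_of_ae_accumulatesOn {K : Set X} {ν : Measure X} [IsFiniteMeasure ν]
    (hc : MeasurePreserving (c • · : X → X) ν ν) (hN : Tendsto N atTop atTop) (hK : IsCompact K)
    (hν : ∀ᵐ x ∂ν, AccumulatesOn N c ε K x) : ENNReal.ofReal (1 - ε) * ν univ ≤ ν K := by
  rw [hK.measure_eq_biInf_integral_hasCompactSupport ν]
  simp only [le_iInf_iff]
  intro f hf hfc hfK hf0
  let φ : C_c(X, ℝ) := ⟨⟨f, hf⟩, hfc⟩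
  have hφ : Integrable φ ν := hf.integrable_of_hasCompactSupport hfc
  have hev : (fun k => ∫⁻ x, ENNReal.ofReal (orbitAverage c f (N k) x) ∂ν) =ᶠ[atTop]
      fun _ => ENNReal.ofReal (∫ x, f x ∂ν) := by
    filter_upwards [hN.eventually_ne_atTop 0] with k hk using lintegral_orbitAverage hc hφ hf0 hk
  calc ENNReal.ofReal (1 - ε) * ν univ = ∫⁻ _, ENNReal.ofReal (1 - ε) ∂ν := by simp
    _ ≤ ∫⁻ x, liminf (fun k => ENNReal.ofReal (orbitAverage c f (N k) x)) atTop ∂ν := by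
      refine lintegral_mono_ae (hν.mono fun x hx => ?_)
      have hlow : ∀ θ > 0, ENNReal.ofReal (1 - ε - θ) ≤
          liminf (fun k => ENNReal.ofReal (orbitAverage c f (N k) x)) atTop := fun θ hθ =>
        le_liminf_of_le (by isBoundedDefault) <|
          (hx φ hf0 (fun y hy => (hfK hy).ge) θ hθ).mono fun k hk =>
            ENNReal.ofReal_le_ofReal (by simpa [φ, neg_le_sub_iff_le_add] using hk)
      have hcont : Continuous fun θ => ENNReal.ofReal (1 - ε - θ) :=
        ENNReal.continuous_ofReal.comp (by fun_prop)
      simpa using le_of_tendsto ((hcont.tendsto 0).mono_left (nhdsWithin_le_nhds (s := Ioi 0)))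
        (eventually_mem_nhdsWithin.mono hlow)
    _ ≤ liminf (fun k => ∫⁻ x, ENNReal.ofReal (orbitAverage c f (N k) x) ∂ν) atTop :=
      lintegral_liminf_le fun k => (continuous_orbitAverage c φ (N k)).measurable.ennreal_ofReal
    _ = ENNReal.ofReal (∫ x, f x ∂ν) := by rw [liminf_congr hev, liminf_const]

end Accumulation

section LastAccumulationTime

variable {G X : Type*} [Group G] [MulAction G X] [TopologicalSpace X]

/-- The largest `s ∈ C` for which the orbit of `u s • x` accumulates on `K`; junk value `0` if there
is none. -/
noncomputable def lastAccumulationTime (N : ℕ → ℕ) (c : G) (ε : ℝ) (K : Set X) (u : AddChar ℝ G)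
    (C : Set ℝ) (x : X) : ℝ :=
  sSup {s ∈ C | AccumulatesOn N c ε K (u s • x)}

variable {N : ℕ → ℕ} {c : G} {ε : ℝ} {K : Set X} {u : AddChar ℝ G} {C : Set ℝ} {x y : X}

theorem lastAccumulationTime_congr [ContinuousConstSMul G X] (hcu : ∀ s, Commute c (u s))
    (hxy : SameAverages N c c x y) :
    lastAccumulationTime N c ε K u C x = lastAccumulationTime N c ε K u C y := by
  have hiff (s : ℝ) : AccumulatesOn N c ε K (u s • x) ↔ AccumulatesOn N c ε K (u s • y) :=
    ⟨fun h => h.congr (hxy.smul (hcu s) (hcu s)), fun h => h.congr (hxy.symm.smul (hcu s) (hcu s))⟩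
  simp only [lastAccumulationTime, hiff]

variable [TopologicalSpace G] [IsTopologicalGroup G] [ContinuousSMul G X]

theorem isCompact_accumulationTimes (hu : Continuous u) (hcu : ∀ s, Commute c (u s))
    (hC : IsCompact C) (x : X) : IsCompact {s ∈ C | AccumulatesOn N c ε K (u s • x)} := by
  refine hC.inter_right (isClosed_of_closure_subset fun s hs f hf hfK η hη => ?_)
  obtain ⟨t, ht, htx⟩ := mem_closure_iff_nhds.1 hs _
    (eventually_forall_abs_orbitAverage_addChar_sub_lt hu hcu f s (half_pos hη))
  filter_upwards [htx f hf hfK _ (half_pos hη)] with k hk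
  linarith [(abs_lt.1 (ht (N k) x)).2]

theorem lastAccumulationTime_mem (hu : Continuous u) (hcu : ∀ s, Commute c (u s))
    (hC : IsCompact C) (hx : ∃ s ∈ C, AccumulatesOn N c ε K (u s • x)) :
    lastAccumulationTime N c ε K u C x ∈ C ∧
      AccumulatesOn N c ε K (u (lastAccumulationTime N c ε K u C x) • x) :=
  (isCompact_accumulationTimes hu hcu hC x).sSup_mem hx

variable [MeasurableSpace X] [BorelSpace X] [LocallyCompactSpace X] [SecondCountableTopology X]
  [T2Space X]

theorem measurableSet_exists_accumulatesOn (hu : Continuous u) (hcu : ∀ s, Commute c (u s))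
    (hC : IsCompact C) : MeasurableSet {x : X | ∃ s ∈ C, AccumulatesOn N c ε K (u s • x)} := by
  obtain ⟨D, hDS, hDc, hD⟩ := exists_countable_uniformly_dense
    {f : C_c(X, ℝ) | 0 ≤ (f : X → ℝ) ∧ ∀ y ∈ K, 1 ≤ f y}
  have := hDc.to_subtype
  have hiff (x : X) : AccumulatesOn N c ε K x ↔ ∀ f : D, ∀ η > 0, ∀ᶠ k in atTop,
      -η ≤ orbitAverage c f.1 (N k) x - (1 - ε) := by
    refine ⟨fun h f => h f.1 (hDS f.2).1 (hDS f.2).2, fun h f hf hfK η hη => ?_⟩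
    obtain ⟨g, hg, hfg⟩ := hD f ⟨hf, hfK⟩ (η / 2) (half_pos hη)
    filter_upwards [h ⟨g, hg⟩ (η / 2) (half_pos hη)] with k hk
    have := abs_le.1 (abs_orbitAverage_sub_orbitAverage_le (b := c) (y := x)
      (fun k => (hfg (c ^ k • x)).le) (N k))
    linarith
  simp only [hiff]
  refine measurableSet_exists_mem_isCompact hC (fun f k s => ?_) fun f s η hη => ?_
  · exact (((continuous_orbitAverage c f.1 (N k)).comp (continuous_const_smul _)).sub
      continuous_const).measurable
  · filter_upwards [eventually_forall_abs_orbitAverage_addChar_sub_lt hu hcu f.1 s hη] with t ht k x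
    simpa using ht (N k) x

theorem measurable_lastAccumulationTime (hu : Continuous u) (hcu : ∀ s, Commute c (u s))
    (hC : IsCompact C) :
    Measurable (lastAccumulationTime N c ε K u C : X → ℝ) := by
  refine measurable_of_Ici fun a => ?_
  have hpre : lastAccumulationTime N c ε K u C ⁻¹' Ici a =
      {x : X | ∃ s ∈ C ∩ Ici a, AccumulatesOn N c ε K (u s • x)} ∪
        {x : X | ∃ s ∈ C, AccumulatesOn N c ε K (u s • x)}ᶜ ∩ {_x | a ≤ 0} := by
    ext x
    simp only [mem_preimage, mem_Ici, mem_union, mem_inter_iff, mem_compl_iff, mem_ofPred_eq]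
    by_cases hx : ∃ s ∈ C, AccumulatesOn N c ε K (u s • x)
    · have hmem := lastAccumulationTime_mem hu hcu hC hx
      have hbdd := (isCompact_accumulationTimes (N := N) (ε := ε) (K := K) hu hcu hC x).bddAbove
      refine ⟨fun ha => .inl ⟨_, ⟨hmem.1, ha⟩, hmem.2⟩, ?_⟩
      rintro (⟨s, hs, hsx⟩ | h)
      · exact hs.2.trans (le_csSup hbdd ⟨hs.1, hsx⟩)
      · exact absurd hx h.1
    · have hempty : {s ∈ C | AccumulatesOn N c ε K (u s • x)} = ∅ :=
        eq_empty_of_forall_notMem fun s hs => hx ⟨s, hs⟩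
      have hzero : lastAccumulationTime N c ε K u C x = 0 := by
        rw [lastAccumulationTime, hempty, Real.sSup_empty]
      rw [hzero]
      exact ⟨fun ha => .inr ⟨hx, ha⟩,
        Or.rec (fun ⟨s, hs, hsx⟩ => absurd ⟨s, hs.1, hsx⟩ hx) And.right⟩
  rw [hpre]
  exact (measurableSet_exists_accumulatesOn hu hcu (hC.inter_right isClosed_Ici)).union
    ((measurableSet_exists_accumulatesOn hu hcu hC).compl.inter (.const _))

theorem measurable_lastAccumulationTime_smul (hu : Continuous u) (hcu : ∀ s, Commute c (u s))
    (hC : IsCompact C) :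
    Measurable fun x : X => u (lastAccumulationTime N c ε K u C x) • x := by
  have hcont : Continuous fun p : ℝ × X => u p.1 • p.2 := by fun_prop
  exact hcont.measurable.comp ((measurable_lastAccumulationTime hu hcu hC).prodMk measurable_id)

theorem mul_measure_le_measure_lastAccumulationTime {μ : Measure X} [IsFiniteMeasure μ]
    (hc : MeasurePreserving (c • · : X → X) μ μ) (hN : Tendsto N atTop atTop) (hu : Continuous u)
    (hcu : ∀ s, Commute c (u s)) (hC : IsCompact C) (hK : IsCompact K) :
    ENNReal.ofReal (1 - ε) * μ {x | ∃ s ∈ C, AccumulatesOn N c ε K (u s • x)} ≤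
      μ ({x | ∃ s ∈ C, AccumulatesOn N c ε K (u s • x)} ∩
        {x | u (lastAccumulationTime N c ε K u C x) • x ∈ K}) := by
  let D : Set X := {x | ∃ s ∈ C, AccumulatesOn N c ε K (u s • x)}
  let Φ (x : X) : X := u (lastAccumulationTime N c ε K u C x) • x
  have hD : MeasurableSet D := measurableSet_exists_accumulatesOn hu hcu hC
  have hΦ : Measurable Φ := measurable_lastAccumulationTime_smul hu hcu hC
  have hcD : (c • ·) ⁻¹' D = D := by
    have hiff (s : ℝ) (x : X) :
        AccumulatesOn N c ε K (u s • c • x) ↔ AccumulatesOn N c ε K (u s • x) :=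
      have h := (SameAverages.smul_self hN c x).smul (hcu s) (hcu s)
      ⟨fun hs => hs.congr h, fun hs => hs.congr h.symm⟩
    ext x
    simp only [D, mem_preimage, mem_ofPred_eq, hiff]
  have hcΦ : Function.Semiconj Φ (c • ·) (c • ·) := fun x => by
    have hσ := lastAccumulationTime_congr (ε := ε) (K := K) (C := C) hcu
      (SameAverages.smul_self hN c x)
    simp only [Φ, hσ, smul_smul, (hcu _).eq]
  have hmp : MeasurePreserving (c • · : X → X) (μ.restrict D) (μ.restrict D) := by
    simpa only [hcD] using hc.restrict_preimage hD
  have hν : MeasurePreserving (c • · : X → X) ((μ.restrict D).map Φ) ((μ.restrict D).map Φ) :=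
    (hΦ.measurePreserving _).of_semiconj hmp hcΦ (measurable_const_smul c)
  have hacc : ∀ᵐ y ∂(μ.restrict D).map Φ, AccumulatesOn N c ε K y := by
    have hmeas : MeasurableSet {y : X | AccumulatesOn N c ε K y} := by
      simpa using measurableSet_exists_accumulatesOn (ε := ε) (K := K) (X := X) hu hcu
        (isCompact_singleton (x := (0 : ℝ)))
    exact (ae_map_iff hΦ.aemeasurable hmeas).2
      (ae_restrict_of_forall_mem hD fun x hx => (lastAccumulationTime_mem hu hcu hC hx).2)
  have hle := mul_measure_univ_le_of_ae_accumulatesOn hν hN hK hacc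
  rw [Measure.map_apply hΦ .univ, Measure.map_apply hΦ hK.measurableSet, preimage_univ,
    Measure.restrict_apply_univ, Measure.restrict_apply (hΦ hK.measurableSet), inter_comm] at hle
  exact hle

end LastAccumulationTime

section Parallelogram

variable {G X : Type*} [Group G] [MulAction G X] [MeasurableSpace X]

/-- A quantitative form of recurrence: every set of sufficiently large measure is returned to by
some element of `S`. -/
def HasReturns (μ : Measure X) (S : Set G) : Prop :=
  ∃ a < 1, ∀ Z, MeasurableSet Z → a < μ Z → ∃ z ∈ Z, ∃ g ∈ S, g • z ∈ Z

theorem HasReturns.exists_of_ae {μ : Measure X} [IsProbabilityMeasure μ] {S : Set G}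
    (h : HasReturns μ S) {p : X → Prop} (hp : ∀ᵐ x ∂μ, p x) : ∃ x, ∃ g ∈ S, p x ∧ p (g • x) := by
  obtain ⟨a, ha, hreturn⟩ := h
  obtain ⟨Z, hZ, hZm, hZp⟩ := hp.exists_measurable_mem
  obtain ⟨z, hz, g, hg, hgz⟩ := hreturn Z hZm (((mem_ae_iff_prob_eq_one hZm).1 hZ).symm ▸ ha)
  exact ⟨z, g, hg, hZp z hz, hZp _ hgz⟩

theorem exists_isCompact_exhaustion_of_invariant [TopologicalSpace X] [BorelSpace X] [T2Space X]
    [LocallyCompactSpace X] [SecondCountableTopology X] [TopologicalSpace G] [ContinuousMul G]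
    [ContinuousSMul G X] [WeaklyLocallyCompactSpace G] [SigmaCompactSpace G] {μ : Measure X}
    [IsFiniteMeasure μ] {Y : Set X} (hY : MeasurableSet Y) (hYμ : ∀ᵐ x ∂μ, x ∈ Y)
    (hYG : ∀ g : G, ∀ x ∈ Y, g • x ∈ Y) :
    ∃ K : ℕ → Set X, Monotone K ∧ (∀ m, IsCompact (K m)) ∧ (∀ m, K m ⊆ Y) ∧
      Tendsto (fun m => μ (K m)ᶜ) atTop (𝓝 0) ∧
      ∀ g : G, ∀ m, ∃ m', ∀ x ∈ K m, g • x ∈ K m' := by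
  choose L hLY hL hLμ using fun m : ℕ => hY.exists_isCompact_sdiff_lt (measure_ne_top μ Y)
    (show ((m + 1 : ℕ) : ℝ≥0∞)⁻¹ ≠ 0 by simp)
  let E := CompactExhaustion.choice G
  have hmono : Monotone fun m => E m • accumulate L m := fun m m' h =>
    smul_subset_smul (E.subset h) (monotone_accumulate h)
  refine ⟨_, hmono, fun m => (E.isCompact m).smul_set (isCompact_accumulate hL m), fun m => ?_, ?_,
    fun g m => ?_⟩
  · rintro _ ⟨g, -, x, hx, rfl⟩
    obtain ⟨i, -, hi⟩ := mem_accumulate.1 hx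
    exact hYG g x (hLY i hi)
  · have hzero : Tendsto (fun m : ℕ => ((m + 1 : ℕ) : ℝ≥0∞)⁻¹) atTop (𝓝 0) :=
      ENNReal.tendsto_inv_nat_nhds_zero.comp (tendsto_add_atTop_nat 1)
    obtain ⟨m₀, hm₀⟩ := E.exists_mem 1
    refine tendsto_of_tendsto_of_tendsto_of_le_of_le' tendsto_const_nhds hzero
      (.of_forall fun _ => zero_le) ?_
    filter_upwards [eventually_ge_atTop m₀] with m hm
    refine (measure_mono_ae ?_).trans (hLμ m).le
    filter_upwards [hYμ] with x hxY hxK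
    refine ⟨hxY, fun hxL => hxK ⟨1, E.subset hm hm₀, x, subset_accumulate hxL, one_smul G x⟩⟩
  · obtain ⟨m', hm'⟩ := E.exists_superset_of_isCompact ((E.isCompact m).smul g)
    refine ⟨max m m', ?_⟩
    rintro _ ⟨h, hh, x, hx, rfl⟩
    exact ⟨g * h, E.subset (le_max_right _ _) (hm' (smul_mem_smul_set hh)), x,
      monotone_accumulate (le_max_left _ _) hx, mul_smul g h x⟩

theorem exists_pos_lt_ofReal_one_sub_mul_self {a : ℝ≥0∞} (ha : a < 1) :
    ∃ ε > 0, a < ENNReal.ofReal (1 - ε) * ENNReal.ofReal (1 - ε) := by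
  have hcont : Tendsto (fun ε : ℝ => ENNReal.ofReal (1 - ε)) (𝓝[>] 0) (𝓝 1) := by
    have h : Continuous fun ε : ℝ => ENNReal.ofReal (1 - ε) :=
      ENNReal.continuous_ofReal.comp (continuous_sub_left 1)
    simpa using (h.tendsto 0).mono_left (nhdsWithin_le_nhds (s := Ioi 0))
  have hsq := ENNReal.Tendsto.mul hcont (by simp) hcont (by simp)
  rw [one_mul] at hsq
  obtain ⟨ε, h, hε⟩ := ((hsq.eventually_const_lt ha).and eventually_mem_nhdsWithin).exists
  exact ⟨ε, hε, h⟩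

theorem exists_monotone_isCompact_iUnion_eq {α : Type*} [PseudoMetricSpace α] [ProperSpace α]
    {U : Set α} (hU : IsOpen U) :
    ∃ C : ℕ → Set α, Monotone C ∧ (∀ m, IsCompact (C m)) ∧ ⋃ m, C m = U := by
  rcases isEmpty_or_nonempty α with h | ⟨⟨x⟩⟩
  · exact ⟨fun _ => ∅, monotone_const, fun _ => isCompact_empty, Subsingleton.elim _ _⟩
  obtain ⟨F, hF, -, hFU, hFmono⟩ := hU.exists_iUnion_isClosed
  have hball : Monotone fun m : ℕ => Metric.closedBall x m := fun m m' h =>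
    Metric.closedBall_subset_closedBall (by exact_mod_cast h)
  refine ⟨fun m => F m ∩ Metric.closedBall x m, fun m m' h => inter_subset_inter (hFmono h)
    (hball h), fun m => (isCompact_closedBall x _).inter_left (hF m), ?_⟩
  rw [iUnion_inter_of_monotone hFmono hball, hFU, Metric.iUnion_closedBall_nat, inter_univ]

variable [TopologicalSpace X] [BorelSpace X] [T2Space X] [LocallyCompactSpace X]
  [SecondCountableTopology X] [TopologicalSpace G] [IsTopologicalGroup G] [ContinuousSMul G X]
  {μ : Measure X} [IsProbabilityMeasure μ] {H : Subgroup G} {c : G} {u : AddChar ℝ G}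

theorem IsErgodicAction.exists_lt_measure_accumulatesOn (hμ : IsErgodicAction H μ)
    (hcH : ∀ h ∈ H, Commute c h) (hu : Continuous u) (hcu : ∀ s, Commute c (u s))
    (hHu : Rescales H u) (hU : HasReturns μ (u '' {0}ᶜ)) {N : ℕ → ℕ} {ε : ℝ} {K : ℕ → Set X}
    (hKmono : Monotone K) (hKH : ∀ h ∈ H, ∀ m, ∃ m', ∀ x ∈ K m, h • x ∈ K m')
    (hacc : ∀ᵐ x ∂μ, ∃ m, AccumulatesOn N c ε (K m) x) {a : ℝ≥0∞} (ha : a < 1) :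
    ∃ C : Set ℝ, IsCompact C ∧ 0 ∉ C ∧
      ∃ m, a < μ {x | ∃ s ∈ C, AccumulatesOn N c ε (K m) (u s • x)} := by
  obtain ⟨C, hCmono, hC, hCunion⟩ := exists_monotone_isCompact_iUnion_eq
    (isOpen_compl_singleton (x := (0 : ℝ)))
  have hCmem {s : ℝ} : s ≠ 0 ↔ ∃ m, s ∈ C m := by
    rw [← mem_iUnion, hCunion, mem_compl_singleton_iff]
  let D (m : ℕ) : Set X := {x | ∃ s ∈ C m, AccumulatesOn N c ε (K m) (u s • x)}
  have hDmono : Monotone D := by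
    rintro m m' h x ⟨s, hs, hsx⟩
    exact ⟨s, hCmono h hs, hsx.mono (hKmono h)⟩
  have hDunion (x : X) :
      x ∈ ⋃ m, D m ↔ ∃ s ≠ 0, ∃ m, AccumulatesOn N c ε (K m) (u s • x) := by
    simp only [mem_iUnion]
    constructor
    · rintro ⟨m, s, hs, hsx⟩
      exact ⟨s, hCmem.2 ⟨m, hs⟩, m, hsx⟩
    · rintro ⟨s, hs, m, hsx⟩
      obtain ⟨i, hi⟩ := hCmem.1 hs
      exact ⟨max m i, s, hCmono (le_max_right _ _) hi, hsx.mono (hKmono (le_max_left _ _))⟩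
  have hDH : ∀ h ∈ H, ∀ x ∈ ⋃ m, D m, h • x ∈ ⋃ m, D m := by
    simp only [hDunion]
    rintro h hh x ⟨s, hs, m, hsx⟩
    obtain ⟨l, hl, hlu⟩ := hHu.exists_ratio h hh
    obtain ⟨m', hm'⟩ := hKH h hh m
    refine ⟨l * s, mul_ne_zero hl.ne' hs, m', ?_⟩
    simpa [← hlu, smul_smul] using hsx.smul (hcH h hh) hm'
  have hDm (m : ℕ) : MeasurableSet (D m) := measurableSet_exists_accumulatesOn hu hcu (hC m)
  have hone : μ (⋃ m, D m) = 1 := by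
    refine (hμ.measure_eq_zero_or_one _ (.iUnion hDm) fun h =>
      preimage_smul_eq_of_forall_mem hDH).resolve_left fun hzero => ?_
    obtain ⟨x, _, ⟨s, hs, rfl⟩, ⟨hx, -⟩, -, hsx⟩ :=
      hU.exists_of_ae ((measure_eq_zero_iff_ae_notMem.1 hzero).and hacc)
    exact hx ((hDunion x).2 ⟨s, hs, hsx⟩)
  obtain ⟨m, hm⟩ := ((tendsto_measure_iUnion_atTop hDmono).eventually_const_lt (hone ▸ ha)).exists
  exact ⟨C m, hC m, fun h => hCmem.2 ⟨m, h⟩ rfl, m, hm⟩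

/-- The element `v` does not change the last time at which the orbit of `x` accumulates on `K`, so
flowing by that time along `u` brings both `x` and `v • x` back to `K`. -/
theorem IsErgodicAction.exists_parallelogram (hμ : IsErgodicAction H μ) (hc : c ∈ H)
    [WeaklyLocallyCompactSpace H] [SigmaCompactSpace H]
    (hcH : ∀ h ∈ H, Commute c h) (hu : Continuous u) (hcu : ∀ s, Commute c (u s))
    (hHu : Rescales H u) (hU : HasReturns μ (u '' {0}ᶜ)) {V : Set G}
    (hV : ∀ v ∈ V, Tendsto (fun n : ℕ => c ^ n * v * (c ^ n)⁻¹) atTop (𝓝 1))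
    (hVμ : HasReturns μ V) {Y : Set X} (hY : MeasurableSet Y) (hYμ : ∀ᵐ x ∂μ, x ∈ Y)
    (hYH : ∀ h ∈ H, ∀ x ∈ Y, h • x ∈ Y) :
    ∃ x ∈ Y, ∃ s ≠ 0, ∃ v ∈ V, u s • x ∈ Y ∧ v • x ∈ Y ∧ u s • v • x ∈ Y := by
  obtain ⟨K, hKmono, hK, hKY, hKμ, hKH⟩ :=
    exists_isCompact_exhaustion_of_invariant (G := H) (μ := μ) hY hYμ fun h => hYH h h.2
  obtain ⟨N, hN, -, hlim⟩ := exists_ae_tendsto_orbitAverage μ (hμ.measurePreserving c hc)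
  obtain ⟨a, ha, hreturn⟩ := hVμ
  obtain ⟨ε, hε, haε⟩ := exists_pos_lt_ofReal_one_sub_mul_self ha
  have hacc := ae_exists_accumulatesOn (hμ.measurePreserving c hc) hN hlim hε
    (fun m => (hK m).measurableSet) hKμ
  obtain ⟨C, hC, hC0, m, hm⟩ := hμ.exists_lt_measure_accumulatesOn hcH hu hcu hHu hU hKmono
    (fun h hh => hKH ⟨h, hh⟩) hacc (a := ENNReal.ofReal (1 - ε)) (by simpa)
  let D : Set X := {x | ∃ s ∈ C, AccumulatesOn N c ε (K m) (u s • x)}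
  let σ : X → ℝ := lastAccumulationTime N c ε (K m) u C
  have hlarge : a < μ (D ∩ {x | u (σ x) • x ∈ K m} ∩ Y) := by
    have hYc : μ Yᶜ = 0 := hYμ
    rw [measure_inter_conull hYc]
    calc a < ENNReal.ofReal (1 - ε) * ENNReal.ofReal (1 - ε) := haε
      _ ≤ ENNReal.ofReal (1 - ε) * μ D := by gcongr
      _ ≤ _ := mul_measure_le_measure_lastAccumulationTime (hμ.measurePreserving c hc) hN hu hcu hC
        (hK m)
  have hmeas : MeasurableSet (D ∩ {x | u (σ x) • x ∈ K m} ∩ Y) :=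
    ((measurableSet_exists_accumulatesOn hu hcu hC).inter
      (measurable_lastAccumulationTime_smul hu hcu hC (hK m).measurableSet)).inter hY
  obtain ⟨x, ⟨⟨hxD, hxK⟩, hxY⟩, v, hv, ⟨-, hvxK⟩, hvxY⟩ := hreturn _ hmeas hlarge
  have hσ : σ (v • x) = σ x :=
    lastAccumulationTime_congr hcu (SameAverages.of_contracted hN (hV v hv) x)
  have hσC : σ x ∈ C := (lastAccumulationTime_mem hu hcu hC hxD).1
  rw [mem_ofPred_eq, hσ] at hvxK
  exact ⟨x, hxY, σ x, fun h => hC0 (h ▸ hσC), v, hv, hKY m hxK, hvxY, hKY m hvxK⟩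

theorem IsErgodicAction.measurePreserving_smul_of_hasReturns (hμ : IsErgodicAction H μ)
    [WeaklyLocallyCompactSpace H] [SigmaCompactSpace H] (hH : ∀ g ∈ H, ∀ h ∈ H, Commute g h)
    {b : G} (hb : b ∈ H) (hc : c ∈ H) {v : ℝ → G} {w : AddChar ℝ G} (hu : Continuous u)
    (hw : Continuous w) (hHu : Rescales H u) (hHw : Rescales H w)
    (hcu : ∀ s, Commute c (u s)) (hbw : ∀ s, Commute b (w s))
    (hbu : ∀ s, Tendsto (fun n : ℕ => b⁻¹ ^ n * u s * (b⁻¹ ^ n)⁻¹) atTop (𝓝 1))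
    (hbv : ∀ t, Tendsto (fun n : ℕ => b ^ n * v t * (b ^ n)⁻¹) atTop (𝓝 1))
    (hcv : ∀ t, Tendsto (fun n : ℕ => c ^ n * v t * (c ^ n)⁻¹) atTop (𝓝 1))
    (hvu : ∀ s t, v t * u s = w (s * t) * u s * v t)
    (hU : HasReturns μ (u '' {0}ᶜ)) (hV : HasReturns μ (v '' {0}ᶜ)) (s : ℝ) :
    MeasurePreserving (w s • · : X → X) μ μ := by
  obtain ⟨N, hN, hback, -⟩ := exists_ae_tendsto_orbitAverage μ (hμ.measurePreserving b hb)
  rcases hμ.ae_mem_averageStabilizer_or_ae_notMem_periodicSet (N := N) hw hbw hHw (hH b hb)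
    with hall | htriv
  · exact measurePreserving_smul_of_mem_averageStabilizer hN (hμ.measurePreserving b hb)
      (hall.mono fun x hx => hx s)
  exfalso
  let Y : Set X := {x | SameAverages N b b⁻¹ x x} ∩ (periodicSet N b w)ᶜ
  have hY : MeasurableSet Y :=
    (measurableSet_sameAverages_pair N b b⁻¹).inter (measurableSet_periodicSet hw hbw).compl
  have hYH : ∀ h ∈ H, ∀ x ∈ Y, h • x ∈ Y := fun h hh x hx =>
    ⟨hx.1.smul (hH b hb h hh) (hH b hb h hh).inv_left, fun hhx => hx.2 <| by
      simpa using smul_mem_periodicSet hHw (inv_mem hh) (hH b hb h hh).inv_right hhx⟩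
  obtain ⟨x, hx, s, hs, _, ⟨t, ht, rfl⟩, hux, hvx, huvx⟩ := hμ.exists_parallelogram hc (hH c hc)
    hu hcu hHu hU (forall_mem_image.2 fun t _ => hcv t) hV hY (hback.and htriv) hYH
  exact huvx.2 ⟨s * t, mul_ne_zero hs ht, mem_averageStabilizer_of_parallelogram hN (hbu s)
    (hbv t) (hbw _) (hvu s t) hx.1 hux.1 hvx.1 huvx.1⟩

end Parallelogram

section ShannonEntropy

theorem sum_negMulLog_le_sum_mul_log_card_add_one {ι : Type*} (S : Finset ι) {q : ι → ℝ}
    (hq : ∀ i ∈ S, 0 ≤ q i) :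
    ∑ i ∈ S, Real.negMulLog (q i) ≤ (∑ i ∈ S, q i) * Real.log S.card + 1 := by
  rcases S.eq_empty_or_nonempty with rfl | hS
  · simp
  have hc : (0 : ℝ) < S.card := by exact_mod_cast hS.card_pos
  have hJensen := Real.concaveOn_negMulLog.le_map_sum (t := S) (w := fun _ => (S.card : ℝ)⁻¹)
    (p := q) (fun _ _ => by positivity) (by simp [hc.ne']) hq
  simp only [smul_eq_mul, ← Finset.mul_sum] at hJensen
  have hQ0 : 0 ≤ ∑ i ∈ S, q i := Finset.sum_nonneg hq
  set Q := ∑ i ∈ S, q i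
  rw [Real.negMulLog_mul, inv_mul_le_iff₀ hc, Real.negMulLog, Real.log_inv] at hJensen
  have hQ1 : Real.negMulLog Q ≤ 1 - Q := Real.negMulLog_le_one_sub_self hQ0
  calc ∑ i ∈ S, Real.negMulLog (q i) ≤ _ := hJensen
    _ = Q * Real.log S.card + Real.negMulLog Q := by field_simp
    _ ≤ Q * Real.log S.card + 1 := by linarith

theorem sum_negMulLog_le_of_card_le {ι : Type*} [Fintype ι] [DecidableEq ι] {q : ι → ℝ}
    (hq : ∀ i, 0 ≤ q i) (hq1 : ∑ i, q i ≤ 1) {S : Finset ι} {L δ : ℝ}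
    (hL : Real.log S.card ≤ L) (hδ : ∑ i ∈ Sᶜ, q i ≤ δ) :
    ∑ i, Real.negMulLog (q i) ≤ L + δ * Real.log (Fintype.card ι) + 2 := by
  have hle : ∑ i ∈ S, q i ≤ 1 :=
    (Finset.sum_le_univ_sum_of_nonneg hq).trans hq1
  have hlog : Real.log (Sᶜ.card : ℝ) ≤ Real.log (Fintype.card ι) := by
    rcases Sᶜ.eq_empty_or_nonempty with h | h
    · simp [h, Real.log_natCast_nonneg]
    · exact Real.log_le_log (by exact_mod_cast h.card_pos) (by exact_mod_cast Finset.card_le_univ _)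
  have hS := sum_negMulLog_le_sum_mul_log_card_add_one S fun i _ => hq i
  have hSc := sum_negMulLog_le_sum_mul_log_card_add_one Sᶜ fun i _ => hq i
  have hlogS : (∑ i ∈ S, q i) * Real.log S.card ≤ 1 * L :=
    mul_le_mul hle hL (Real.log_natCast_nonneg _) zero_le_one
  have hlogSc : (∑ i ∈ Sᶜ, q i) * Real.log Sᶜ.card ≤ δ * Real.log (Fintype.card ι) :=
    mul_le_mul hδ hlog (Real.log_natCast_nonneg _) ((Finset.sum_nonneg fun i _ => hq i).trans hδ)
  rw [← Finset.sum_add_sum_compl S]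
  linarith

end ShannonEntropy

section NameCounting

open scoped NNReal

variable {X : Type*} {T : X → X} {p c : ℕ} {P : Fin p → Set X} {E : Set X} {t : ℝ≥0}

theorem refinedPartition_succ_cons {m : ℕ} (i : Fin p) (f : Fin m → Fin p) :
    refinedPartition T P (m + 1) (Fin.cons i f) = P i ∩ T ⁻¹' refinedPartition T P m f := by
  ext y
  simp [refinedPartition, Fin.forall_fin_succ]

theorem pairwise_disjoint_refinedPartition (hP : Pairwise (Function.onFun Disjoint P)) (m : ℕ) :
    Pairwise (Function.onFun Disjoint (refinedPartition T P m)) := fun f g hfg => by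
  obtain ⟨k, hk⟩ := Function.ne_iff.1 hfg
  exact (hP hk).preimage _ |>.mono (iInter_subset _ k) (iInter_subset _ k)

/-- The number of times `k < m` at which the orbit of `y` under `T` is outside `E`. -/
noncomputable def exitCount (T : X → X) (E : Set X) (m : ℕ) (y : X) : ℕ :=
  birkhoffSum T (Eᶜ.indicator 1) m y

/-- The `P`-names of length `m` realized in `W`, counted with weight `t ^ k` when `k` is the least
number of exits from `E` among the points of `W` with that name (for `t ≤ 1`). -/
noncomputable def weightedNameCount (T : X → X) (P : Fin p → Set X) (E : Set X) (t : ℝ≥0) (m : ℕ)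
    (W : Set X) : ℝ≥0∞ :=
  ∑ f, ⨆ y ∈ W ∩ refinedPartition T P m f, (t : ℝ≥0∞) ^ exitCount T E m y

theorem weightedNameCount_le_sum {m : ℕ} {ι : Type*} [Fintype ι] {W : Set X} {V : ι → Set X}
    (hV : W ⊆ ⋃ q, V q) :
    weightedNameCount T P E t m W ≤ ∑ q, weightedNameCount T P E t m (V q) := by
  unfold weightedNameCount
  rw [Finset.sum_comm]
  refine Finset.sum_le_sum fun f _ => iSup₂_le fun y hy => ?_
  obtain ⟨q, hq⟩ := mem_iUnion.1 (hV hy.1)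
  refine le_trans ?_ (Finset.single_le_sum (fun _ _ => zero_le) (Finset.mem_univ q))
  exact le_iSup₂_of_le y ⟨hq, hy.2⟩ le_rfl

theorem weightedNameCount_succ_le (m : ℕ) (W : Set X) :
    weightedNameCount T P E t (m + 1) W ≤
      ∑ i, (weightedNameCount T P E t m (T '' (W ∩ E ∩ P i)) +
        t * weightedNameCount T P E t m (T '' (W ∩ P i))) := by
  unfold weightedNameCount
  rw [← (Fin.consEquiv fun _ => Fin p).sum_comp, Fintype.sum_prod_type]
  refine Finset.sum_le_sum fun i _ => ?_
  rw [Finset.mul_sum, ← Finset.sum_add_distrib]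
  refine Finset.sum_le_sum fun f _ => iSup₂_le fun y hy => ?_
  obtain ⟨hyW, hyi, hyf⟩ : y ∈ W ∩ (P i ∩ T ⁻¹' refinedPartition T P m f) := by
    rwa [← refinedPartition_succ_cons]
  rw [exitCount, birkhoffSum_succ', pow_add]
  by_cases hyE : y ∈ E
  · refine le_add_right ?_
    rw [indicator_of_notMem (by simpa using hyE), pow_zero, one_mul]
    exact le_iSup₂_of_le (T y) ⟨mem_image_of_mem T ⟨⟨hyW, hyE⟩, hyi⟩, hyf⟩ le_rfl
  · refine le_add_left (mul_le_mul' (by simp [hyE]) ?_)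
    exact le_iSup₂_of_le (T y) ⟨mem_image_of_mem T ⟨hyW, hyi⟩, hyf⟩ le_rfl

theorem card_mul_pow_le_weightedNameCount (ht : t ≤ 1) {m k : ℕ} {W : Set X}
    {S : Finset (Fin m → Fin p)}
    (hS : ∀ f ∈ S, ∃ y ∈ W ∩ refinedPartition T P m f, exitCount T E m y ≤ k) :
    S.card * (t : ℝ≥0∞) ^ k ≤ weightedNameCount T P E t m W := by
  rw [← nsmul_eq_mul, ← Finset.sum_const]
  refine (Finset.sum_le_sum fun f hf => ?_).trans
    (Finset.sum_le_sum_of_subset (Finset.subset_univ S))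
  obtain ⟨y, hy, hyk⟩ := hS f hf
  exact le_iSup₂_of_le y hy (pow_le_pow_of_le_one zero_le (by exact_mod_cast ht) hyk)

/-- A class of pieces on which the growth of the number of `P`-names under `T` is controlled by the
visits to `E`: a piece is contained in one atom of `P` inside `E`, and `T` maps the part of a piece
in `E` to one piece, and the whole of it to at most `c` pieces. -/
structure ControlsNames (T : X → X) (P : Fin p → Set X) (E : Set X) (c : ℕ) (𝒲 : Set (Set X)) :
    Prop where
  isLowerSet : IsLowerSet 𝒲
  image_inter_mem : ∀ W ∈ 𝒲, T '' (W ∩ E) ∈ 𝒲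
  eq_of_mem : ∀ W ∈ 𝒲, ∀ y ∈ W ∩ E, ∀ y' ∈ W ∩ E, ∀ i j, y ∈ P i → y' ∈ P j → i = j
  exists_cover : ∀ W ∈ 𝒲, ∃ V : Fin c → Set X, W ⊆ ⋃ q, V q ∧ ∀ q, T '' V q ∈ 𝒲

namespace ControlsNames

variable {𝒲 : Set (Set X)} {W : Set X}

theorem sum_weightedNameCount_image_inter_le (h𝒲 : ControlsNames T P E c 𝒲) (hW : W ∈ 𝒲) {m : ℕ}
    {B : ℝ≥0∞} (hB : ∀ W ∈ 𝒲, weightedNameCount T P E t m W ≤ B) :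
    ∑ i, weightedNameCount T P E t m (T '' (W ∩ E ∩ P i)) ≤ B := by
  by_cases hne : ∃ i, (W ∩ E ∩ P i).Nonempty
  · obtain ⟨i, y, hyW, hyi⟩ := hne
    rw [Finset.sum_eq_single i]
    · exact hB _ (h𝒲.isLowerSet (image_mono inter_subset_left) (h𝒲.image_inter_mem W hW))
    · intro j _ hji
      have hempty : W ∩ E ∩ P j = ∅ := eq_empty_of_forall_notMem fun z hz =>
        hji (h𝒲.eq_of_mem W hW z hz.1 y hyW j i hz.2 hyi)
      simp [hempty, weightedNameCount]
    · simp
  · push Not at hne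
    simp [hne, weightedNameCount]

theorem weightedNameCount_le_pow (h𝒲 : ControlsNames T P E c 𝒲) (m : ℕ) :
    ∀ W ∈ 𝒲, weightedNameCount T P E t m W ≤ (1 + t * (p * c)) ^ m := by
  induction m with
  | zero =>
    intro W _
    simp [weightedNameCount, exitCount]
  | succ m ih =>
    intro W hW
    obtain ⟨V, hWV, hV⟩ := h𝒲.exists_cover W hW
    have hcover (i : Fin p) :
        weightedNameCount T P E t m (T '' (W ∩ P i)) ≤ c * (1 + t * (p * c)) ^ m := by
      have hsub : T '' (W ∩ P i) ⊆ ⋃ q, T '' V q := by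
        rw [← image_iUnion]
        exact image_mono (inter_subset_left.trans hWV)
      refine (weightedNameCount_le_sum hsub).trans ?_
      simpa using Finset.sum_le_sum fun q (_ : q ∈ Finset.univ) => ih _ (hV q)
    calc weightedNameCount T P E t (m + 1) W
        ≤ ∑ i, weightedNameCount T P E t m (T '' (W ∩ E ∩ P i)) +
          ∑ i, t * weightedNameCount T P E t m (T '' (W ∩ P i)) := by
          rw [← Finset.sum_add_distrib]
          exact weightedNameCount_succ_le m W
      _ ≤ (1 + t * (p * c)) ^ m + ∑ _i : Fin p, (t : ℝ≥0∞) * (c * (1 + t * (p * c)) ^ m) :=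
          add_le_add (h𝒲.sum_weightedNameCount_image_inter_le hW ih)
            (Finset.sum_le_sum fun i _ => mul_le_mul_right (hcover i) _)
      _ = (1 + t * (p * c)) ^ (m + 1) := by
          simp only [Finset.sum_const, Finset.card_univ, Fintype.card_fin, nsmul_eq_mul]
          ring

theorem log_card_le (h𝒲 : ControlsNames T P E c 𝒲) (ht0 : 0 < t) (ht1 : t ≤ 1) {C : ℕ}
    {V : Fin C → Set X} (hV : ∀ q, V q ∈ 𝒲) {m k : ℕ} {S : Finset (Fin m → Fin p)}
    (hS : ∀ f ∈ S, ∃ y ∈ (⋃ q, V q) ∩ refinedPartition T P m f, exitCount T E m y ≤ k) :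
    Real.log S.card ≤ Real.log C + k * -Real.log t + m * (t * (p * c)) := by
  have hcount : S.card * (t : ℝ≥0∞) ^ k ≤ C * (1 + t * (p * c)) ^ m := by
    refine (card_mul_pow_le_weightedNameCount ht1 hS).trans
      ((weightedNameCount_le_sum subset_rfl).trans ?_)
    simpa using Finset.sum_le_sum fun q (_ : q ∈ Finset.univ) =>
      h𝒲.weightedNameCount_le_pow (t := t) m _ (hV q)
  have hreal : (S.card : ℝ) * (t : ℝ) ^ k ≤ C * (1 + t * (p * c)) ^ m := by exact_mod_cast hcount
  have ht0' : (0 : ℝ) < t := ht0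
  have hlogt : Real.log t ≤ 0 := Real.log_nonpos ht0'.le ht1
  rcases S.eq_empty_or_nonempty with rfl | hne
  · have := Real.log_natCast_nonneg C
    have := neg_nonneg.2 hlogt
    simp only [Finset.card_empty, Nat.cast_zero, Real.log_zero]
    positivity
  have hcard : (0 : ℝ) < S.card := by exact_mod_cast hne.card_pos
  have hC : (C : ℝ) ≠ 0 := fun h => by
    rw [h, zero_mul] at hreal
    exact absurd hreal (not_le.2 (by positivity))
  have hpos : (0 : ℝ) < 1 + t * (p * c) := by positivity
  have hlog := Real.log_le_log (by positivity) hreal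
  rw [Real.log_mul hcard.ne' (by positivity), Real.log_mul hC (by positivity), Real.log_pow,
    Real.log_pow] at hlog
  have hlog1 : (m : ℝ) * Real.log (1 + t * (p * c)) ≤ m * (t * (p * c)) := by
    gcongr
    linarith [Real.log_le_sub_one_of_pos hpos]
  linarith

end ControlsNames

variable [MeasurableSpace X] {μ : Measure X}

theorem lintegral_exitCount (hT : MeasurePreserving T μ μ) (hE : MeasurableSet E) (m : ℕ) :
    ∫⁻ y, exitCount T E m y ∂μ = m * μ Eᶜ := by
  have hterm (k : ℕ) :
      ∫⁻ y, ((Eᶜ.indicator (1 : X → ℕ) (T^[k] y) : ℕ) : ℝ≥0∞) ∂μ = μ Eᶜ := by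
    have hind (y : X) : ((Eᶜ.indicator (1 : X → ℕ) (T^[k] y) : ℕ) : ℝ≥0∞) =
        (T^[k] ⁻¹' Eᶜ).indicator 1 y := by
      by_cases hy : T^[k] y ∈ E <;> simp [hy]
    simp_rw [hind]
    rw [lintegral_indicator_one ((hT.iterate k).measurable hE.compl),
      (hT.iterate k).measure_preimage hE.compl.nullMeasurableSet]
  simp only [exitCount, birkhoffSum, Nat.cast_sum]
  rw [lintegral_finsetSum]
  · simp [hterm]
  · intro k _
    exact (measurable_from_nat.comp ((measurable_one.indicator hE.compl).comp
      (hT.iterate k).measurable) : Measurable fun y =>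
        ((Eᶜ.indicator (1 : X → ℕ) (T^[k] y) : ℕ) : ℝ≥0∞))

theorem measureReal_lt_exitCount_le [IsFiniteMeasure μ] (hT : MeasurePreserving T μ μ)
    (hE : MeasurableSet E) {m : ℕ} (hm : 0 < m) {γ : ℝ} (hγ : 0 < γ) :
    μ.real {y | γ * m < exitCount T E m y} ≤ μ.real Eᶜ / γ := by
  have _ : (0 : ℝ) < m := by exact_mod_cast hm
  have hmeas : Measurable fun y => (exitCount T E m y : ℝ≥0∞) := by
    refine measurable_from_nat.comp (?_ : Measurable fun y => birkhoffSum T (Eᶜ.indicator 1) m y)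
    exact Finset.measurable_fun_sum _ fun k _ =>
      (measurable_one.indicator hE.compl).comp (hT.iterate k).measurable
  have hMarkov := meas_ge_le_lintegral_div hmeas.aemeasurable (μ := μ)
    (ε := ENNReal.ofReal (γ * m)) (by simpa using by positivity) ofReal_ne_top
  rw [lintegral_exitCount hT hE] at hMarkov
  have hsub : {y | γ * m < exitCount T E m y} ⊆
      {y | ENNReal.ofReal (γ * m) ≤ exitCount T E m y} := fun y hy =>
    ENNReal.ofReal_le_of_le_toReal (by simpa using (mem_ofPred.1 hy).le)
  have hle := toReal_mono (div_ne_top (by finiteness) (by simpa using by positivity))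
    ((measure_mono hsub).trans hMarkov)
  rw [toReal_div, toReal_mul, toReal_ofReal (by positivity)] at hle
  refine hle.trans_eq ?_
  simp only [toReal_natCast, measureReal_def]
  field_simp

namespace ControlsNames

theorem sum_negMulLog_le [IsProbabilityMeasure μ] {𝒲 : Set (Set X)} (h𝒲 : ControlsNames T P E c 𝒲)
    (hT : MeasurePreserving T μ μ) (hPm : ∀ i, MeasurableSet (P i))
    (hPd : Pairwise (Function.onFun Disjoint P)) (hE : MeasurableSet E) (ht0 : 0 < t) (ht1 : t ≤ 1)
    {C : ℕ} {V : Fin C → Set X} (hV : ∀ q, V q ∈ 𝒲) {β γ : ℝ} (hγ : 0 < γ) (hEβ : μ.real Eᶜ ≤ β)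
    (hVβ : μ.real (⋃ q, V q)ᶜ ≤ β) {m : ℕ} (hm : 0 < m) :
    ∑ f, Real.negMulLog (μ (refinedPartition T P m f)).toReal ≤ Real.log C + 2 +
      m * (γ * -Real.log t + t * (p * c) + (β + β / γ) * Real.log p) := by
  classical
  have hcell (f : Fin m → Fin p) : MeasurableSet (refinedPartition T P m f) :=
    .iInter fun k => (hT.iterate k).measurable (hPm _)
  have hsum (S : Finset (Fin m → Fin p)) : ∑ f ∈ S, (μ (refinedPartition T P m f)).toReal =
      μ.real (⋃ f ∈ S, refinedPartition T P m f) :=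
    (measureReal_biUnion_finset (fun f _ g _ h => pairwise_disjoint_refinedPartition hPd m h)
      fun f _ => hcell f).symm
  let S : Finset (Fin m → Fin p) := {f | ∃ y ∈ (⋃ q, V q) ∩ refinedPartition T P m f,
    exitCount T E m y ≤ ⌊γ * m⌋₊}
  have hlog := h𝒲.log_card_le ht0 ht1 hV (S := S) fun f hf => (Finset.mem_filter.1 hf).2
  have hfloor : (⌊γ * m⌋₊ : ℝ) * -Real.log t ≤ γ * m * -Real.log t :=
    mul_le_mul_of_nonneg_right (Nat.floor_le (by positivity))
      (neg_nonneg.2 (Real.log_nonpos t.2 ht1))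
  have hbad : ∑ f ∈ Sᶜ, (μ (refinedPartition T P m f)).toReal ≤ β + β / γ := by
    rw [hsum]
    have hsub : ⋃ f ∈ Sᶜ, refinedPartition T P m f ⊆
        (⋃ q, V q)ᶜ ∪ {y | γ * m < exitCount T E m y} := by
      refine iUnion₂_subset fun f hf y hy => or_iff_not_imp_left.2 fun hyV =>
        mem_ofPred.2 (not_le.1 fun hle => ?_)
      exact Finset.mem_compl.1 hf (Finset.mem_filter.2 ⟨Finset.mem_univ f, y,
        ⟨not_not.1 hyV, hy⟩, Nat.le_floor hle⟩)
    calc _ ≤ _ := measureReal_mono hsub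
      _ ≤ _ := measureReal_union_le _ _
      _ ≤ β + β / γ := add_le_add hVβ <| (measureReal_lt_exitCount_le hT hE hm hγ).trans <|
        div_le_div_of_nonneg_right hEβ hγ.le
  have hsum_le := sum_negMulLog_le_of_card_le (fun f => toReal_nonneg)
    ((hsum Finset.univ).trans_le measureReal_le_one) hlog hbad
  rw [Fintype.card_fun, Fintype.card_fin, Fintype.card_fin, Nat.cast_pow, Real.log_pow] at hsum_le
  linarith

end ControlsNames

theorem iInf_finPartitionEntropy_eq_zero_of_forall_le {P : Fin p → Set X}
    (h : ∀ ε > 0, ∃ C, ∀ m : ℕ, 0 < m →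
      ∑ f, Real.negMulLog (μ (refinedPartition T P m f)).toReal ≤ C + m * ε) :
    ⨅ m : ℕ, finPartitionEntropy μ (refinedPartition T P (m + 1)) / (m + 1 : ℝ≥0∞) = 0 := by
  refine le_antisymm (ENNReal.le_of_forall_pos_le_add fun ε hε _ => ?_) zero_le
  have hε' : (0 : ℝ) < ε := hε
  obtain ⟨C, hC⟩ := h (ε / 2) (by positivity)
  obtain ⟨m, hm⟩ := exists_nat_ge (C / (ε / 2))
  rw [div_le_iff₀ (by positivity)] at hm
  rw [zero_add]
  refine (iInf_le _ m).trans (ENNReal.div_le_of_le_mul ?_)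
  have hcast : (ε : ℝ≥0∞) * (m + 1) = ENNReal.ofReal (ε * (m + 1)) := by
    rw [ofReal_mul hε'.le, ofReal_coe_nnreal, ofReal_add (by positivity) zero_le_one]
    simp
  rw [hcast]
  refine ofReal_le_ofReal ((hC (m + 1) m.succ_pos).trans ?_)
  push_cast
  linarith

theorem exists_pos_le_one_mul_le (C : ℝ) {ε : ℝ} (hε : 0 < ε) : ∃ t > 0, t ≤ 1 ∧ t * C ≤ ε := by
  have hC : Tendsto (· * C) (𝓝[>] (0 : ℝ)) (𝓝 (0 * C)) :=
    tendsto_nhdsWithin_of_tendsto_nhds ((continuous_mul_const C).tendsto 0)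
  rw [zero_mul] at hC
  exact ((hC.eventually_le_const hε).and (Ioc_mem_nhdsGT one_pos)).exists.imp fun _ ht =>
    ⟨ht.2.1, ht.2.2, ht.1⟩

theorem iInf_finPartitionEntropy_eq_zero_of_controlsNames [IsProbabilityMeasure μ]
    (hT : MeasurePreserving T μ μ) (hP : IsFinMeasPartition μ P)
    (h : ∀ β > 0, ∃ E 𝒲, MeasurableSet E ∧ μ.real Eᶜ ≤ β ∧ ControlsNames T P E c 𝒲 ∧
      ∃ (C : ℕ) (V : Fin C → Set X), (∀ q, V q ∈ 𝒲) ∧ μ.real (⋃ q, V q)ᶜ ≤ β) :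
    ⨅ m : ℕ, finPartitionEntropy μ (refinedPartition T P (m + 1)) / (m + 1 : ℝ≥0∞) = 0 := by
  refine iInf_finPartitionEntropy_eq_zero_of_forall_le fun ε hε => ?_
  have hε3 : 0 < ε / 3 := by positivity
  obtain ⟨t, ht0, ht1, htε⟩ := exists_pos_le_one_mul_le (p * c) hε3
  obtain ⟨γ, hγ0, -, hγε⟩ := exists_pos_le_one_mul_le (-Real.log t) hε3
  obtain ⟨β, hβ0, -, hβε⟩ := exists_pos_le_one_mul_le ((1 + 1 / γ) * Real.log p) hε3
  obtain ⟨E, 𝒲, hE, hEβ, h𝒲, C, V, hV, hVβ⟩ := h β hβ0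
  refine ⟨Real.log C + 2, fun m hm => ?_⟩
  lift t to ℝ≥0 using ht0.le
  refine (h𝒲.sum_negMulLog_le hT hP.1 hP.2.1 hE ht0 ht1 hV hγ0 hEβ hVβ hm).trans ?_
  gcongr
  have hβγ : (β + β / γ) * Real.log p = β * ((1 + 1 / γ) * Real.log p) := by ring
  linarith

end NameCounting

section Plaques

variable {X G : Type*} [Group G] [MulAction G X]

/-- The subsets of the pieces `S • x` of orbits such that all quotients of elements of `S` belong
to `U`. -/
def plaques (X : Type*) {G : Type*} [Group G] [MulAction G X] (U : Set G) : Set (Set X) :=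
  {W | ∃ (x : X) (S : Set G), S / S ⊆ U ∧ W ⊆ (· • x) '' S}

theorem smul_image_smul_eq (a : G) (S : Set G) (x : X) :
    (a • ·) '' ((· • x) '' S) = (· • x) '' (a • S) := by
  simp only [image_image, ← image_smul, smul_eq_mul, mul_smul]

theorem controlsNames_plaques {a : G} {c p : ℕ} {P Q : Fin p → Set X} {U : Set G} {E : Set X}
    (hP : Pairwise (Function.onFun Disjoint P)) (hQP : ∀ i, Q i ⊆ P i)
    (hUQ : ∀ g ∈ U, ∀ i j, ∀ x ∈ Q i, g • x ∈ Q j → i = j)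
    (hsplit : ∀ S, S / S ⊆ U → ∃ S' : Fin c → Set G, S ⊆ ⋃ q, S' q ∧ ∀ q, a • S' q / a • S' q ⊆ U)
    (hE : ∀ x ∈ E, ∀ g ∈ U, g • x ∈ E → a * g * a⁻¹ ∈ U) :
    ControlsNames (a • ·) P (E ∩ ⋃ i, Q i) c (plaques X U) where
  isLowerSet := fun W W' hW' ⟨x, S, hS, hWS⟩ => ⟨x, S, hS, hW'.trans hWS⟩
  image_inter_mem := by
    rintro W ⟨x, S, hS, hWS⟩
    refine ⟨x, a • {g ∈ S | g • x ∈ E}, div_subset_iff.2 ?_, ?_⟩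
    · rintro _ ⟨g, ⟨hg, hgE⟩, rfl⟩ _ ⟨h, ⟨hh, hhE⟩, rfl⟩
      have hgh : (g / h) • h • x ∈ E := by simpa [smul_smul] using hgE
      simpa [div_eq_mul_inv, mul_assoc] using
        hE _ hhE _ (hS (div_mem_div hg hh)) hgh
    · rw [← smul_image_smul_eq]
      refine image_mono fun y hy => ?_
      obtain ⟨g, hg, rfl⟩ := hWS hy.1
      exact ⟨g, ⟨hg, hy.2.1⟩, rfl⟩
  eq_of_mem := by
    rintro W ⟨x, S, hS, hWS⟩ y ⟨hyW, -, hyQ⟩ y' ⟨hyW', -, hyQ'⟩ i j hyi hyj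
    obtain ⟨g, hg, rfl⟩ := hWS hyW
    obtain ⟨h, hh, rfl⟩ := hWS hyW'
    obtain ⟨i', hi'⟩ := mem_iUnion.1 hyQ
    obtain ⟨j', hj'⟩ := mem_iUnion.1 hyQ'
    have hatom {k l : Fin p} {z : X} (hk : z ∈ Q k) (hl : z ∈ P l) : k = l :=
      by_contra fun hkl => disjoint_left.1 (hP hkl) (hQP k hk) hl
    rw [← hatom hi' hyi, ← hatom hj' hyj]
    exact hUQ _ (hS (div_mem_div hh hg)) i' j' _ hi' (by simpa [smul_smul] using hj')
  exists_cover := by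
    rintro W ⟨x, S, hS, hWS⟩
    obtain ⟨S', hSS', hS'⟩ := hsplit S hS
    refine ⟨fun q => (· • x) '' S' q, ?_, fun q => ⟨x, a • S' q, hS' q, ?_⟩⟩
    · rw [← image_iUnion]
      exact hWS.trans (image_mono hSS')
    · rw [smul_image_smul_eq]

variable [TopologicalSpace X] [T2Space X] [TopologicalSpace G]

theorem eventually_forall_smul_mem_imp_eq [ContinuousSMul G X] {ι : Type*} [Finite ι]
    {Q : ι → Set X} (hQ : ∀ i, IsCompact (Q i)) (hQd : Pairwise (Function.onFun Disjoint Q)) :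
    ∀ᶠ g : G in 𝓝 1, ∀ i j, ∀ x ∈ Q i, g • x ∈ Q j → i = j := by
  refine eventually_all.2 fun i => eventually_all.2 fun j => ?_
  by_cases hij : i = j
  · exact .of_forall fun _ _ _ _ => hij
  refine (hQ i).eventually_forall_of_forall_eventually fun x hx => ?_
  have hmem : (1 : G) • x ∈ (Q j)ᶜ := by
    rw [one_smul]
    exact disjoint_left.1 (hQd hij) hx
  filter_upwards [continuous_smul.continuousAt (x := ((1 : G), x))
    ((hQ j).isClosed.isOpen_compl.mem_nhds hmem)] with z hz hzQ
  exact absurd hzQ hz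

theorem exists_plaques_cover [IsTopologicalGroup G] [ContinuousSMul G X] [SigmaCompactSpace G]
    [BaireSpace X] [MulAction.IsPretransitive G X] {U : Set G} (hU : U ∈ 𝓝 1) {K : Set X}
    (hK : IsCompact K) :
    ∃ (C : ℕ) (V : Fin C → Set X), (∀ q, V q ∈ plaques X U) ∧ K ⊆ ⋃ q, V q := by
  obtain ⟨S, hS, hSU⟩ : ∃ S ∈ 𝓝 (1 : G), S / S ⊆ U := by
    have hdiv : Tendsto (fun q : G × G => q.1 / q.2) (𝓝 1 ×ˢ 𝓝 1) (𝓝 1) := by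
      simpa [nhds_prod_eq] using (continuous_div' (G := G)).tendsto (1, 1)
    obtain ⟨S, hS, hSU⟩ := mem_prod_self_iff.1 (hdiv hU)
    exact ⟨S, hS, div_subset_iff.2 fun g hg h hh => hSU (mk_mem_prod hg hh)⟩
  have hnhds (x : X) : (· • x) '' S ∈ 𝓝 x := by
    simpa using (isOpenMap_smul_of_sigmaCompact (G := G) x).image_mem_nhds hS
  obtain ⟨F, -, hF⟩ := hK.elim_nhds_subcover (fun x => (· • x) '' S) fun x _ => hnhds x
  refine ⟨F.card, fun q => (· • (F.equivFin.symm q : X)) '' S,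
    fun q => ⟨_, S, hSU, subset_rfl⟩, fun x hx => ?_⟩
  obtain ⟨y, hy, hxy⟩ := mem_iUnion₂.1 (hF hx)
  exact mem_iUnion.2 ⟨F.equivFin ⟨y, hy⟩, by simpa using hxy⟩

variable [MeasurableSpace X] {μ : Measure X}

theorem IsFinMeasPartition.exists_isCompact_subset [OpensMeasurableSpace X] [IsFiniteMeasure μ]
    [μ.InnerRegularCompactLTTop] {p : ℕ} {P : Fin p → Set X} (hP : IsFinMeasPartition μ P)
    {β : ℝ≥0∞} (hβ : β ≠ 0) :
    ∃ Q : Fin p → Set X, (∀ i, Q i ⊆ P i) ∧ (∀ i, IsCompact (Q i)) ∧ μ (⋃ i, Q i)ᶜ ≤ β := by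
  obtain ⟨δ, hδ0, hδβ⟩ := ENNReal.exists_pos_sum_of_countable' hβ (Fin p)
  choose Q hQP hQ hQδ using fun i =>
    (hP.1 i).exists_isCompact_sdiff_lt (measure_ne_top μ (P i)) (hδ0 i).ne'
  have hsub : (⋃ i, Q i)ᶜ ⊆ (⋃ i, P i)ᶜ ∪ ⋃ i, P i \ Q i := fun x hx => by
    refine or_iff_not_imp_left.2 fun hxP => ?_
    obtain ⟨i, hi⟩ := mem_iUnion.1 (not_not.1 hxP)
    exact mem_iUnion.2 ⟨i, hi, fun hiQ => hx (mem_iUnion.2 ⟨i, hiQ⟩)⟩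
  refine ⟨Q, hQP, hQ, ?_⟩
  calc μ (⋃ i, Q i)ᶜ ≤ μ (⋃ i, P i)ᶜ + μ (⋃ i, P i \ Q i) :=
        (measure_mono hsub).trans (measure_union_le _ _)
    _ ≤ 0 + ∑' i, δ i := add_le_add hP.2.2.le
        ((measure_iUnion_le _).trans (ENNReal.tsum_le_tsum fun i => (hQδ i).le))
    _ ≤ β := by simpa using hδβ.le

theorem ksEntropy_smul_eq_zero [IsTopologicalGroup G] [ContinuousSMul G X] [SigmaCompactSpace G]
    [BaireSpace X] [BorelSpace X] [MulAction.IsPretransitive G X] [IsProbabilityMeasure μ]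
    [μ.InnerRegularCompactLTTop] {a : G} (ha : MeasurePreserving (a • · : X → X) μ μ) {c : ℕ}
    (h : ∀ O ∈ 𝓝 (1 : G), ∀ β : ℝ≥0∞, β ≠ 0 → ∃ U ∈ 𝓝 1, U ⊆ O ∧
      (∀ S, S / S ⊆ U → ∃ S' : Fin c → Set G, S ⊆ ⋃ q, S' q ∧ ∀ q, a • S' q / a • S' q ⊆ U) ∧
      ∃ E, MeasurableSet E ∧ μ Eᶜ ≤ β ∧ ∀ x ∈ E, ∀ g ∈ U, g • x ∈ E → a * g * a⁻¹ ∈ U) :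
    ksEntropy (a • · : X → X) μ = 0 := by
  simp only [ksEntropy, ENNReal.iSup_eq_zero]
  intro p P hP
  refine iInf_finPartitionEntropy_eq_zero_of_controlsNames (c := c) ha hP fun β hβ => ?_
  have hβ2 : ENNReal.ofReal β / 2 ≠ 0 := by simpa using hβ
  obtain ⟨Q, hQP, hQ, hQβ⟩ := hP.exists_isCompact_subset hβ2
  have hQd : Pairwise (Function.onFun Disjoint Q) := fun i j hij =>
    (hP.2.1 hij).mono (hQP i) (hQP j)
  obtain ⟨U, hU, hUO, hsplit, E, hE, hEβ, hEU⟩ :=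
    h _ (eventually_forall_smul_mem_imp_eq (G := G) hQ hQd) _ hβ2
  obtain ⟨K, -, hK, hKβ⟩ := MeasurableSet.univ.exists_isCompact_sdiff_lt (measure_ne_top μ univ)
    (ENNReal.ofReal_pos.2 hβ).ne'
  obtain ⟨C, V, hV, hKV⟩ := exists_plaques_cover hU hK
  refine ⟨E ∩ ⋃ i, Q i, plaques X U, hE.inter (.iUnion fun i => (hQ i).measurableSet), ?_,
    controlsNames_plaques hP.2.1 hQP (fun g hg => hUO hg) hsplit hEU, C, V, hV, ?_⟩
  · refine ENNReal.toReal_le_of_le_ofReal hβ.le ?_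
    rw [compl_inter, ← ENNReal.add_halves (ENNReal.ofReal β)]
    exact (measure_union_le _ _).trans (add_le_add hEβ hQβ)
  · refine ENNReal.toReal_le_of_le_ofReal hβ.le ((measure_mono ?_).trans hKβ.le)
    rw [← compl_eq_univ_sdiff]
    exact compl_subset_compl.2 hKV

end Plaques

section HomogeneousSpace

variable {n : ℕ}

theorem isClosedEmbedding_coe_SLR :
    IsClosedEmbedding fun g : SLR n => (g : Matrix (Fin n) (Fin n) ℝ) :=
  Matrix.SpecialLinearGroup.isClosedEmbedding_val

instance : IsTopologicalGroup (SLR n) := Matrix.SpecialLinearGroup.topologicalGroup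

instance : T2Space (SLR n) := isClosedEmbedding_coe_SLR.isEmbedding.t2Space

instance : SecondCountableTopology (SLR n) :=
  haveI : SecondCountableTopology (Matrix (Fin n) (Fin n) ℝ) :=
    inferInstanceAs (SecondCountableTopology (Fin n → Fin n → ℝ))
  isClosedEmbedding_coe_SLR.isEmbedding.secondCountableTopology

instance : LocallyCompactSpace (SLR n) :=
  haveI : LocallyCompactSpace (Matrix (Fin n) (Fin n) ℝ) :=
    inferInstanceAs (LocallyCompactSpace (Fin n → Fin n → ℝ))
  isClosedEmbedding_coe_SLR.locallyCompactSpace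

variable (Γ : Subgroup (SLR n))

theorem isOpenQuotientMap_mk_XQuot :
    IsOpenQuotientMap (Quotient.mk (QuotientGroup.rightRel Γ)) :=
  MulAction.isOpenQuotientMap_quotientMk

instance : SecondCountableTopology (XQuot Γ) :=
  ContinuousConstSMul.secondCountableTopology

instance : LocallyCompactSpace (XQuot Γ) :=
  (isOpenQuotientMap_mk_XQuot Γ).locallyCompactSpace

instance : BorelSpace (XQuot Γ) := ⟨rfl⟩

theorem t2Space_XQuot [DiscreteTopology Γ] : T2Space (XQuot Γ) :=
  haveI := Γ.properlyDiscontinuousSMul_of_tendsto_cofinite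
    (Γ.tendsto_coe_cofinite_of_discrete (isDiscrete_iff_discreteTopology.2 ‹_›))
  t2Space_of_properlyDiscontinuousSMul_of_t2Space

/-- The right translations of `Γ \ SL(n,ℝ)`, turned into a left action by `g • x = x g⁻¹`. -/
instance : MulAction (SLR n) (XQuot Γ) where
  smul g := rtQ Γ g⁻¹
  one_smul x := Quotient.inductionOn x fun h => congrArg (Quotient.mk _) (by simp)
  mul_smul g g' x := Quotient.inductionOn x fun h =>
    congrArg (Quotient.mk _) (by simp [mul_assoc])

theorem inv_smul_XQuot (g : SLR n) (x : XQuot Γ) : g⁻¹ • x = rtQ Γ g x :=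
  congrArg (rtQ Γ · x) (inv_inv g)

instance : ContinuousSMul (SLR n) (XQuot Γ) where
  continuous_smul := by
    rw [(IsOpenQuotientMap.id.prodMap
      (isOpenQuotientMap_mk_XQuot Γ)).isQuotientMap.continuous_iff]
    exact (isOpenQuotientMap_mk_XQuot Γ).continuous.comp
      (continuous_snd.mul continuous_fst.inv)

instance : MulAction.IsPretransitive (SLR n) (XQuot Γ) where
  exists_smul_eq x y := by
    induction x, y using Quotient.inductionOn₂ with | _ g h
    exact ⟨h⁻¹ * g, congrArg (Quotient.mk _) (by simp)⟩

end HomogeneousSpace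

section DiagonalSubgroup

variable {n : ℕ}

theorem det_diagonal_exp_sub_mean (α : Fin n → ℝ) :
    (Matrix.diagonal fun i => Real.exp (α i - (∑ k, α k) / n)).det = 1 := by
  rcases eq_or_ne n 0 with rfl | hn
  · simp
  · simp [Matrix.det_diagonal, ← Real.exp_sum, mul_div_cancel₀, hn]

/-- The diagonal matrix with entries `exp (α i)`, divided by a scalar so as to have determinant
`1`. -/
noncomputable def expDiag (n : ℕ) : AddChar (Fin n → ℝ) (SLR n) where
  toFun α := ⟨Matrix.diagonal fun i => Real.exp (α i - (∑ k, α k) / n),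
    det_diagonal_exp_sub_mean α⟩
  map_zero_eq_one' := Subtype.ext (by simp)
  map_add_eq_mul' α β := Subtype.ext <| by
    refine Eq.trans ?_ (Matrix.diagonal_mul_diagonal _ _).symm
    simp only [← Real.exp_add, Pi.add_apply, Finset.sum_add_distrib, add_div, add_sub_add_comm]

theorem coe_expDiag (α : Fin n → ℝ) :
    (expDiag n α).1 = Matrix.diagonal fun i => Real.exp (α i - (∑ k, α k) / n) :=
  rfl

theorem inv_expDiag (α : Fin n → ℝ) : (expDiag n α)⁻¹ = expDiag n (-α) :=
  inv_eq_of_mul_eq_one_right (by rw [← AddChar.map_add_eq_mul, add_neg_cancel,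
    AddChar.map_zero_eq_one])

theorem expDiag_ne_one {α : Fin n → ℝ} {i j : Fin n} (hij : α i ≠ α j) : expDiag n α ≠ 1 := by
  intro h
  have hmean (k : Fin n) : α k = (∑ l, α l) / n := by
    have hk : (expDiag n α).1 k k = 1 := by rw [h, Matrix.SpecialLinearGroup.coe_one,
      Matrix.one_apply_eq]
    rwa [coe_expDiag, Matrix.diagonal_apply_eq, Real.exp_eq_one_iff, sub_eq_zero] at hk
  exact hij ((hmean i).trans (hmean j).symm)

theorem isPosDiag_expDiag (α : Fin n → ℝ) : IsPosDiag (expDiag n α) :=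
  ⟨fun i j hij => by rw [coe_expDiag, Matrix.diagonal_apply_ne _ hij],
    fun i => by rw [coe_expDiag, Matrix.diagonal_apply_eq]; positivity⟩

theorem IsPosDiag.exists_expDiag_eq {g : SLR n} (hg : IsPosDiag g) : ∃ α, expDiag n α = g := by
  have hdiag : g.1 = Matrix.diagonal fun i => g.1 i i := by
    ext i j
    rcases eq_or_ne i j with rfl | hij
    · simp
    · rw [hg.1 i j hij, Matrix.diagonal_apply_ne _ hij]
  have hsum : ∑ i, Real.log (g.1 i i) = 0 := by
    have hdet := g.2
    rw [hdiag, Matrix.det_diagonal] at hdet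
    rw [← Real.log_prod fun i _ => (hg.2 i).ne', hdet, Real.log_one]
  refine ⟨fun i => Real.log (g.1 i i), Subtype.ext ?_⟩
  rw [coe_expDiag, hsum]
  conv_rhs => rw [hdiag]
  simp [Real.exp_log (hg.2 _)]

theorem continuous_expDiag : Continuous (expDiag n) := by
  rw [isClosedEmbedding_coe_SLR.isEmbedding.continuous_iff]
  exact Continuous.matrix_diagonal (by fun_prop)

theorem conj_expDiag_apply (α : Fin n → ℝ) (g : SLR n) (i j : Fin n) :
    (expDiag n α * g * (expDiag n α)⁻¹).1 i j = Real.exp (α i - α j) * g.1 i j := by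
  simp only [inv_expDiag, Matrix.SpecialLinearGroup.coe_mul, coe_expDiag, Matrix.mul_diagonal,
    Matrix.diagonal_mul, Pi.neg_apply, Finset.sum_neg_distrib]
  rw [mul_right_comm, ← Real.exp_add]
  ring_nf

theorem conj_expDiag_sub_one_apply (α : Fin n → ℝ) (g : SLR n) (i j : Fin n) :
    ((expDiag n α * g * (expDiag n α)⁻¹).1 - 1) i j = Real.exp (α i - α j) * (g.1 - 1) i j := by
  rw [Matrix.sub_apply, Matrix.sub_apply, conj_expDiag_apply, mul_sub]
  rcases eq_or_ne i j with rfl | hij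
  · simp
  · simp [Matrix.one_apply_ne hij]

/-- The subgroup of `SL(n,ℝ)` of diagonal matrices with positive entries. -/
noncomputable def posDiagSubgroup (n : ℕ) : Subgroup (SLR n) :=
  (expDiag n).toMonoidHom.range

theorem mem_posDiagSubgroup {g : SLR n} : g ∈ posDiagSubgroup n ↔ IsPosDiag g :=
  ⟨fun ⟨α, hα⟩ => hα ▸ isPosDiag_expDiag α.toAdd, fun hg => hg.exists_expDiag_eq⟩

theorem expDiag_mem_posDiagSubgroup (α : Fin n → ℝ) : expDiag n α ∈ posDiagSubgroup n :=
  ⟨.ofAdd α, rfl⟩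

theorem commute_of_mem_posDiagSubgroup {g h : SLR n} (hg : g ∈ posDiagSubgroup n)
    (hh : h ∈ posDiagSubgroup n) : Commute g h := by
  obtain ⟨α, rfl⟩ := hg
  obtain ⟨β, rfl⟩ := hh
  exact (Commute.all α β).map _

theorem isClosed_posDiagSubgroup : IsClosed (posDiagSubgroup n : Set (SLR n)) := by
  have heq : (posDiagSubgroup n : Set (SLR n)) =
      {g | (∀ i j, i ≠ j → g.1 i j = 0) ∧ ∀ i, 0 ≤ g.1 i i} := by
    ext g
    rw [SetLike.mem_coe, mem_posDiagSubgroup]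
    refine ⟨fun hg => ⟨hg.1, fun i => (hg.2 i).le⟩, fun hg => ⟨hg.1, fun i => ?_⟩⟩
    have hdet := g.2
    rw [← (Matrix.isDiag_iff_diagonal_diag _).1 fun i j => hg.1 i j, Matrix.det_diagonal] at hdet
    exact (hg.2 i).lt_of_ne' fun hi =>
      zero_ne_one ((Finset.prod_eq_zero (f := g.1.diag) (Finset.mem_univ i) hi).symm.trans hdet)
  have hentry (i j : Fin n) : Continuous fun g : SLR n => g.1 i j :=
    isClosedEmbedding_coe_SLR.continuous.matrix_elem i j
  rw [heq]
  simp only [Set.ofPred_and, Set.ofPred_forall]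
  exact (isClosed_iInter fun i => isClosed_iInter fun j => isClosed_iInter fun _ =>
    isClosed_eq (hentry i j) continuous_const).inter
    (isClosed_iInter fun i => isClosed_le continuous_const (hentry i i))

end DiagonalSubgroup

section RootSubgroups

variable {n : ℕ} {i j k : Fin n}

/-- The one-parameter subgroup `s ↦ 1 + s Eᵢⱼ` of `SL(n,ℝ)`. -/
noncomputable def rootHom (hij : i ≠ j) : AddChar ℝ (SLR n) where
  toFun := Matrix.SpecialLinearGroup.transvection hij
  map_zero_eq_one' := Matrix.SpecialLinearGroup.transvection_coeff_zero hij
  map_add_eq_mul' s t := Matrix.SpecialLinearGroup.transvection_add hij s t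

theorem coe_rootHom (hij : i ≠ j) (s : ℝ) : (rootHom hij s).1 = 1 + Matrix.single i j s :=
  Matrix.SpecialLinearGroup.transvection_coe hij s

theorem continuous_rootHom (hij : i ≠ j) : Continuous (rootHom hij) := by
  rw [isClosedEmbedding_coe_SLR.isEmbedding.continuous_iff]
  simp only [Function.comp_def, coe_rootHom]
  refine continuous_const.add (continuous_matrix fun p q => ?_)
  simp only [Matrix.single_apply]
  split_ifs <;> fun_prop

theorem conj_expDiag_rootHom (hij : i ≠ j) (α : Fin n → ℝ) (s : ℝ) :
    expDiag n α * rootHom hij s * (expDiag n α)⁻¹ = rootHom hij (Real.exp (α i - α j) * s) := by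
  ext p q
  rw [← sub_left_inj (a := (1 : Matrix (Fin n) (Fin n) ℝ) p q), ← Matrix.sub_apply,
    ← Matrix.sub_apply, conj_expDiag_sub_one_apply, coe_rootHom, coe_rootHom, add_sub_cancel_left,
    add_sub_cancel_left, Matrix.single_apply, Matrix.single_apply]
  split_ifs with h
  · rw [h.1, h.2]
  · rw [mul_zero]

theorem commute_expDiag_rootHom (hij : i ≠ j) {α : Fin n → ℝ} (hα : α i = α j) (s : ℝ) :
    Commute (expDiag n α) (rootHom hij s) := by
  have h := conj_expDiag_rootHom hij α s
  rwa [hα, sub_self, Real.exp_zero, one_mul, mul_inv_eq_iff_eq_mul] at h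

theorem tendsto_conj_expDiag_pow_rootHom (hij : i ≠ j) {α : Fin n → ℝ} (hα : α i < α j) (s : ℝ) :
    Tendsto (fun m : ℕ => expDiag n α ^ m * rootHom hij s * (expDiag n α ^ m)⁻¹) atTop (𝓝 1) := by
  have hexp : Real.exp (α i - α j) < 1 := Real.exp_lt_one_iff.2 (sub_neg.2 hα)
  have hlim : Tendsto (fun m : ℕ => rootHom hij (Real.exp (α i - α j) ^ m * s)) atTop
      (𝓝 (rootHom hij (0 * s))) :=
    ((continuous_rootHom hij).tendsto _).comp
      ((tendsto_pow_atTop_nhds_zero_of_lt_one (Real.exp_pos _).le hexp).mul_const s)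
  rw [zero_mul, AddChar.map_zero_eq_one] at hlim
  refine hlim.congr fun m => ?_
  rw [← AddChar.map_nsmul_eq_pow, conj_expDiag_rootHom, ← Real.exp_nat_mul]
  simp [mul_sub]

theorem rescales_rootHom (hij : i ≠ j) : Rescales (posDiagSubgroup n) (rootHom hij) where
  exists_ratio := by
    rintro _ ⟨α, rfl⟩
    exact ⟨_, Real.exp_pos _, conj_expDiag_rootHom hij α.toAdd⟩
  exists_mem l hl := by
    refine ⟨_, expDiag_mem_posDiagSubgroup (Pi.single i (Real.log l)), fun s => ?_⟩
    simp [conj_expDiag_rootHom, hij.symm, Real.exp_log hl]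

theorem rootHom_mul_rootHom (hij : i ≠ j) (hjk : j ≠ k) (hik : i ≠ k) (s t : ℝ) :
    rootHom hij t * rootHom hjk s = rootHom hik (s * t) * rootHom hjk s * rootHom hij t := by
  refine Subtype.ext ?_
  simp only [Matrix.SpecialLinearGroup.coe_mul, coe_rootHom, mul_add, mul_one, add_mul, one_mul,
    Matrix.single_mul_single_same, mul_comm s t, ne_eq, hjk.symm, hik.symm, not_false_eq_true,
    Matrix.single_mul_single_of_ne, add_zero]
  abel

theorem diag2n_eq_rootHom_mul (hij : i ≠ j) {c : ℝ} (hc : c ≠ 0) :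
    Matrix.SpecialLinearGroup.diag2n hij c hc =
      rootHom hij (c - 1) * rootHom hij.symm 1 * rootHom hij (c⁻¹ - 1) * rootHom hij.symm (-c) := by
  have hdiag : (Matrix.SpecialLinearGroup.diag2n hij c hc).1 =
      1 + Matrix.single i i (c - 1) + Matrix.single j j (c⁻¹ - 1) := by
    ext a b
    simp only [Matrix.SpecialLinearGroup.diag2n_coe, Matrix.diagonal_apply, Matrix.add_apply,
      Matrix.one_apply, Matrix.single_apply]
    grind
  refine Subtype.ext ?_
  rw [hdiag]
  simp only [Matrix.SpecialLinearGroup.coe_mul, coe_rootHom, mul_add, mul_one, add_mul, one_mul,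
    Matrix.single_mul_single_same, ne_eq, hij, hij.symm, not_false_eq_true,
    Matrix.single_mul_single_of_ne, add_zero]
  obtain ⟨E, hE⟩ : ∃ E : Fin n → Fin n → Matrix (Fin n) (Fin n) ℝ,
      ∀ a b t, Matrix.single a b t = t • E a b :=
    ⟨fun a b => Matrix.single a b 1, fun a b t => by simp⟩
  simp only [hE]
  match_scalars <;> field_simp <;> ring

end RootSubgroups

section CutBoxes

theorem exists_cover_closedBall_of_dist_le (E : Type*) [NormedAddCommGroup E] [NormedSpace ℝ E]
    [ProperSpace E] {ε : ℝ} (hε : 0 < ε) :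
    ∃ c : ℕ, ∀ r > 0, ∃ C : Fin c → Set E, Metric.closedBall 0 r ⊆ ⋃ q, C q ∧
      ∀ q, ∀ x ∈ C q, ∀ y ∈ C q, dist x y ≤ ε * r := by
  obtain ⟨t, -, ht, hcover⟩ :=
    (isCompact_closedBall (0 : E) 1).finite_cover_balls (half_pos hε)
  have := ht.to_subtype
  obtain ⟨c, ⟨e⟩⟩ := Finite.exists_equiv_fin t
  refine ⟨c, fun r hr => ⟨fun q => r • Metric.ball ((e.symm q : t) : E) (ε / 2),
    fun x hx => ?_, fun q => ?_⟩⟩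
  · have hx1 : r⁻¹ • x ∈ Metric.closedBall (0 : E) 1 := by
      rw [mem_closedBall_zero_iff] at hx ⊢
      rw [norm_smul, norm_inv, Real.norm_of_nonneg hr.le]
      exact (inv_mul_le_one₀ hr).2 hx
    obtain ⟨y, hy, hxy⟩ := mem_iUnion₂.1 (hcover hx1)
    refine mem_iUnion.2 ⟨e ⟨y, hy⟩, (mem_smul_set_iff_inv_smul_mem₀ hr.ne' _ _).2 ?_⟩
    simpa using hxy
  · rintro _ ⟨x, hx, rfl⟩ _ ⟨y, hy, rfl⟩
    have hxy := dist_triangle_right x y (e.symm q : t)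
    rw [Metric.mem_ball] at hx hy
    rw [dist_smul₀, Real.norm_of_nonneg hr.le, mul_comm]
    gcongr
    linarith

variable {n : ℕ}

theorem exists_forall_entrywise_close_mem {A V : Set (SLR n)} (hA : IsCompact A) (hV : IsOpen V)
    (hAV : A ⊆ V) :
    ∃ ρ > 0, ∀ h ∈ A, ∀ g : SLR n, (∀ p q, |(g.1 - h.1) p q| ≤ ρ) → g ∈ V := by
  let f : SLR n → Fin n → Fin n → ℝ := fun g => g.1
  have hf : IsClosedEmbedding f := isClosedEmbedding_coe_SLR
  obtain ⟨W, hW, rfl⟩ := hf.isInducing.isOpen_iff.1 hV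
  obtain ⟨ρ, hρ, hsub⟩ := (hA.image hf.continuous).exists_cthickening_subset_open hW
    (image_subset_iff.2 hAV)
  refine ⟨ρ, hρ, fun h hh g hg => hsub ?_⟩
  refine Metric.mem_cthickening_of_dist_le _ _ _ _ (mem_image_of_mem f hh) ?_
  exact (dist_pi_le_iff hρ.le).2 fun p => (dist_pi_le_iff hρ.le).2 fun q => hg p q

/-- The neighbourhood of `1` in `SL(n,ℝ)` of the matrices that are `r`-close to `1` in the
`I × Iᶜ` block and `η`-close to `1` in all other entries. -/
def cutBox (I : Set (Fin n)) (r η : ℝ) : Set (SLR n) :=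
  {g | (∀ p ∈ I, ∀ q ∉ I, |(g.1 - 1) p q| ≤ r) ∧
    ∀ p q, (p ∈ I → q ∈ I) → |(g.1 - 1) p q| ≤ η}

variable {I : Set (Fin n)} {r η : ℝ}

theorem cutBox_mem_nhds_one (hr : 0 < r) (hη : 0 < η) : cutBox I r η ∈ 𝓝 1 := by
  have hclose {δ : ℝ} (hδ : 0 < δ) : ∀ᶠ g : SLR n in 𝓝 1, ∀ p q, |(g.1 - 1) p q| ≤ δ := by
    simp only [eventually_all]
    intro p q
    have hcont : Continuous fun g : SLR n => |(g.1 - 1) p q| :=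
      ((isClosedEmbedding_coe_SLR.continuous.sub continuous_const).matrix_elem p q).abs
    exact (hcont.tendsto 1).eventually_le_const (by simpa using hδ)
  filter_upwards [hclose hr, hclose hη] with g hgr hgη
  exact ⟨fun p _ q _ => hgr p q, fun p q _ => hgη p q⟩

theorem abs_sub_one_apply_le_of_mem_cutBox (hηr : η ≤ r) {g : SLR n} (hg : g ∈ cutBox I r η)
    (p q : Fin n) : |(g.1 - 1) p q| ≤ r := by
  by_cases hpq : p ∈ I → q ∈ I
  · exact (hg.2 p q hpq).trans hηr
  · push Not at hpq
    exact hg.1 p hpq.1 q hpq.2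

theorem exists_cutBox_subset {O : Set (SLR n)} (hO : O ∈ 𝓝 1) :
    ∃ r > 0, ∀ η ≤ r, cutBox I r η ⊆ O := by
  obtain ⟨r, hr, h⟩ := exists_forall_entrywise_close_mem isCompact_singleton isOpen_interior
    (singleton_subset_iff.2 (mem_interior_iff_mem_nhds.2 hO))
  exact ⟨r, hr, fun η hη g hg => interior_subset
    (h 1 rfl g (abs_sub_one_apply_le_of_mem_cutBox hη hg))⟩

theorem conj_expDiag_mem_cutBox {g : SLR n} (hg : g ∈ cutBox I r η)
    (hhalf : ∀ p ∈ I, ∀ q ∉ I, |(g.1 - 1) p q| ≤ r / 2) :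
    expDiag n (I.indicator fun _ => Real.log 2) * g *
      (expDiag n (I.indicator fun _ => Real.log 2))⁻¹ ∈ cutBox I r η := by
  refine ⟨fun p hp q hq => ?_, fun p q hpq => ?_⟩ <;>
    rw [conj_expDiag_sub_one_apply, abs_mul, Real.abs_exp]
  · rw [indicator_of_mem hp, indicator_of_notMem hq, sub_zero, Real.exp_log two_pos]
    linarith [hhalf p hp q hq]
  · have hle : I.indicator (fun _ => Real.log 2) p ≤ I.indicator (fun _ => Real.log 2) q := by
      by_cases hp : p ∈ I
      · rw [indicator_of_mem hp, indicator_of_mem (hpq hp)]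
      · rw [indicator_of_notMem hp]
        exact indicator_nonneg (fun _ _ => Real.log_nonneg one_le_two) q
    exact (mul_le_of_le_one_left (abs_nonneg _) (Real.exp_le_one_iff.2 (sub_nonpos.2 hle))).trans
      (hg.2 p q hpq)

theorem abs_sub_one_apply_le_half_of_mem_cutBox (hη : 0 ≤ η) (hnη : n * η ≤ 1 / 4) {y z : SLR n}
    (hz : z ∈ cutBox I r η) (hy : y ∈ cutBox I r η) {p q : Fin n}
    (hzy : |((z * y).1 - y.1) p q| ≤ 1 / 4 * r) (hp : p ∈ I) (hq : q ∉ I) :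
    |(z.1 - 1) p q| ≤ r / 2 := by
  have hr : 0 ≤ r := (abs_nonneg _).trans (hz.1 p hp q hq)
  have hterm (k : Fin n) : |(z.1 - 1) p k * (y.1 - 1) k q| ≤ η * r := by
    rw [abs_mul]
    by_cases hk : k ∈ I
    · exact mul_le_mul (hz.2 p k fun _ => hk) (hy.1 k hk q hq) (abs_nonneg _) hη
    · rw [mul_comm η]
      exact mul_le_mul (hz.1 p hp k hk) (hy.2 k q fun h => absurd h hk) (abs_nonneg _) hr
  have hprod : |((z.1 - 1) * (y.1 - 1)) p q| ≤ 1 / 4 * r :=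
    calc |((z.1 - 1) * (y.1 - 1)) p q| ≤ ∑ _k : Fin n, η * r := by
          rw [Matrix.mul_apply]
          exact (Finset.abs_sum_le_sum_abs _ _).trans (Finset.sum_le_sum fun k _ => hterm k)
      _ = n * η * r := by simp [mul_assoc]
      _ ≤ 1 / 4 * r := by gcongr
  have hsub : z.1 - 1 = ((z * y).1 - y.1) - (z.1 - 1) * (y.1 - 1) := by
    rw [Matrix.SpecialLinearGroup.coe_mul]
    noncomm_ring
  rw [hsub, Matrix.sub_apply]
  linarith [abs_sub ((((z * y).1 - y.1)) p q) (((z.1 - 1) * (y.1 - 1)) p q)]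

theorem exists_split_cutBox (n : ℕ) :
    ∃ c : ℕ, ∀ (I : Set (Fin n)) (r η : ℝ), 0 < η → η ≤ r → n * η ≤ 1 / 4 →
      ∀ S : Set (SLR n), S / S ⊆ cutBox I r η → ∃ S' : Fin c → Set (SLR n), S ⊆ ⋃ q, S' q ∧
        ∀ q, expDiag n (I.indicator fun _ => Real.log 2) • S' q /
          expDiag n (I.indicator fun _ => Real.log 2) • S' q ⊆ cutBox I r η := by
  obtain ⟨c, hc⟩ := exists_cover_closedBall_of_dist_le (Fin n → Fin n → ℝ)
    (by norm_num : (0 : ℝ) < 1 / 4)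
  refine ⟨c, fun I r η hη hηr hnη S hS => ?_⟩
  rcases S.eq_empty_or_nonempty with rfl | ⟨h₀, hh₀⟩
  · exact ⟨fun _ => ∅, empty_subset _, fun _ => by simp⟩
  obtain ⟨C, hC, hCdist⟩ := hc r (hη.trans_le hηr)
  have hbox {g h : SLR n} (hg : g ∈ S) (hh : h ∈ S) : g * h⁻¹ ∈ cutBox I r η :=
    hS ⟨g, hg, h, hh, div_eq_mul_inv g h⟩
  refine ⟨fun q => {g ∈ S | (g * h₀⁻¹).1 - 1 ∈ C q}, fun g hg => ?_, fun q => ?_⟩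
  · refine (mem_iUnion.1 (hC (mem_closedBall_zero_iff.2 ?_))).elim fun q hq =>
      mem_iUnion.2 ⟨q, hg, hq⟩
    exact (pi_norm_le_iff_of_nonneg (hη.le.trans hηr)).2 fun p =>
      (pi_norm_le_iff_of_nonneg (hη.le.trans hηr)).2
        (abs_sub_one_apply_le_of_mem_cutBox hηr (hbox hg hh₀) p)
  · rintro _ ⟨_, ⟨g, ⟨hg, hgC⟩, rfl⟩, _, ⟨h, ⟨hh, hhC⟩, rfl⟩, rfl⟩
    have hdist := hCdist q _ hgC _ hhC
    change expDiag n _ * g / (expDiag n _ * h) ∈ cutBox I r η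
    rw [div_eq_mul_inv, mul_inv_rev, ← mul_assoc, mul_assoc _ g]
    refine conj_expDiag_mem_cutBox (hbox hg hh) fun p hp p' hp' =>
      abs_sub_one_apply_le_half_of_mem_cutBox hη.le hnη (hbox hg hh) (hbox hh hh₀) ?_ hp hp'
    rw [mul_assoc, inv_mul_cancel_left]
    rw [← sub_sub_sub_cancel_right _ _ 1]
    exact (dist_le_pi_dist _ _ p').trans ((dist_le_pi_dist _ _ p).trans hdist)

end CutBoxes

section NoReturns

variable {G X : Type*} [TopologicalSpace X] [T2Space X]

theorem isOpen_forall_smul_notMem [TopologicalSpace G] [SMul G X] [ContinuousSMul G X]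
    {K : Set X} (hK : IsCompact K) : IsOpen {g : G | ∀ x ∈ K, g • x ∉ K} :=
  isOpen_iff_eventually.2 fun g hg => hK.eventually_forall_of_forall_eventually fun x hx =>
    (continuous_smul.tendsto (g, x)).eventually (hK.isClosed.isOpen_compl.mem_nhds (hg x hx))

variable [MeasurableSpace X] [BorelSpace X] {μ : Measure X} [IsProbabilityMeasure μ]
  [μ.InnerRegularCompactLTTop]

theorem exists_isCompact_forall_smul_notMem [Group G] [MulAction G X] {S : Set G}
    (hS : ¬HasReturns μ S) {β : ℝ≥0∞} (hβ : β ≠ 0) :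
    ∃ K, IsCompact K ∧ μ Kᶜ ≤ β ∧ ∀ x ∈ K, ∀ g ∈ S, g • x ∉ K := by
  simp only [HasReturns, not_exists, not_and, not_forall] at hS
  obtain ⟨Z, hZ, hZβ, hZret⟩ := hS (1 - β) (ENNReal.sub_lt_self one_ne_top one_ne_zero hβ)
  obtain ⟨K, hKZ, hK, hKβ⟩ := hZ.exists_lt_isCompact_of_ne_top (measure_ne_top μ Z) hZβ
  refine ⟨K, hK, ?_, fun x hx g hg hgx => hZret x (hKZ hx) g hg (hKZ hgx)⟩
  rw [prob_compl_eq_one_sub hK.measurableSet]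
  exact tsub_le_iff_tsub_le.1 hKβ.le

variable {n : ℕ} {I : Set (Fin n)} {i j : Fin n}

theorem exists_conj_expDiag_close_rootHom (hij : i ≠ j) (hi : i ∈ I) (hj : j ∉ I) (r : ℝ)
    {ρ : ℝ} (hρ : 0 < ρ) :
    ∃ α : Fin n → ℝ, ∀ᶠ η in 𝓝[>] (0 : ℝ), ∀ g ∈ cutBox I r η, ∀ p q,
      |((expDiag n α * g * (expDiag n α)⁻¹).1 - (rootHom hij ((g.1 - 1) i j)).1) p q| ≤ ρ := by
  classical
  obtain ⟨l, hl0, hl⟩ : ∃ l : ℝ, 0 ≤ l ∧ Real.exp (-l) * r ≤ ρ := by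
    have hlim : Tendsto (fun l => Real.exp (-l) * r) atTop (𝓝 (0 * r)) :=
      (Real.tendsto_exp_comp_nhds_zero.2 tendsto_neg_atTop_atBot).mul_const r
    rw [zero_mul] at hlim
    exact ((eventually_ge_atTop 0).and (hlim.eventually_le_const hρ)).exists
  let α : Fin n → ℝ := fun p => if p ∈ I then if p = i then 0 else -l else if p = j then 0 else l
  have hη : 0 < Real.exp (-(2 * l)) * ρ := by positivity
  refine ⟨α, ((eventually_le_nhds hη).filter_mono nhdsWithin_le_nhds).mono
    fun η hη g hg p q => ?_⟩
  rw [← sub_sub_sub_cancel_right _ _ 1, Matrix.sub_apply, conj_expDiag_sub_one_apply, coe_rootHom,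
    add_sub_cancel_left]
  by_cases hpq : i = p ∧ j = q
  · obtain ⟨rfl, rfl⟩ := hpq
    simp [α, hi, hj, hρ.le]
  rw [Matrix.single_apply, if_neg hpq, sub_zero, abs_mul, Real.abs_exp]
  by_cases hcut : p ∈ I → q ∈ I
  · have hα : α p - α q ≤ 2 * l := by
      simp only [α]
      split_ifs <;> linarith
    calc Real.exp (α p - α q) * |(g.1 - 1) p q|
        ≤ Real.exp (2 * l) * (Real.exp (-(2 * l)) * ρ) := by
          gcongr
          exact (hg.2 p q hcut).trans hη
      _ = ρ := by rw [← mul_assoc, ← Real.exp_add, add_neg_cancel, Real.exp_zero, one_mul]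
  · push Not at hcut
    have hα : α p - α q ≤ -l := by
      simp only [α, hcut.1, hcut.2, if_true, if_false]
      split_ifs with hp hq <;> grind
    exact (mul_le_mul (Real.exp_le_exp.2 hα) (hg.1 p hcut.1 q hcut.2) (abs_nonneg _)
      (Real.exp_pos _).le).trans hl

variable [MulAction (SLR n) X] [ContinuousSMul (SLR n) X]

theorem exists_forall_cutBox_smul_notMem
    (hμ : ∀ α, MeasurePreserving (expDiag n α • · : X → X) μ μ)
    {hij : i ≠ j} (hR : ¬HasReturns μ (rootHom hij '' {0}ᶜ)) (hi : i ∈ I) (hj : j ∉ I) {r : ℝ}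
    (hr : 0 < r) {β : ℝ≥0∞} (hβ : β ≠ 0) :
    ∃ E, MeasurableSet E ∧ μ Eᶜ ≤ β ∧ ∀ᶠ η in 𝓝[>] (0 : ℝ), ∀ x ∈ E, ∀ g ∈ cutBox I r η,
      r / 2 ≤ |(g.1 - 1) i j| → g • x ∉ E := by
  obtain ⟨K, hK, hKβ, hKret⟩ := exists_isCompact_forall_smul_notMem hR hβ
  let A : Set (SLR n) := rootHom hij '' (Metric.closedBall 0 r \ Metric.ball 0 (r / 2))
  have hA : IsCompact A := ((isCompact_closedBall 0 r).diff Metric.isOpen_ball).image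
    (continuous_rootHom hij)
  have hAret : A ⊆ {g | ∀ x ∈ K, g • x ∉ K} := by
    rintro _ ⟨s, ⟨-, hs⟩, rfl⟩ x hx
    refine hKret x hx _ (mem_image_of_mem _ ?_)
    rintro rfl
    exact hs (Metric.mem_ball_self (half_pos hr))
  obtain ⟨ρ, hρ, hclose⟩ :=
    exists_forall_entrywise_close_mem hA (isOpen_forall_smul_notMem hK) hAret
  obtain ⟨α, hα⟩ := exists_conj_expDiag_close_rootHom hij hi hj r hρ
  refine ⟨(expDiag n α • ·) ⁻¹' K, (hμ α).measurable hK.measurableSet, ?_, ?_⟩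
  · rw [← preimage_compl, (hμ α).measure_preimage hK.measurableSet.compl.nullMeasurableSet]
    exact hKβ
  · filter_upwards [hα] with η hη x hx g hg hgr hgx
    have hmem : rootHom hij ((g.1 - 1) i j) ∈ A := mem_image_of_mem _
      ⟨mem_closedBall_zero_iff.2 (hg.1 i hi j hj), fun hlt =>
        (mem_ball_zero_iff.1 hlt).not_ge hgr⟩
    refine hclose _ hmem _ (hη g hg) _ hx ?_
    rwa [smul_smul, inv_mul_cancel_right, mul_smul]

theorem ksEntropy_expDiag_smul_eq_zero [BaireSpace X] [MulAction.IsPretransitive (SLR n) X]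
    (hμ : ∀ α, MeasurePreserving (expDiag n α • · : X → X) μ μ)
    (hR : ∀ i ∈ I, ∀ j ∉ I, ∀ hij : i ≠ j, ¬HasReturns μ (rootHom hij '' {0}ᶜ)) :
    ksEntropy (expDiag n (I.indicator fun _ => Real.log 2) • · : X → X) μ = 0 := by
  obtain ⟨c, hc⟩ := exists_split_cutBox n
  refine ksEntropy_smul_eq_zero (hμ _) (c := c) fun O hO β hβ => ?_
  obtain ⟨r, hr, hrO⟩ := exists_cutBox_subset hO
  obtain ⟨δ, hδ0, hδβ⟩ := ENNReal.exists_pos_sum_of_countable' hβ (Fin n × Fin n)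
  have hexists (p : Fin n × Fin n) : ∃ E, MeasurableSet E ∧ μ Eᶜ ≤ δ p ∧
      ∀ᶠ η in 𝓝[>] (0 : ℝ), p.1 ∈ I → p.2 ∉ I → ∀ x ∈ E, ∀ g ∈ cutBox I r η,
        r / 2 ≤ |(g.1 - 1) p.1 p.2| → g • x ∉ E := by
    by_cases hp : p.1 ∈ I ∧ p.2 ∉ I
    · obtain ⟨E, hE, hEδ, hη⟩ := exists_forall_cutBox_smul_notMem hμ
        (hR _ hp.1 _ hp.2 (ne_of_mem_of_not_mem hp.1 hp.2)) hp.1 hp.2 hr (hδ0 p).ne'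
      exact ⟨E, hE, hEδ, hη.mono fun η h _ _ => h⟩
    · exact ⟨univ, .univ, by simp, .of_forall fun η h1 h2 => absurd ⟨h1, h2⟩ hp⟩
  choose E hE hEδ hEη using hexists
  have hsmall : ∀ᶠ η in 𝓝[>] (0 : ℝ), η ≤ r ∧ n * η ≤ 1 / 4 := by
    have hlim : Tendsto (fun η : ℝ => n * η) (𝓝[>] 0) (𝓝 0) := by
      simpa using (tendsto_id.const_mul (n : ℝ)).mono_left (nhdsWithin_le_nhds (a := (0 : ℝ)))
    exact ((eventually_le_nhds hr).filter_mono nhdsWithin_le_nhds).and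
      (hlim.eventually_le_const (by norm_num))
  obtain ⟨η, hη, ⟨hηr, hnη⟩, hη0⟩ :=
    ((eventually_all.2 hEη).and (hsmall.and self_mem_nhdsWithin)).exists
  refine ⟨cutBox I r η, cutBox_mem_nhds_one hr hη0, hrO η hηr, hc I r η hη0 hηr hnη,
    ⋂ p, E p, .iInter hE, ?_, fun x hx g hg hgx => conj_expDiag_mem_cutBox hg fun p hp q hq => ?_⟩
  · rw [compl_iInter]
    exact (measure_iUnion_le _).trans ((ENNReal.tsum_le_tsum hEδ).trans hδβ.le)
  · by_contra! hlt
    exact hη (p, q) hp hq x (mem_iInter.1 hx _) g hg hlt.le (mem_iInter.1 hgx _)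

end NoReturns

section Rigidity

theorem forall_ne_of_trans_of_cut {ι : Type*} {R : ι → ι → Prop}
    (htrans : ∀ i j k, i ≠ j → j ≠ k → i ≠ k → R i j → R j k → R i k)
    (hcut : ∀ I : Set ι, I.Nonempty → Iᶜ.Nonempty → ∃ i ∈ I, ∃ j ∉ I, R i j) {i k : ι}
    (hik : i ≠ k) : R i k := by
  by_contra hR
  obtain ⟨j, hj, l, hl, hjl⟩ := hcut {j | j = i ∨ R i j} ⟨i, .inl rfl⟩
    ⟨k, fun h => h.elim hik.symm hR⟩
  rw [mem_ofPred_eq, not_or] at hl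
  rcases hj with rfl | hij
  · exact hl.2 hjl
  rcases eq_or_ne i j with rfl | hne
  · exact hl.2 hjl
  · refine hl.2 (htrans i j l hne ?_ (Ne.symm hl.1) hij hjl)
    rintro rfl
    exact hl.2 hij

theorem hasReturns_of_measurePreserving_smul {G X : Type*} [Group G] [MulAction G X]
    [MeasurableSpace X] {μ : Measure X} [IsProbabilityMeasure μ] {S : Set G} {g : G} (hg : g ∈ S)
    (hμ : MeasurePreserving (g • · : X → X) μ μ) : HasReturns μ S := by
  refine ⟨1 / 2, by simp, fun Z hZ hZμ => ?_⟩
  have hlt : μ univ < (2 : ℕ) * μ Z := by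
    rw [measure_univ, Nat.cast_ofNat, mul_comm]
    exact (ENNReal.div_lt_iff (by simp) (by simp)).1 hZμ
  obtain ⟨z, hz, m, ⟨hm0, hm2⟩, hzm⟩ :=
    hμ.exists_mem_iterate_mem_of_measure_univ_lt_mul_measure hZ.nullMeasurableSet hlt
  obtain rfl : m = 1 := by lia
  exact ⟨z, hz, g, hg, hzm⟩

variable {n : ℕ} {X : Type*} [TopologicalSpace X] [T2Space X] [LocallyCompactSpace X]
  [SecondCountableTopology X] [MeasurableSpace X] [BorelSpace X] [MulAction (SLR n) X]
  [ContinuousSMul (SLR n) X] {μ : Measure X} [IsProbabilityMeasure μ]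

theorem IsErgodicAction.measurePreserving_rootHom_smul
    (hμ : IsErgodicAction (posDiagSubgroup n) μ) {i j k : Fin n} (hij : i ≠ j) (hjk : j ≠ k)
    (hik : i ≠ k) (hV : HasReturns μ (rootHom hij '' {0}ᶜ))
    (hU : HasReturns μ (rootHom hjk '' {0}ᶜ)) (s : ℝ) :
    MeasurePreserving (rootHom hik s • · : X → X) μ μ := by
  have hclosed : IsClosedEmbedding (Subtype.val : posDiagSubgroup n → SLR n) :=
    isClosed_posDiagSubgroup.isClosedEmbedding_subtypeVal
  have := hclosed.locallyCompactSpace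
  have := hclosed.sigmaCompactSpace
  refine hμ.measurePreserving_smul_of_hasReturns
    (fun g hg h hh => commute_of_mem_posDiagSubgroup hg hh)
    (expDiag_mem_posDiagSubgroup (Pi.single j 1)) (expDiag_mem_posDiagSubgroup (Pi.single i (-1)))
    (continuous_rootHom hjk) (continuous_rootHom hik) (rescales_rootHom hjk) (rescales_rootHom hik)
    (commute_expDiag_rootHom hjk ?_) (commute_expDiag_rootHom hik ?_) (fun t => ?_)
    (tendsto_conj_expDiag_pow_rootHom hij ?_) (tendsto_conj_expDiag_pow_rootHom hij ?_)
    (rootHom_mul_rootHom hij hjk hik) hU hV s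
  · simp [hij.symm, hik.symm]
  · simp [hij, hjk.symm]
  · rw [inv_expDiag]
    exact tendsto_conj_expDiag_pow_rootHom hjk (by simp [hjk.symm]) t
  · simp [hij]
  · simp [hij.symm]

theorem IsErgodicAction.hasReturns_rootHom [MulAction.IsPretransitive (SLR n) X]
    (hμ : IsErgodicAction (posDiagSubgroup n) μ)
    (hent : ∀ α : Fin n → ℝ, expDiag n α ≠ 1 → ksEntropy (expDiag n α • · : X → X) μ ≠ 0)
    {i j : Fin n} (hij : i ≠ j) : HasReturns μ (rootHom hij '' {0}ᶜ) := by
  let R (i j : Fin n) : Prop := ∀ hij : i ≠ j, HasReturns μ (rootHom hij '' {0}ᶜ)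
  refine forall_ne_of_trans_of_cut (R := R) (fun i j k hij hjk _ hV hU hik => ?_)
    (fun I ⟨i, hi⟩ ⟨j, hj⟩ => ?_) hij hij
  · exact hasReturns_of_measurePreserving_smul (mem_image_of_mem _ (one_ne_zero (α := ℝ)))
      (hμ.measurePreserving_rootHom_smul hij hjk hik (hV hij) (hU hjk) 1)
  · by_contra! hI
    have hij : I.indicator (fun _ => Real.log 2) i ≠ I.indicator (fun _ => Real.log 2) j := by
      rw [indicator_of_mem hi, indicator_of_notMem hj]
      exact (Real.log_pos one_lt_two).ne'
    exact hent _ (expDiag_ne_one hij) <| ksEntropy_expDiag_smul_eq_zero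
      (fun α => hμ.measurePreserving _ (expDiag_mem_posDiagSubgroup α))
      fun i hi j hj hij h => hI i hi j hj fun _ => h

theorem IsErgodicAction.measurePreserving_smul (hn : 3 ≤ n)
    (hμ : IsErgodicAction (posDiagSubgroup n) μ)
    (hR : ∀ {i j : Fin n} (hij : i ≠ j), HasReturns μ (rootHom hij '' {0}ᶜ)) (g : SLR n) :
    MeasurePreserving (g • · : X → X) μ μ := by
  have : Nontrivial (Fin n) := Fin.nontrivial_iff_two_le.2 (by lia)
  have hmul (g h : SLR n) (hg : MeasurePreserving (g • · : X → X) μ μ)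
      (hh : MeasurePreserving (h • · : X → X) μ μ) :
      MeasurePreserving ((g * h) • · : X → X) μ μ := by
    simpa only [mul_smul, Function.comp_def] using hg.comp hh
  have hroot {i k : Fin n} (hik : i ≠ k) (s : ℝ) :
      MeasurePreserving (rootHom hik s • · : X → X) μ μ := by
    obtain ⟨j, hji, hjk⟩ := Fin.exists_ne_and_ne_of_two_lt i k hn
    exact hμ.measurePreserving_rootHom_smul hji.symm hjk hik (hR _) (hR _) s
  refine Matrix.SpecialLinearGroup.diagonal_transvection_induction'
    (fun g => MeasurePreserving (g • · : X → X) μ μ) g (fun i j hij c hc => ?_)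
    (fun i j hij => hroot hij) hmul
  rw [diag2n_eq_rootHom_mul hij hc]
  exact hmul _ _ (hmul _ _ (hmul _ _ (hroot _ _) (hroot _ _)) (hroot _ _)) (hroot _ _)

end Rigidity

/-- Einsiedler–Katok: Let `n ≥ 3`, `G = SL(n,ℝ)`, `Γ < G` discrete, and
`H` the positive diagonal subgroup.  If `μ` is an `H`-invariant and `H`-ergodic
probability measure on `Γ\G` whose entropy with respect to every nontrivial
one-parameter subgroup of `H` is positive, then `μ` is the `G`-invariant probability
measure on `Γ\G` (so in particular `Γ` is a lattice). -/
theorem einsiedler_katok_positive_entropy_measures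
    (n : ℕ) (hn : 3 ≤ n) (Γ : Subgroup (SLR n)) (hΓ : DiscreteTopology Γ)
    (μ : Measure (XQuot Γ)) [IsProbabilityMeasure μ]
    (hinv : ∀ g : SLR n, IsPosDiag g → Measure.map (rtQ Γ g) μ = μ)
    (herg : ∀ A : Set (XQuot Γ), MeasurableSet A →
      (∀ g : SLR n, IsPosDiag g → rtQ Γ g ⁻¹' A = A) → μ A = 0 ∨ μ A = 1)
    (hent : ∀ a : ℝ → SLR n, (∀ s t, a (s + t) = a s * a t) → Continuous a →
      (∀ t, IsPosDiag (a t)) → (∃ t, a t ≠ 1) →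
      0 < ksEntropy (rtQ Γ (a 1)) μ) :
    ∀ g : SLR n, Measure.map (rtQ Γ g) μ = μ := by
  have := t2Space_XQuot Γ
  have hrtQ (g : SLR n) : (g⁻¹ • · : XQuot Γ → XQuot Γ) = rtQ Γ g := funext (inv_smul_XQuot Γ g)
  have hμ : IsErgodicAction (posDiagSubgroup n) μ :=
    { measurePreserving h hh := ⟨measurable_const_smul h,
        hinv h⁻¹ (mem_posDiagSubgroup.1 (inv_mem hh))⟩
      measure_eq_zero_or_one A hA hinvA := herg A hA fun g hg => by
        rw [← hrtQ, hinvA _ (inv_mem (mem_posDiagSubgroup.2 hg))] }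
  have hpos (α : Fin n → ℝ) (hα : expDiag n α ≠ 1) :
      ksEntropy (expDiag n α • · : XQuot Γ → XQuot Γ) μ ≠ 0 := by
    rw [← inv_ne_one, inv_expDiag, ← one_smul ℝ (-α)] at hα
    have h := hent (fun t => expDiag n (t • -α))
      (fun s t => by rw [add_smul, AddChar.map_add_eq_mul])
      (continuous_expDiag.comp (by fun_prop)) (fun t => isPosDiag_expDiag _) ⟨1, hα⟩
    rw [one_smul, ← inv_expDiag, ← hrtQ, inv_inv] at h
    exact h.ne'
  intro g
  rw [← hrtQ]
  exact (hμ.measurePreserving_smul hn (hμ.hasReturns_rootHom hpos) g⁻¹).map_eq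
end

section
/- Let m and n be relatively prime integers, each at least 2. If μ is a Borel probability measure on 𝕋 that is invariant under ×m and is N_n-recurrent, then μ is Lebesgue measure on 𝕋. -/
open MeasureTheory

/-- The subgroup `N_n = { q/nᵏ mod 1 }` of `n`-adic rationals in `𝕋`. -/
def nAdicRationals (n : ℕ) : Set UnitAddCircle :=
  {t | ∃ (k : ℕ) (q : ℤ), t = (((q : ℝ) / n ^ k : ℝ) : UnitAddCircle)}

/-- A Borel probability measure `μ` on `𝕋` is `N_n`-recurrent if for every Borel set
`B` of positive measure and `μ`-a.e. `x ∈ B` there are infinitely many `t ∈ N_n` with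
`x + t ∈ B`. -/
def NnRecurrent (n : ℕ) (μ : Measure UnitAddCircle) : Prop :=
  ∀ B : Set UnitAddCircle, MeasurableSet B → 0 < μ B →
    ∀ᵐ x ∂μ, x ∈ B → {t : UnitAddCircle | t ∈ nAdicRationals n ∧ x + t ∈ B}.Infinite

/-!
For a finite subgroup `D` of `𝕋`, let `f_D` be the density of `μ` with respect to the sum `ν_D` of
its translates by `D`. The values of `f_D` along an orbit `x + D` add up to `1`. If `D_K` increases
to `N_n`, then `f_{D_K}` decreases, and its limit vanishes `μ`-almost everywhere: otherwise, by
recurrence, an orbit would carry more than `1/ε` values exceeding some `ε > 0`. Hence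
`∫ f_{D_K} ∂μ → 0`.

Let `D_K` be the fractions of denominator `N = n ^ K` and let `S` be the sum over `k < N` of the
characters of frequency `a * m ^ k`, where `a ≠ 0`. Invariance under `×m` gives
`∫ S ∂μ = N * ∫ fourier a ∂μ`, and Cauchy-Schwarz gives
`|∫ S ∂μ|² ≤ (∫ |S|² ∂ν_{D_K}) * ∫ f_{D_K} ∂μ`. By orthogonality of characters on `D_K`, the sum of
`|S|²` over an orbit of `D_K` is at most `N` times the number of pairs `k, l < N` such that `N`
divides `a * m ^ k - a * m ^ l`, and lifting the exponent bounds that number by `c * N` with `c`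
independent of `K`. So `|∫ fourier a ∂μ|² ≤ c * ∫ f_{D_K} ∂μ`, and every nonzero Fourier coefficient
of `μ` vanishes.
-/

open Filter
open scoped ENNReal Topology

/-! ### Powers of `m` modulo powers of `n` -/

theorem emultiplicity_pow_sub_pow_of_sq_dvd {p x y : ℤ} (hp : Prime p) (hxy : p ^ 2 ∣ x - y)
    (hx : ¬ p ∣ x) (T : ℕ) :
    emultiplicity p (x ^ T - y ^ T) = emultiplicity p (x - y) + emultiplicity p (T : ℤ) := by
  obtain ⟨q, hpq⟩ : ∃ q : ℕ, p.natAbs = q := ⟨_, rfl⟩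
  have hq : q.Prime := hpq ▸ Int.prime_iff_natAbs_prime.1 hp
  have hassoc : Associated p q := hpq ▸ Int.associated_natAbs p
  simp only [← emultiplicity_eq_of_associated_left hassoc]
  rw [hassoc.dvd_iff_dvd_left] at hx
  rw [(hassoc.pow_pow (n := 2)).dvd_iff_dvd_left] at hxy
  rcases hq.eq_two_or_odd' with rfl | hodd
  · exact Int.two_pow_sub_pow' T (by simpa using hxy) (by simpa using hx)
  · rw [Int.emultiplicity_pow_sub_pow hq hodd ((dvd_pow_self _ two_ne_zero).trans hxy) hx,
      Int.natCast_emultiplicity]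

theorem dvd_mul_sub_one_mul_of_dvd_mul_pow_sub_one {M a x : ℤ} {T : ℕ} (hM : M ≠ 0)
    (hx : ∀ p, Prime p → p ∣ M → p ^ 2 ∣ x - 1) (h : M ∣ a * (x ^ T - 1)) :
    M ∣ a * (x - 1) * T := by
  rw [UniqueFactorizationMonoid.dvd_iff_emultiplicity_le hM] at h ⊢
  intro p hp
  by_cases hpM : p ∣ M
  · have hpx : ¬ p ∣ x := fun hdvd =>
      hp.not_dvd_one <|
        (dvd_sub_right hdvd).1 ((dvd_pow_self p two_ne_zero).trans (hx p hp hpM))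
    have lte := emultiplicity_pow_sub_pow_of_sq_dvd hp (hx p hp hpM) hpx T
    rw [one_pow] at lte
    simpa only [emultiplicity_mul hp, lte, add_assoc] using h p hp
  · simp only [emultiplicity_eq_zero.2 hpM, zero_le]

theorem exists_pow_dvd_mul_sub_of_pow_dvd_pow_sub_pow {m n : ℕ} (hm : 1 < m) (hn : n ≠ 0)
    (hmn : m.Coprime n) :
    ∃ C : ℕ, C ≠ 0 ∧ ∀ (K k l : ℕ) (a : ℤ),
      (n : ℤ) ^ K ∣ a * m ^ k - a * m ^ l → (n : ℤ) ^ K ∣ a * C * (k - l) := by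
  -- Exponent `φ(n²)` rather than `φ(n)`: lifting the exponent at `2` needs `4 ∣ m ^ s - 1`.
  set s := Nat.totient (n ^ 2)
  have hms : 1 < m ^ s := Nat.one_lt_pow (Nat.totient_pos.2 (by positivity)).ne' hm
  have hcast : ((m ^ s - 1 : ℕ) : ℤ) = (m : ℤ) ^ s - 1 := by
    rw [Nat.cast_sub hms.le, Nat.cast_pow, Nat.cast_one]
  have hsq : (n : ℤ) ^ 2 ∣ (m : ℤ) ^ s - 1 := by
    rw [← hcast]
    exact_mod_cast (Nat.modEq_iff_dvd' hms.le).1 (Nat.ModEq.pow_totient (hmn.pow_right 2)).symm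
  refine ⟨m ^ s - 1, by lia, fun K k l a h => ?_⟩
  rw [hcast]
  wlog hlk : l ≤ k generalizing k l with ordered
  · have := ordered l k (by rwa [← dvd_neg, neg_sub]) (by lia)
    rwa [← dvd_neg, ← mul_neg, neg_sub] at this
  obtain ⟨T, rfl⟩ := Nat.exists_eq_add_of_le hlk
  have hT : (n : ℤ) ^ K ∣ a * ((m : ℤ) ^ T - 1) := by
    have hco : IsCoprime ((n : ℤ) ^ K) ((m : ℤ) ^ l) := (Nat.isCoprime_iff_coprime.2 hmn.symm).pow
    refine hco.dvd_of_dvd_mul_left (h.trans (dvd_of_eq ?_))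
    ring
  have hsT : (n : ℤ) ^ K ∣ a * (((m : ℤ) ^ s) ^ T - 1) := by
    refine hT.trans (mul_dvd_mul_left a ?_)
    rw [pow_right_comm]
    exact sub_one_dvd_pow_sub_one _ s
  have hprime : ∀ p : ℤ, Prime p → p ∣ (n : ℤ) ^ K → p ^ 2 ∣ (m : ℤ) ^ s - 1 :=
    fun p hp hpn => (pow_dvd_pow_of_dvd (hp.dvd_of_dvd_pow hpn) 2).trans hsq
  have := dvd_mul_sub_one_mul_of_dvd_mul_pow_sub_one (by positivity) hprime hsT
  simpa using this

theorem card_filter_dvd_mul_sub_le {c : ℕ} (hc : c ≠ 0) (N : ℕ) (l : ℤ) :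
    ((Finset.range N).filter fun k : ℕ => (N : ℤ) ∣ c * (k - l)).card ≤ c := by
  rcases Nat.eq_zero_or_pos N with rfl | hN
  · simp
  -- The numbers `c * k` are all congruent modulo `N`, so `k` is determined by `c * k / N < c`.
  have hmaps : ∀ k ∈ (Finset.range N).filter fun k : ℕ => (N : ℤ) ∣ c * (k - l),
      c * k / N ∈ Finset.range c := fun k hk =>
    Finset.mem_range.2 <| (Nat.div_lt_iff_lt_mul hN).2 <|
      Nat.mul_lt_mul_of_pos_left (Finset.mem_range.1 (Finset.mem_filter.1 hk).1)
        (Nat.pos_of_ne_zero hc)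
  refine (Finset.card_le_card_of_injOn _ hmaps fun k hk k' hk' hdiv => ?_).trans
    (Finset.card_range c).le
  have hmod : c * k % N = c * k' % N := by
    refine Nat.modEq_iff_dvd.2 ?_
    have hsub := dvd_sub (Finset.mem_filter.1 hk').2 (Finset.mem_filter.1 hk).2
    rw [← mul_sub, sub_sub_sub_cancel_right, mul_sub] at hsub
    exact_mod_cast hsub
  refine Nat.eq_of_mul_eq_mul_left (Nat.pos_of_ne_zero hc) ?_
  calc c * k = N * (c * k / N) + c * k % N := (Nat.div_add_mod _ _).symm
    _ = N * (c * k' / N) + c * k' % N := congrArg₂ (N * · + ·) hdiv hmod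
    _ = c * k' := Nat.div_add_mod _ _

theorem exists_card_filter_pow_dvd_le {m n : ℕ} (hm : 1 < m) (hn : n ≠ 0) (hmn : m.Coprime n)
    {a : ℤ} (ha : a ≠ 0) :
    ∃ c : ℕ, ∀ K l : ℕ, ((Finset.range (n ^ K)).filter fun k : ℕ =>
      ((n ^ K : ℕ) : ℤ) ∣ a * m ^ k - a * m ^ l).card ≤ c := by
  obtain ⟨C, hC, hdvd⟩ := exists_pow_dvd_mul_sub_of_pow_dvd_pow_sub_pow hm hn hmn
  refine ⟨(a * C).natAbs, fun K l => le_trans (Finset.card_le_card ?_)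
    (card_filter_dvd_mul_sub_le (by simp [ha, hC]) (n ^ K) l)⟩
  refine Finset.monotone_filter_right _ fun k _ hk => ?_
  have habs : a * C * (k - l) ∣ ((a * C).natAbs : ℤ) * (k - l) :=
    mul_dvd_mul_right (Int.dvd_natAbs.2 dvd_rfl) _
  push_cast at hk ⊢
  exact (hdvd K k l a hk).trans (by simpa using habs)

/-! ### Densities along orbits of a subgroup -/

section Measure

variable {α : Type*} [MeasurableSpace α]

theorem rnDeriv_le_rnDeriv_of_le {μ ν ν' : Measure α} [SigmaFinite ν]
    [μ.HaveLebesgueDecomposition ν] (hμν : μ ≪ ν) (hν : ν ≤ ν') :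
    μ.rnDeriv ν' ≤ᵐ[ν] μ.rnDeriv ν := by
  refine ae_le_of_forall_setLIntegral_le_of_sigmaFinite (Measure.measurable_rnDeriv _ _)
    fun s _ _ => ?_
  calc ∫⁻ x in s, μ.rnDeriv ν' x ∂ν
      ≤ ∫⁻ x in s, μ.rnDeriv ν' x ∂ν' := lintegral_mono' (Measure.restrict_mono le_rfl hν) le_rfl
    _ ≤ μ s := Measure.setLIntegral_rnDeriv_le s
    _ = ∫⁻ x in s, μ.rnDeriv ν x ∂ν := (Measure.setLIntegral_rnDeriv hμν s).symm

theorem sq_lintegral_le_lintegral_sq_mul_lintegral_rnDeriv {μ ν : Measure α}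
    [μ.HaveLebesgueDecomposition ν] (hμν : μ ≪ ν) {g : α → ℝ≥0∞} (hg : AEMeasurable g ν) :
    (∫⁻ x, g x ∂μ) ^ 2 ≤ (∫⁻ x, g x ^ 2 ∂ν) * ∫⁻ x, μ.rnDeriv ν x ∂μ := by
  have hf : AEMeasurable (μ.rnDeriv ν) ν := (Measure.measurable_rnDeriv μ ν).aemeasurable
  have holder := ENNReal.lintegral_mul_le_Lp_mul_Lq ν Real.HolderConjugate.two_two hf hg
  simp only [Pi.mul_apply, lintegral_rnDeriv_mul hμν hg, ENNReal.rpow_two, one_div] at holder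
  calc (∫⁻ x, g x ∂μ) ^ 2
      ≤ ((∫⁻ x, μ.rnDeriv ν x ^ 2 ∂ν) ^ (2 : ℝ)⁻¹ * (∫⁻ x, g x ^ 2 ∂ν) ^ (2 : ℝ)⁻¹) ^ 2 := by gcongr
    _ = (∫⁻ x, g x ^ 2 ∂ν) * ∫⁻ x, μ.rnDeriv ν x ^ 2 ∂ν := by
      simp only [mul_pow, ← ENNReal.rpow_two, ENNReal.rpow_inv_rpow two_ne_zero, mul_comm]
    _ = (∫⁻ x, g x ^ 2 ∂ν) * ∫⁻ x, μ.rnDeriv ν x ∂μ := by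
      simp only [sq (μ.rnDeriv ν _), lintegral_rnDeriv_mul hμν hf]

end Measure

section Translates

variable {G : Type*} [AddGroup G] [MeasurableSpace G]

/-- The sum `∑ t ∈ D, δ_t * μ` of the translates of `μ` by a subgroup `D`. -/
noncomputable def translateSum (D : AddSubgroup G) (μ : Measure G) : Measure G :=
  Measure.sum fun t : D => μ.map (· + (t : G))

/-- The density of `μ` with respect to the sum of its translates by `D`: at `x` it is the
conditional probability of `x` within its orbit `x + D`. -/
noncomputable def orbitDensity (D : AddSubgroup G) (μ : Measure G) : G → ℝ≥0∞ :=
  μ.rnDeriv (translateSum D μ)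

/-- Recurrence of `μ` under translations by a set `Γ`: almost every point of a non-null set
returns to it under infinitely many `t ∈ Γ`. For `Γ = nAdicRationals n` this is `NnRecurrent n`. -/
def IsTranslationRecurrent (Γ : Set G) (μ : Measure G) : Prop :=
  ∀ B : Set G, MeasurableSet B → 0 < μ B → ∀ᵐ x ∂μ, x ∈ B → {t | t ∈ Γ ∧ x + t ∈ B}.Infinite

variable {D D' : AddSubgroup G} {μ : Measure G}

instance [Finite D] [IsFiniteMeasure μ] : IsFiniteMeasure (translateSum D μ) := by
  unfold translateSum
  infer_instance

theorem measurable_orbitDensity : Measurable (orbitDensity D μ) :=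
  Measure.measurable_rnDeriv _ _

theorem le_translateSum : μ ≤ translateSum D μ := by
  simpa [translateSum] using Measure.le_sum (fun t : D => μ.map (· + (t : G))) 0

theorem absolutelyContinuous_translateSum : μ ≪ translateSum D μ :=
  Measure.absolutelyContinuous_of_le le_translateSum

theorem translateSum_mono (h : D ≤ D') : translateSum D μ ≤ translateSum D' μ := by
  refine Measure.le_iff.2 fun s hs => ?_
  simp only [translateSum, Measure.sum_apply _ hs]
  exact ENNReal.tsum_mono_subtype (fun t => μ.map (· + t) s) h

theorem antitone_orbitDensity_ae {D : ℕ → AddSubgroup G} [∀ K, Finite (D K)] [IsFiniteMeasure μ]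
    (hD : Monotone D) :
    ∀ᵐ x ∂μ, Antitone fun K => orbitDensity (D K) μ x := by
  have hstep (K : ℕ) : ∀ᵐ x ∂μ, orbitDensity (D (K + 1)) μ x ≤ orbitDensity (D K) μ x :=
    absolutelyContinuous_translateSum.ae_le <| rnDeriv_le_rnDeriv_of_le
      absolutelyContinuous_translateSum (translateSum_mono (hD K.le_succ))
  filter_upwards [ae_all_iff.2 hstep] with x hx using antitone_nat_of_succ_le hx

variable [MeasurableAdd G]

theorem lintegral_translateSum {g : G → ℝ≥0∞} (hg : Measurable g) :
    ∫⁻ x, g x ∂translateSum D μ = ∑' t : D, ∫⁻ x, g (x + t) ∂μ := by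
  simp only [translateSum, lintegral_sum_measure, lintegral_map hg (measurable_add_const _)]

theorem measurePreserving_add_right_translateSum (t : D) :
    MeasurePreserving (· + (t : G)) (translateSum D μ) (translateSum D μ) := by
  have hmeas (s : G) : Measurable (· + s) := measurable_add_const s
  refine ⟨hmeas t, ?_⟩
  calc (translateSum D μ).map (· + (t : G))
      = Measure.sum ((fun s : D => μ.map (· + (s : G))) ∘ Equiv.addRight t) := by
        rw [translateSum, Measure.map_sum (hmeas t).aemeasurable]
        congr! 2 with s
        rw [Measure.map_map (hmeas t) (hmeas s)]
        simp [Function.comp_def, add_assoc]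
    _ = translateSum D μ := Measure.sum_comp_equiv _ _

theorem setLIntegral_orbitDensity_add [Finite D] [IsFiniteMeasure μ] (t : D) {s : Set G}
    (hs : MeasurableSet s) :
    ∫⁻ x in s, orbitDensity D μ (x + t) ∂translateSum D μ = μ.map (· + ((-t : D) : G)) s := by
  have hs' : MeasurableSet ((· + ((-t : D) : G)) ⁻¹' s) := measurable_add_const _ hs
  have hpre : (· + (t : G)) ⁻¹' ((· + ((-t : D) : G)) ⁻¹' s) = s := by
    simp [Set.preimage_preimage]
  rw [Measure.map_apply (measurable_add_const _) hs,
    ← Measure.setLIntegral_rnDeriv (absolutelyContinuous_translateSum (D := D) (μ := μ)),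
    ← (measurePreserving_add_right_translateSum t).setLIntegral_comp_preimage hs'
      (Measure.measurable_rnDeriv _ _), hpre]
  rfl

theorem tsum_orbitDensity_add_ae_eq_one (D : AddSubgroup G) [Finite D] (μ : Measure G)
    [IsFiniteMeasure μ] :
    ∀ᵐ x ∂translateSum D μ, ∑' t : D, orbitDensity D μ (x + t) = 1 := by
  have hmeas (t : D) : Measurable fun x => orbitDensity D μ (x + t) :=
    measurable_orbitDensity.comp (measurable_add_const _)
  refine ae_eq_of_forall_setLIntegral_eq_of_sigmaFinite (Measurable.tsum hmeas)
    measurable_const fun s hs _ => ?_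
  calc ∫⁻ x in s, ∑' t : D, orbitDensity D μ (x + t) ∂translateSum D μ
      = ∑' t : D, μ.map (· + ((-t : D) : G)) s := by
        rw [lintegral_tsum fun t => (hmeas t).aemeasurable]
        simp only [setLIntegral_orbitDensity_add _ hs]
    _ = ∑' t : D, μ.map (· + (t : G)) s :=
        (Equiv.neg D).tsum_eq fun t : D => μ.map (· + (t : G)) s
    _ = ∫⁻ _ in s, 1 ∂translateSum D μ := by
        rw [setLIntegral_one, translateSum, Measure.sum_apply _ hs]

theorem sq_lintegral_le_of_sum_sq_le [Finite D] [IsProbabilityMeasure μ] {g : G → ℝ≥0∞}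
    (hg : Measurable g) {C : ℝ≥0∞} (hC : ∀ x, ∑' t : D, g (x + t) ^ 2 ≤ C) :
    (∫⁻ x, g x ∂μ) ^ 2 ≤ C * ∫⁻ x, orbitDensity D μ x ∂μ := by
  have hsq : ∫⁻ x, g x ^ 2 ∂translateSum D μ ≤ C :=
    calc ∫⁻ x, g x ^ 2 ∂translateSum D μ
        = ∫⁻ x, ∑' t : D, g (x + t) ^ 2 ∂μ := by
          rw [lintegral_translateSum (hg.pow_const 2), lintegral_tsum]
          exact fun t => ((hg.comp (measurable_add_const _)).pow_const 2).aemeasurable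
      _ ≤ ∫⁻ _, C ∂μ := lintegral_mono hC
      _ = C := by simp
  exact (sq_lintegral_le_lintegral_sq_mul_lintegral_rnDeriv absolutelyContinuous_translateSum
    hg.aemeasurable).trans (mul_le_mul_left hsq _)

variable {D : ℕ → AddSubgroup G} [∀ K, Finite (D K)] [IsFiniteMeasure μ]

theorem ae_exists_orbitDensity_lt (hD : Monotone D)
    (hrec : IsTranslationRecurrent (⋃ K, (D K : Set G)) μ) {ε : ℝ≥0∞} (hε : ε ≠ 0) :
    ∀ᵐ x ∂μ, ∃ K, orbitDensity (D K) μ x < ε := by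
  set B : Set G := ⋂ K, {x | ε ≤ orbitDensity (D K) μ x}
  have hB : MeasurableSet B :=
    .iInter fun K => measurableSet_le measurable_const measurable_orbitDensity
  suffices μ B = 0 by
    filter_upwards [measure_eq_zero_iff_ae_notMem.1 this] with x hx
    simpa [B] using hx
  by_contra hpos
  have hsum : ∀ᵐ x ∂μ, ∀ K, ∑' t : D K, orbitDensity (D K) μ (x + t) = 1 :=
    ae_all_iff.2 fun K => absolutelyContinuous_translateSum.ae_le
      (tsum_orbitDensity_add_ae_eq_one (D K) μ)
  refine hpos (measure_eq_zero_iff_ae_notMem.2 ?_)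
  filter_upwards [hrec B hB (pos_iff_ne_zero.2 hpos), hsum] with x hreturn hsum hxB
  obtain ⟨M, hM⟩ := ENNReal.exists_nat_mul_gt hε ENNReal.one_ne_top
  obtain ⟨F, hF, rfl⟩ := (hreturn hxB).exists_subset_card_eq M
  obtain ⟨K, hK⟩ : ∃ K, (F : Set G) ⊆ D K :=
    (Monotone.directed_le fun _ _ hij => SetLike.coe_subset_coe.2
      (hD hij)).exists_mem_subset_of_finset_subset_biUnion fun _ ht => (hF ht).1
  refine hM.not_ge ?_
  calc (F.card : ℝ≥0∞) * ε = ∑ _ ∈ F, ε := by rw [Finset.sum_const, nsmul_eq_mul]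
    _ ≤ ∑ t ∈ F, orbitDensity (D K) μ (x + t) :=
        Finset.sum_le_sum fun _ ht => Set.mem_iInter.1 (hF ht).2 K
    _ = ∑' t : (F : Set G), orbitDensity (D K) μ (x + t) :=
        (F.tsum_subtype fun t => orbitDensity (D K) μ (x + t)).symm
    _ ≤ ∑' t : D K, orbitDensity (D K) μ (x + t) :=
        ENNReal.tsum_mono_subtype (fun t => orbitDensity (D K) μ (x + t)) hK
    _ = 1 := hsum K

theorem tendsto_orbitDensity_zero_ae (hD : Monotone D)
    (hrec : IsTranslationRecurrent (⋃ K, (D K : Set G)) μ) :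
    ∀ᵐ x ∂μ, Tendsto (fun K => orbitDensity (D K) μ x) atTop (𝓝 0) := by
  obtain ⟨ε, -, hεpos, hεlim⟩ := exists_seq_strictAnti_tendsto' (zero_lt_one' ℝ≥0∞)
  have hlt : ∀ᵐ x ∂μ, ∀ i, ∃ K, orbitDensity (D K) μ x < ε i :=
    ae_all_iff.2 fun i => ae_exists_orbitDensity_lt hD hrec (hεpos i).1.ne'
  filter_upwards [antitone_orbitDensity_ae hD, hlt] with x hanti hlt
  have hinf : ⨅ K, orbitDensity (D K) μ x = 0 :=
    le_antisymm (ge_of_tendsto' hεlim fun i => (hlt i).elim fun K hK => (iInf_le _ K).trans hK.le)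
      zero_le
  exact hinf ▸ tendsto_atTop_iInf hanti

theorem tendsto_lintegral_orbitDensity_zero (hD : Monotone D)
    (hrec : IsTranslationRecurrent (⋃ K, (D K : Set G)) μ) :
    Tendsto (fun K => ∫⁻ x, orbitDensity (D K) μ x ∂μ) atTop (𝓝 0) := by
  rw [← lintegral_zero (μ := μ)]
  exact tendsto_lintegral_of_dominated_convergence 1 (fun _ => measurable_orbitDensity)
    (fun _ => absolutelyContinuous_translateSum.ae_le
      (Measure.rnDeriv_le_one_of_le le_translateSum))
    (by simp) (tendsto_orbitDensity_zero_ae hD hrec)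

end Translates

/-! ### Fourier coefficients on the circle -/

section Fourier

variable {T : ℝ}

theorem fourier_add_apply (b : ℤ) (x y : AddCircle T) :
    fourier b (x + y) = fourier b x * fourier b y := by
  simp only [fourier_apply, smul_add, AddCircle.toCircle_add, Circle.coe_mul]

theorem norm_sq_sum_fourier {ι : Type*} (s : Finset ι) (b : ι → ℤ) (x : AddCircle T) :
    ((‖∑ k ∈ s, fourier (b k) x‖ ^ 2 : ℝ) : ℂ) = ∑ l ∈ s, ∑ k ∈ s, fourier (b k - b l) x := by
  rw [Complex.ofReal_pow, ← Complex.mul_conj', map_sum, Finset.sum_mul_sum, Finset.sum_comm]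
  simp only [sub_eq_add_neg, fourier_add, fourier_neg]

theorem integral_fourier_mul_pow {m : ℕ} {μ : Measure (AddCircle T)}
    (hinv : μ.map (fun x => m • x) = μ) (a : ℤ) (k : ℕ) :
    ∫ x, fourier (a * m ^ k) x ∂μ = ∫ x, fourier a x ∂μ := by
  induction k with
  | zero => rw [pow_zero, mul_one]
  | succ k ih =>
    calc ∫ x, fourier (a * m ^ (k + 1)) x ∂μ = ∫ x, fourier (a * m ^ k) (m • x) ∂μ := by
          simp only [fourier_apply, pow_succ, ← mul_assoc, mul_zsmul, natCast_zsmul]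
      _ = ∫ x, fourier (a * m ^ k) x ∂μ.map (fun x => m • x) :=
          (integral_map (continuous_nsmul m).aemeasurable
            (fourier _).continuous.aestronglyMeasurable).symm
      _ = ∫ x, fourier a x ∂μ := by rw [hinv, ih]

/-- The subgroup `{ qT/N : q ∈ ℤ }` of fractions of denominator `N` in the circle `ℝ/Tℤ`;
for `N = 0` it is trivial, since `T / 0 = 0`. -/
noncomputable def fractionSubgroup (T : ℝ) (N : ℕ) : AddSubgroup (AddCircle T) :=
  AddSubgroup.zmultiples ((T / N : ℝ) : AddCircle T)

theorem fractionSubgroup_le_of_dvd {N N' : ℕ} (hN' : N' ≠ 0) (h : N ∣ N') :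
    fractionSubgroup T N ≤ fractionSubgroup T N' := by
  obtain ⟨d, rfl⟩ := h
  rw [Nat.mul_ne_zero_iff] at hN'
  rw [fractionSubgroup, AddSubgroup.zmultiples_le]
  refine AddSubgroup.mem_zmultiples_iff.2 ⟨d, ?_⟩
  have hd : (d : ℝ) ≠ 0 := Nat.cast_ne_zero.2 hN'.2
  have hN : (N : ℝ) ≠ 0 := Nat.cast_ne_zero.2 hN'.1
  rw [← AddCircle.coe_zsmul, zsmul_eq_mul]
  congr 1
  push_cast
  field_simp

variable [Fact (0 < T)] {N : ℕ} [NeZero N]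

theorem card_fractionSubgroup : Nat.card (fractionSubgroup T N) = N :=
  (Nat.card_zmultiples _).trans (AddCircle.addOrderOf_period_div (NeZero.pos N))

instance : Finite (fractionSubgroup T N) :=
  Nat.finite_of_card_ne_zero (card_fractionSubgroup.trans_ne (NeZero.ne N))

theorem sum_fourier_fractionSubgroup [Fintype (fractionSubgroup T N)] (b : ℤ) :
    ∑ t : fractionSubgroup T N, fourier b (t : AddCircle T) =
      if (N : ℤ) ∣ b then (N : ℂ) else 0 := by
  classical
  let ψ : AddChar (fractionSubgroup T N) ℂ :=
    { toFun t := fourier b (t : AddCircle T)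
      map_zero_eq_one' := fourier_eval_zero b
      map_add_eq_mul' s t := by rw [AddSubgroup.coe_add, fourier_add_apply] }
  have heval (t : AddCircle T) : fourier b t = 1 ↔ b • t = 0 := by
    rw [fourier_apply, Circle.coe_eq_one, ← AddCircle.toCircle_zero,
      (AddCircle.injective_toCircle (Fact.out : 0 < T).ne').eq_iff]
  have hψ : ψ = 0 ↔ (N : ℤ) ∣ b :=
    calc ψ = 0 ↔ ∀ t ∈ fractionSubgroup T N, b • t = 0 := by
          simp only [← heval, ψ, DFunLike.ext_iff, Subtype.forall]
          rfl
      _ ↔ b • ((T / N : ℝ) : AddCircle T) = 0 := by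
          simp only [fractionSubgroup, AddSubgroup.mem_zmultiples_iff, forall_exists_index,
            forall_apply_eq_imp_iff]
          exact ⟨fun h => by simpa using h 1, fun h q => by rw [smul_comm, h, smul_zero]⟩
      _ ↔ (N : ℤ) ∣ b := by
          rw [← addOrderOf_dvd_iff_zsmul_eq_zero, AddCircle.addOrderOf_period_div (NeZero.pos N)]
  have hcard : Fintype.card (fractionSubgroup T N) = N := by
    rw [← Nat.card_eq_fintype_card, card_fractionSubgroup]
  have hsum := ψ.sum_eq_ite
  simp only [hcard, hψ] at hsum
  exact hsum

theorem sum_norm_sq_sum_fourier_le [Fintype (fractionSubgroup T N)] {ι : Type*} {s : Finset ι}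
    {b : ι → ℤ} {c : ℕ} (hc : ∀ l ∈ s, (s.filter fun k => (N : ℤ) ∣ b k - b l).card ≤ c)
    (x : AddCircle T) :
    ∑ t : fractionSubgroup T N, ‖∑ k ∈ s, fourier (b k) (x + t : AddCircle T)‖ ^ 2 ≤
      s.card * (c * N : ℝ) := by
  have hexpand : ((∑ t : fractionSubgroup T N,
        ‖∑ k ∈ s, fourier (b k) (x + t : AddCircle T)‖ ^ 2 : ℝ) : ℂ) =
      ∑ l ∈ s, ∑ k ∈ s with (N : ℤ) ∣ b k - b l, fourier (b k - b l) x * N := by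
    rw [Complex.ofReal_sum]
    simp only [norm_sq_sum_fourier]
    rw [Finset.sum_comm]
    refine Finset.sum_congr rfl fun l _ => ?_
    rw [Finset.sum_comm, Finset.sum_filter]
    simp only [fourier_add_apply, ← Finset.mul_sum, sum_fourier_fractionSubgroup, mul_ite, mul_zero]
  rw [← Complex.norm_of_nonneg (Finset.sum_nonneg fun _ _ => sq_nonneg _), hexpand]
  calc ‖∑ l ∈ s, ∑ k ∈ s with (N : ℤ) ∣ b k - b l, fourier (b k - b l) x * N‖
      ≤ ∑ l ∈ s, ∑ k ∈ s with (N : ℤ) ∣ b k - b l, ‖fourier (b k - b l) x * N‖ :=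
        norm_sum_le_of_le _ fun _ _ => norm_sum_le _ _
    _ = ∑ l ∈ s, (s.filter fun k => (N : ℤ) ∣ b k - b l).card * (N : ℝ) := by
        simp only [norm_mul, fourier_apply, Circle.norm_coe, one_mul, Complex.norm_natCast,
          Finset.sum_const, nsmul_eq_mul]
    _ ≤ ∑ _ ∈ s, c * (N : ℝ) := by
        gcongr with _ hl
        exact hc _ hl
    _ = s.card * (c * N : ℝ) := by rw [Finset.sum_const, nsmul_eq_mul]

theorem sq_enorm_integral_fourier_le {m c : ℕ} {a : ℤ} {μ : Measure (AddCircle T)}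
    [IsProbabilityMeasure μ] (hinv : μ.map (fun x => m • x) = μ)
    (hc : ∀ l ∈ Finset.range N, ((Finset.range N).filter fun k : ℕ =>
      (N : ℤ) ∣ a * m ^ k - a * m ^ l).card ≤ c) :
    ‖∫ x, fourier a x ∂μ‖ₑ ^ 2 ≤ c * ∫⁻ x, orbitDensity (fractionSubgroup T N) μ x ∂μ := by
  have := Fintype.ofFinite (fractionSubgroup T N)
  set S : AddCircle T → ℂ := fun x => ∑ k ∈ Finset.range N, fourier (a * m ^ k) x
  have hS : Continuous S := continuous_finsetSum _ fun k _ => (fourier _).continuous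
  have hintegral : ∫ x, S x ∂μ = N * ∫ x, fourier a x ∂μ := by
    rw [integral_finsetSum _ fun k _ =>
      (fourier _).continuous.integrable_of_hasCompactSupport (.of_compactSpace _)]
    simp only [integral_fourier_mul_pow hinv, Finset.sum_const, Finset.card_range, nsmul_eq_mul]
  have horbit (x : AddCircle T) :
      ∑' t : fractionSubgroup T N, ‖S (x + t)‖ₑ ^ 2 ≤ (N : ℝ≥0∞) * (c * N) := by
    have hreal := ENNReal.ofReal_le_ofReal (sum_norm_sq_sum_fourier_le hc x)
    rw [ENNReal.ofReal_sum_of_nonneg fun _ _ => sq_nonneg _, Finset.card_range] at hreal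
    simp only [ENNReal.ofReal_pow (norm_nonneg _), ofReal_norm] at hreal
    rw [tsum_fintype]
    exact_mod_cast hreal
  have hN : (N : ℝ≥0∞) ^ 2 ≠ 0 := pow_ne_zero 2 (Nat.cast_ne_zero.2 (NeZero.ne N))
  refine (ENNReal.mul_le_mul_iff_right hN (by finiteness)).1 ?_
  calc (N : ℝ≥0∞) ^ 2 * ‖∫ x, fourier a x ∂μ‖ₑ ^ 2
      = ‖∫ x, S x ∂μ‖ₑ ^ 2 := by 
        rw [hintegral, enorm_mul, mul_pow, enorm_eq_nnnorm (N : ℂ), Complex.nnnorm_natCast,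
          ENNReal.coe_natCast]
    _ ≤ (∫⁻ x, ‖S x‖ₑ ∂μ) ^ 2 := by gcongr; exact enorm_integral_le_lintegral_enorm S
    _ ≤ (N : ℝ≥0∞) * (c * N) * ∫⁻ x, orbitDensity (fractionSubgroup T N) μ x ∂μ :=
        sq_lintegral_le_of_sum_sq_le hS.enorm.measurable horbit
    _ = (N : ℝ≥0∞) ^ 2 * (c * ∫⁻ x, orbitDensity (fractionSubgroup T N) μ x ∂μ) := by ring

open BoundedContinuousFunction in
theorem ext_of_integral_fourier_eq {μ ν : Measure (AddCircle T)} [IsFiniteMeasure μ]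
    [IsFiniteMeasure ν] (h : ∀ a : ℤ, ∫ x, fourier a x ∂μ = ∫ x, fourier a x ∂ν) : μ = ν := by
  have hint (ρ : Measure (AddCircle T)) [IsFiniteMeasure ρ] (f : C(AddCircle T, ℂ)) :
      Integrable f ρ := f.continuous.integrable_of_hasCompactSupport (.of_compactSpace _)
  have hspan {f : C(AddCircle T, ℂ)} (hf : f ∈ Submodule.span ℂ (Set.range fourier)) :
      ∫ x, f x ∂μ = ∫ x, f x ∂ν := by
    induction hf using Submodule.span_induction with
    | mem f hf =>
      obtain ⟨a, rfl⟩ := hf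
      exact h a
    | zero => simp only [ContinuousMap.zero_apply, integral_zero]
    | add f₁ f₂ _ _ h₁ h₂ =>
      simp only [ContinuousMap.add_apply, integral_add (hint _ _) (hint _ _), h₁, h₂]
    | smul c f _ hf => simp only [ContinuousMap.smul_apply, integral_smul, hf]
  refine ext_of_forall_mem_subalgebra_integral_eq_of_polish (𝕜 := ℂ)
    (A := fourierSubalgebra.comap (toContinuousMapStarₐ ℂ)) ?_ fun g hg => ?_
  · refine Subalgebra.separatesPoints_monotone (fun f hf => ?_) fourierSubalgebra_separatesPoints
    exact ⟨mkOfCompact f, hf, rfl⟩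
  · refine hspan (f := g.toContinuousMap) ?_
    rw [← fourierSubalgebra_coe]
    exact hg

theorem integral_fourier_eq_zero {a : ℤ} (ha : a ≠ 0) :
    ∫ x : AddCircle T, fourier a x = 0 := by
  have hshift : ∫ x : AddCircle T, fourier a x = -∫ x : AddCircle T, fourier a x := by
    rw [← integral_neg, ← integral_add_right_eq_self _ ((T / 2 / a : ℝ) : AddCircle T)]
    simp only [fourier_add_half_inv_index ha Fact.out]
  exact self_eq_neg.1 hshift

theorem integral_fourier_eq_zero_of_isTranslationRecurrent {m n : ℕ} (hm : 1 < m) (hn : n ≠ 0)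
    (hmn : m.Coprime n) {μ : Measure (AddCircle T)} [IsProbabilityMeasure μ]
    (hinv : μ.map (fun x => m • x) = μ)
    (hrec : IsTranslationRecurrent (⋃ K, (fractionSubgroup T (n ^ K) : Set (AddCircle T))) μ)
    {a : ℤ} (ha : a ≠ 0) : ∫ x, fourier a x ∂μ = 0 := by
  have : NeZero n := ⟨hn⟩
  obtain ⟨c, hc⟩ := exists_card_filter_pow_dvd_le hm hn hmn ha
  have hmono : Monotone fun K => fractionSubgroup T (n ^ K) := fun _ _ hKL =>
    fractionSubgroup_le_of_dvd (pow_ne_zero _ hn) (pow_dvd_pow n hKL)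
  have hlim : Tendsto (fun K => c * ∫⁻ x, orbitDensity (fractionSubgroup T (n ^ K)) μ x ∂μ) atTop
      (𝓝 0) := by
    simpa only [mul_zero] using ENNReal.Tendsto.const_mul
      (tendsto_lintegral_orbitDensity_zero hmono hrec) (.inr (ENNReal.natCast_ne_top c))
  have hsq : ‖∫ x, fourier a x ∂μ‖ₑ ^ 2 = 0 :=
    le_zero_iff.1 <| ge_of_tendsto' hlim fun K =>
      sq_enorm_integral_fourier_le hinv fun l _ => hc K l
  exact enorm_eq_zero.1 (pow_eq_zero_iff two_ne_zero |>.1 hsq)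

end Fourier

theorem iUnion_fractionSubgroup_pow (n : ℕ) :
    ⋃ K, (fractionSubgroup 1 (n ^ K) : Set UnitAddCircle) = nAdicRationals n := by
  ext t
  simp only [fractionSubgroup, nAdicRationals, Set.mem_iUnion, SetLike.mem_coe,
    AddSubgroup.mem_zmultiples_iff]
  refine exists₂_congr fun K q => ?_
  rw [← AddCircle.coe_zsmul, zsmul_eq_mul, mul_one_div, Nat.cast_pow, eq_comm]

/-- Host: Let `m` and `n` be relatively prime integers, each at least 2.
If `μ` is a Borel probability measure on `𝕋` invariant under `×m` and `N_n`-recurrent,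
then `μ` is Lebesgue measure on `𝕋`. -/
theorem host_times_m_invariant_Nn_recurrent
    (m n : ℕ) (hm : 2 ≤ m) (hn : 2 ≤ n) (hmn : Nat.Coprime m n)
    (μ : Measure UnitAddCircle) [IsProbabilityMeasure μ]
    (hinv : Measure.map (fun x : UnitAddCircle => m • x) μ = μ)
    (hrec : NnRecurrent n μ) :
    μ = volume := by
  refine ext_of_integral_fourier_eq fun a => ?_
  rcases eq_or_ne a 0 with rfl | ha
  · simp only [fourier_zero, integral_const, measureReal_def, measure_univ,
      UnitAddCircle.measure_univ]
  · rw [integral_fourier_eq_zero ha]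
    refine integral_fourier_eq_zero_of_isTranslationRecurrent hm (by lia) hmn hinv ?_ ha
    rw [iUnion_fractionSubgroup_pow]
    exact hrec
end
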